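/- arXiv:math/0608422 — 4 statements merged into one kernel-verified Lean document; each statement's English description precedes it below -/
import Mathlib

section
/- Let G be a finite connected graph with positive real edge weights and n ≥ 1 distinct distinguished vertices (nodes) labeled 1,…,n. Then for every partition σ of {1,…,n}: Σ_τ ⟨σ,τ⟩ₜ · Z(τ) = Z(uncrossing) · Σ_τ ⟨σ,τ⟩ₜ · L_τ, where both sums run over all partitions τ of {1,…,n}. -/
/-!
Collapse every part of `σ` to a point. A grove of type `τ` with `⟨σ, τ⟩ₜ = 1` is the same thing as a
spanning tree of the collapsed graph `G/σ`, so the left side is the weighted number of spanning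
trees of `G/σ`; in the same way `∑ ⟨σ, τ⟩ₜ L_τ` is the weighted number of spanning trees of the
complete graph on the nodes with edge weights `L_{i,j}`, collapsed along `σ`.

By the weighted matrix-tree theorem (`sum_forest_eq_det`) both are reduced Laplacian determinants,
`det (Pᵀ Δ P)` and `det (Qᵀ Λ Q)`, where `P` and `Q` are the `0/1` matrices of the collapsing maps
with the column of a root part deleted. Since `P = [[Q, 0], [0, 1]]` with respect to the splitting
into nodes and inner vertices, the Schur complement formula gives
`det (Pᵀ Δ P) = det K * det (Qᵀ Λ Q)` (`det_collapse_lapMatrix'`). For `σ = ⊤` the left side of the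
theorem is `Z(uncrossing)` and the matrix `Qᵀ Λ Q` is empty, so `Z(uncrossing) = det K`
(`Zgrove_bot`).

The matrix-tree theorem is derived from a Cauchy–Binet expansion (`det_gram_eq_sum`) and the fact
that a square submatrix of the reduced incidence matrix has determinant `±1` or `0` according as
its edges connect the graph or not (`det_incidence_sq`). The counting that identifies groves with
spanning trees rests on two inequalities for partitions of a finite set, both obtained by computing
dimensions of spaces of functions constant on parts: semimodularity (`card_quotient_add_le`), and
the fact that `k` edges lower the number of components by at most `k` (`card_le_card_add`).
-/

instance setoidFinite {m : ℕ} : Finite (Setoid (Fin m)) :=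
  Finite.of_injective (fun s : Setoid (Fin m) => s.r)
    (fun s t h => by cases s; cases t; simp only at h; subst h; rfl)

noncomputable instance {m : ℕ} : Fintype (Setoid (Fin m)) := Fintype.ofFinite _

-- The bilinear form ⟨ρ,π⟩ₜ on partitions of {1,…,m}: 1 if (#parts ρ) + (#parts π) = m + 1
-- and the join ρ ∨ π is the one-part partition, 0 otherwise.
open Classical in
noncomputable def bform {m : ℕ} (ρ π : Setoid (Fin m)) : ℤ :=
  if Nat.card (Quotient ρ) + Nat.card (Quotient π) = m + 1 ∧ ρ ⊔ π = ⊤ then 1 else 0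

section Grove

variable {V : Type} [Fintype V] [DecidableEq V] {n : ℕ}

def groveGraph (F : Finset (Sym2 V)) : SimpleGraph V :=
  SimpleGraph.fromEdgeSet (F : Set (Sym2 V))

/-- A grove: an acyclic edge set F ⊆ E(G) such that every connected component of (V,F)
contains at least one node. -/
def IsGrove (G : SimpleGraph V) (node : Fin n → V) (F : Finset (Sym2 V)) : Prop :=
  (F : Set (Sym2 V)) ⊆ G.edgeSet ∧ (groveGraph F).IsAcyclic ∧
    ∀ v : V, ∃ i : Fin n, (groveGraph F).Reachable v (node i)

/-- The node partition induced by a grove: i ~ j iff node i, node j are in the same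
component. -/
def connSetoid (node : Fin n → V) (F : Finset (Sym2 V)) : Setoid (Fin n) :=
  ⟨fun i j => (groveGraph F).Reachable (node i) (node j),
   ⟨fun _ => SimpleGraph.Reachable.refl _, fun h => h.symm, fun h h' => h.trans h'⟩⟩

-- Z(τ): the weighted sum of groves of node-connection type τ.
-- Note: Z(tree) = Zgrove G w node ⊤ and Z(uncrossing) = Zgrove G w node ⊥.
open Classical in
noncomputable def Zgrove (G : SimpleGraph V) (w : Sym2 V → ℝ) (node : Fin n → V)
    (τ : Setoid (Fin n)) : ℝ :=
  ∑ F ∈ Finset.univ.filter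
      (fun F : Finset (Sym2 V) => IsGrove G node F ∧ connSetoid node F = τ),
    ∏ e ∈ F, w e

end Grove

section Response

variable {V : Type} [Fintype V] [DecidableEq V] {n : ℕ}

-- The weighted Laplacian of (G, w).
open Classical in
noncomputable def lapMatrix' (G : SimpleGraph V) (w : Sym2 V → ℝ) : Matrix V V ℝ :=
  fun u v =>
    if u = v then ∑ x : V, (if G.Adj u x then w s(u, x) else 0)
    else -(if G.Adj u v then w s(u, v) else 0)

/-- The inner (non-node) vertices. -/
def InnerVx (node : Fin n → V) : Type := {v : V // ∀ i : Fin n, node i ≠ v}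

noncomputable instance (node : Fin n → V) : Fintype (InnerVx node) :=
  Subtype.fintype _

instance (node : Fin n → V) : DecidableEq (InnerVx node) :=
  Subtype.instDecidableEq

/-- The response matrix Λ = A − B K⁻¹ Bᵀ of (G, nodes), where Δ = [[A,B],[Bᵀ,K]] is the
block decomposition of the weighted Laplacian with the nodes first. -/
noncomputable def responseMatrix (G : SimpleGraph V) (w : Sym2 V → ℝ)
    (node : Fin n → V) : Matrix (Fin n) (Fin n) ℝ :=
  let Δ := lapMatrix' G w
  let A : Matrix (Fin n) (Fin n) ℝ := Matrix.of fun i j => Δ (node i) (node j)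
  let B : Matrix (Fin n) (InnerVx node) ℝ := Matrix.of fun i u => Δ (node i) u.val
  let Bt : Matrix (InnerVx node) (Fin n) ℝ := Matrix.of fun u j => Δ u.val (node j)
  let K : Matrix (InnerVx node) (InnerVx node) ℝ := Matrix.of fun u v => Δ u.val v.val
  A - B * K⁻¹ * Bt

end Response

-- L_τ: the forest polynomial Σ_F Π_{{i,j}∈F} L_{i,j}, summed over all forests F on the
-- vertex set Fin n whose connected components have vertex sets exactly the parts of τ.
-- A forest is encoded as a set of ordered pairs (i,j) with i < j; the condition that the
-- components are exactly the parts of τ is that the equivalence relation generated by the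
-- edges is τ, together with the forest edge count #F + #parts = n.
open Classical in
noncomputable def forestPoly {n : ℕ} (L : Fin n → Fin n → ℝ) (τ : Setoid (Fin n)) : ℝ :=
  ∑ F ∈ Finset.univ.filter (fun F : Finset (Fin n × Fin n) =>
      (∀ p ∈ F, p.1 < p.2) ∧
      Relation.EqvGen.setoid (fun a b => (a, b) ∈ F ∨ (b, a) ∈ F) = τ ∧
      F.card + Nat.card (Quotient τ) = n),
    ∏ p ∈ F, L p.1 p.2

namespace GroveSum

open Finset

/-! ### The Cauchy–Binet expansion -/

/-- Cauchy–Binet for the Gram matrix `Nᵀ diag(c) N`. The functions `X → E` that arise on expanding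
the determinant are grouped by their image `F`, and `D F` is the square of the maximal minor of `N`
on the rows `F`, which does not depend on the order of those rows. -/
theorem det_gram_eq_sum {E X R : Type*} [Fintype E] [DecidableEq E] [Fintype X] [DecidableEq X]
    [CommRing R] (N : Matrix E X R) (c : E → R) (D : Finset E → R)
    (hD : ∀ (F : Finset E) (g : X → E), Function.Injective g → univ.image g = F →
      (N.submatrix g id).det ^ 2 = D F) :
    (Matrix.of fun x y => ∑ e, c e * N e x * N e y).det =
      ∑ F ∈ univ.filter (fun F : Finset E => F.card = Fintype.card X), (∏ e ∈ F, c e) * D F := by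
  classical
  have h1 : (Matrix.of fun x y => ∑ e, c e * N e x * N e y).det =
      ∑ f : X → E, (∏ x, c (f x) * N (f x) x) * (N.submatrix f id).det := by
    rw [Matrix.det_apply']
    simp only [Matrix.of_apply, prod_univ_sum, mul_sum, Fintype.piFinset_univ]
    rw [Finset.sum_comm]
    refine sum_congr rfl fun f _ => ?_
    rw [← Matrix.det_transpose, Matrix.det_apply', mul_sum]
    refine sum_congr rfl fun p _ => ?_
    simp only [Matrix.transpose_apply, Matrix.submatrix_apply, id, prod_mul_distrib]
    ring
  rw [h1, ← Finset.sum_fiberwise (s := univ) (g := fun f : X → E => univ.image f)]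
  rw [Finset.sum_filter]
  refine sum_congr rfl fun F _ => ?_
  split_ifs with hF
  · obtain ⟨g, hg⟩ : ∃ g : X → E, Function.Injective g ∧ univ.image g = F := by
      have e : X ≃ F := Fintype.equivOfCardEq (by simp [hF])
      refine ⟨fun x => (e x : E), fun a b h => e.injective (Subtype.ext h), ?_⟩
      ext a
      simp only [mem_image, mem_univ, true_and]
      constructor
      · rintro ⟨x, rfl⟩; exact (e x).2
      · intro ha; exact ⟨e.symm ⟨a, ha⟩, by simp⟩
    obtain ⟨hg, hgF⟩ := hg
    rw [← hD F g hg hgF]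
    have h2 : ∑ f : X → E with univ.image f = F,
        (∏ x, c (f x) * N (f x) x) * (N.submatrix f id).det =
        ∑ p : Equiv.Perm X, (∏ x, c (g (p x)) * N (g (p x)) x) *
          (N.submatrix (g ∘ p) id).det := by
      symm
      refine sum_bij (fun p _ => g ∘ p) ?_ ?_ ?_ ?_
      · intro p _
        simp only [mem_filter, mem_univ, true_and]
        rw [← hgF]
        ext a
        simp only [mem_image, mem_univ, true_and, Function.comp]
        exact ⟨fun ⟨x, h⟩ => ⟨p x, h⟩, fun ⟨x, h⟩ => ⟨p.symm x, by simpa using h⟩⟩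
      · intro p _ q _ h
        ext x
        exact hg (congrFun h x)
      · intro f hf
        simp only [mem_filter, mem_univ, true_and] at hf
        have hfi : Function.Injective f := by
          have h := card_image_iff.1 (show (univ.image f).card = (univ : Finset X).card by
            rw [hf, hF, card_univ])
          simpa using h
        have : ∀ x, ∃ y, g y = f x := by
          intro x
          have : f x ∈ univ.image g := by rw [hgF, ← hf]; simp
          simpa using this
        choose q hq using this
        have hqi : Function.Injective q := fun a b h => hfi (by rw [← hq, ← hq, h])
        refine ⟨Equiv.ofBijective q (Finite.injective_iff_bijective.1 hqi), mem_univ _, ?_⟩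
        ext x
        simp [hq]
      · intro p _; rfl
    rw [h2]
    have h3 : ∀ p : Equiv.Perm X, ∏ x, c (g (p x)) = ∏ e ∈ F, c e := by
      intro p
      rw [Equiv.prod_comp p (fun x => c (g x)), ← hgF, prod_image (fun a _ b _ h => hg h)]
    have h4 : ∀ p : Equiv.Perm X, (N.submatrix (g ∘ p) id).det =
        (Equiv.Perm.sign p : ℤ) * (N.submatrix g id).det := by
      intro p
      have := Matrix.det_permute p (N.submatrix g id)
      rw [← this]; rfl
    simp only [prod_mul_distrib, h3, h4]
    rw [pow_two]
    nth_rewrite 2 [Matrix.det_apply']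
    rw [Finset.sum_mul, mul_sum]
    refine sum_congr rfl fun p _ => ?_
    simp only [Matrix.submatrix_apply, id]
    ring
  · refine sum_eq_zero fun f hf => ?_
    simp only [mem_filter, mem_univ, true_and] at hf
    have hni : ¬ Function.Injective f := fun h => hF (by
      rw [← hf, card_image_of_injective _ h, card_univ])
    simp only [Function.Injective, not_forall] at hni
    obtain ⟨i, j, hij, hne⟩ := hni
    rw [Matrix.det_zero_of_row_eq hne, mul_zero]
    ext x
    simp [hij]

/-! ### Partitions and edge sets -/

/-- The partition of `Y` into the connected components of the multigraph on `Y` whose edges are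
the `e ∈ F`, joining `s e` to `t e`. -/
def edgeSetoid {E Y : Type*} (s t : E → Y) (F : Finset E) : Setoid Y :=
  Relation.EqvGen.setoid fun a b => ∃ e ∈ F, s e = a ∧ t e = b

theorem edgeSetoid_le_iff {E Y : Type*} {s t : E → Y} {F : Finset E} {S : Setoid Y} :
    edgeSetoid s t F ≤ S ↔ ∀ e ∈ F, S (s e) (t e) := by
  constructor
  · intro h e he
    exact h (Relation.EqvGen.rel _ _ ⟨e, he, rfl, rfl⟩)
  · intro h
    refine Setoid.eqvGen_le ?_
    rintro _ _ ⟨e, he, rfl, rfl⟩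
    exact h e he

theorem edgeSetoid_rel {E Y : Type*} (s t : E → Y) {F : Finset E} {e : E} (he : e ∈ F) :
    edgeSetoid s t F (s e) (t e) :=
  edgeSetoid_le_iff.1 le_rfl e he

/-- The subspace of functions that are constant on the parts of a partition. -/
def constOn {Y : Type*} (S : Setoid Y) : Submodule ℝ (Y → ℝ) where
  carrier := {f | ∀ a b, S a b → f a = f b}
  add_mem' := fun hf hg a b h => by simp [hf a b h, hg a b h]
  zero_mem' := fun _ _ _ => rfl
  smul_mem' := fun r f hf a b h => by simp [hf a b h]

theorem mem_constOn_iff {Y : Type*} {S : Setoid Y} {f : Y → ℝ} :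
    f ∈ constOn S ↔ S ≤ Setoid.ker f := Iff.rfl

theorem constOn_sup {Y : Type*} (S T : Setoid Y) : constOn (S ⊔ T) = constOn S ⊓ constOn T := by
  ext f
  simp only [Submodule.mem_inf, mem_constOn_iff, sup_le_iff]

theorem finrank_constOn {Y : Type*} [Finite Y] (S : Setoid Y) :
    Module.finrank ℝ (constOn S) = Nat.card (Quotient S) := by
  classical
  have := Fintype.ofFinite Y
  have := Fintype.ofFinite (Quotient S)
  let e : (Quotient S → ℝ) ≃ₗ[ℝ] constOn S :=
    { toFun := fun f => ⟨fun y => f (Quotient.mk S y), fun a b h => by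
        show f _ = f _
        rw [Quotient.sound h]⟩
      map_add' := fun f g => rfl
      map_smul' := fun r f => rfl
      invFun := fun f q => Quotient.lift f.1 f.2 q
      left_inv := fun f => by
        ext q
        induction q using Quotient.inductionOn
        rfl
      right_inv := fun f => rfl }
  rw [← e.finrank_eq, Module.finrank_pi, Nat.card_eq_fintype_card]

/-- Semimodularity of the partition lattice, read off from the dimension formula for the
subspaces `constOn S` and `constOn T`. -/
theorem card_quotient_add_le {Y : Type*} [Finite Y] (S T : Setoid Y) :
    Nat.card (Quotient S) + Nat.card (Quotient T) ≤
      Nat.card Y + Nat.card (Quotient (S ⊔ T)) := by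
  classical
  have := Fintype.ofFinite Y
  rw [← finrank_constOn, ← finrank_constOn, ← finrank_constOn, constOn_sup,
    ← Submodule.finrank_sup_add_finrank_inf_eq]
  have := Submodule.finrank_le (constOn S ⊔ constOn T)
  rw [Module.finrank_pi] at this
  rw [Nat.card_eq_fintype_card]
  omega

/-- Every edge lowers the number of components by at most one: `constOn (edgeSetoid s t F)` is
cut out of `Y → ℝ` by `#F` linear equations. -/
theorem card_le_card_add {E Y : Type*} [Finite Y] (s t : E → Y) (F : Finset E) :
    Nat.card Y ≤ F.card + Nat.card (Quotient (edgeSetoid s t F)) := by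
  classical
  have := Fintype.ofFinite Y
  let φ : (Y → ℝ) →ₗ[ℝ] (F → ℝ) :=
    { toFun := fun f e => f (s e) - f (t e)
      map_add' := fun f g => by ext e; simp; ring
      map_smul' := fun r f => by ext e; simp; ring }
  have hker : LinearMap.ker φ = constOn (edgeSetoid s t F) := by
    ext f
    rw [mem_constOn_iff, edgeSetoid_le_iff, LinearMap.mem_ker]
    constructor
    · intro h e he
      exact sub_eq_zero.1 (congrFun h ⟨e, he⟩)
    · intro h
      ext e
      exact sub_eq_zero.2 (h e e.2)
  have h1 := LinearMap.finrank_range_add_finrank_ker φ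
  have h2 := Submodule.finrank_le (LinearMap.range φ)
  rw [hker, finrank_constOn, Module.finrank_pi] at h1
  rw [Module.finrank_pi, Fintype.card_coe] at h2
  rw [Nat.card_eq_fintype_card]
  omega

theorem card_quotient_lt {Y : Type*} [Finite Y] {S T : Setoid Y} (h : S ≤ T) {a b : Y}
    (hS : ¬ S a b) (hT : T a b) : Nat.card (Quotient T) < Nat.card (Quotient S) := by
  classical
  have := Fintype.ofFinite (Quotient S)
  have := Fintype.ofFinite (Quotient T)
  rw [Nat.card_eq_fintype_card, Nat.card_eq_fintype_card]
  refine Fintype.card_lt_of_surjective_not_injective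
    (Quotient.map' (s₁ := S) (s₂ := T) id fun a b h' => h h') ?_ ?_
  · intro q
    induction q using Quotient.inductionOn with
    | _ y => exact ⟨Quotient.mk S y, rfl⟩
  · intro hi
    exact hS (Quotient.exact (hi (a₁ := Quotient.mk S a) (a₂ := Quotient.mk S b)
      (Quotient.sound hT)))

theorem card_quotient_top {Y : Type*} [Nonempty Y] : Nat.card (Quotient (⊤ : Setoid Y)) = 1 := by
  have : Subsingleton (Quotient (⊤ : Setoid Y)) := ⟨fun a b => by
    induction a using Quotient.inductionOn
    induction b using Quotient.inductionOn
    exact Quotient.sound trivial⟩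
  have : Nonempty (Quotient (⊤ : Setoid Y)) := ⟨Quotient.mk _ (Classical.arbitrary Y)⟩
  exact Nat.card_unique

/-- An edge set connecting all parts of `κ` is a spanning tree of the quotient by `κ` if and only
if it is a forest on `Y` with the complementary number of components. -/
theorem card_succ_eq_iff {E Y : Type*} [Finite Y] [Nonempty Y] (s t : E → Y) (F : Finset E)
    (κ : Setoid Y) (h : edgeSetoid s t F ⊔ κ = ⊤) :
    F.card + 1 = Nat.card (Quotient κ) ↔
      F.card + Nat.card (Quotient (edgeSetoid s t F)) = Nat.card Y ∧
      Nat.card (Quotient κ) + Nat.card (Quotient (edgeSetoid s t F)) = Nat.card Y + 1 := by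
  have h1 := card_le_card_add s t F
  have h2 := card_quotient_add_le (edgeSetoid s t F) κ
  rw [h, card_quotient_top] at h2
  omega

/-! ### The weighted matrix-tree theorem -/

/-- The incidence matrix, with the column of the root `none` deleted, of the multigraph with edges
`π (s e) — π (t e)`. -/
def incidence {E Y X : Type*} [DecidableEq X] (R : Type*) [Ring R] (s t : E → Y)
    (π : Y → Option X) : Matrix E X R :=
  Matrix.of fun e x => (if π (s e) = some x then 1 else 0) - (if π (t e) = some x then 1 else 0)

/-- The square submatrices of the incidence matrix of a connected multigraph are unimodular:
over `ℤ` their rows span, because `{(a, b) | δ_a - δ_b ∈ row span}` is an equivalence relation that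
contains all the edges. -/
theorem isUnit_incidence {E Y X : Type*} [Fintype X] [DecidableEq X] [DecidableEq E]
    (s t : E → Y) (π : Y → Option X) (hπ : Function.Surjective π) (F : Finset E) (g : X → E)
    (hgF : univ.image g = F) (hc : edgeSetoid s t F ⊔ Setoid.ker π = ⊤) :
    IsUnit ((incidence ℤ s t π).submatrix g id) := by
  rw [← Matrix.vecMul_surjective_iff_isUnit]
  let M := (incidence ℤ s t π).submatrix g id
  let δ : Option X → X → ℤ := fun o x => if o = some x then 1 else 0
  let H : Submodule ℤ (X → ℤ) := LinearMap.range (Matrix.vecMulLinear M)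
  let S : Setoid Y :=
    { r := fun a b => δ (π a) - δ (π b) ∈ H
      iseqv :=
        ⟨fun a => by simp, fun {a b} h => by simpa using H.neg_mem h,
          fun {a b d} h h' => by simpa using H.add_mem h h'⟩ }
  have hS : S = ⊤ := by
    rw [eq_top_iff, ← hc]
    refine sup_le (edgeSetoid_le_iff.2 ?_) ?_
    · intro e he
      rw [← hgF] at he
      obtain ⟨x, -, rfl⟩ := mem_image.1 he
      refine ⟨Pi.single x 1, ?_⟩
      ext y
      simp [M, δ, incidence]
    · intro a b hab
      show δ (π a) - δ (π b) ∈ H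
      rw [Setoid.ker_def.1 hab]
      simp
  have hH : H = ⊤ := by
    rw [eq_top_iff]
    intro v _
    have : v = ∑ x, v x • δ (some x) := by
      ext y
      simp [δ, Finset.sum_apply]
    rw [this]
    refine Submodule.sum_mem _ fun x _ => Submodule.smul_mem _ _ ?_
    obtain ⟨a, ha⟩ := hπ (some x)
    obtain ⟨b, hb⟩ := hπ none
    have hab : S a b := by rw [hS]; trivial
    have hab' : δ (π a) - δ (π b) ∈ H := hab
    rw [ha, hb] at hab'
    have h0 : δ none = 0 := by ext y; simp [δ]
    rwa [h0, sub_zero] at hab'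
  intro v
  have : v ∈ H := by rw [hH]; trivial
  exact this

theorem det_incidence_sq {E Y X : Type*} [Fintype X] [DecidableEq X] [DecidableEq E]
    (s t : E → Y) (π : Y → Option X) (hπ : Function.Surjective π) (F : Finset E) (g : X → E)
    (hgF : univ.image g = F) [Decidable (edgeSetoid s t F ⊔ Setoid.ker π = ⊤)] :
    (((incidence ℝ s t π).submatrix g id).det) ^ 2 =
      if edgeSetoid s t F ⊔ Setoid.ker π = ⊤ then 1 else 0 := by
  classical
  split_ifs with hc
  · have h1 := (Matrix.isUnit_iff_isUnit_det _).1 (isUnit_incidence s t π hπ F g hgF hc)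
    have h2 : (incidence ℝ s t π).submatrix g id =
        ((incidence ℤ s t π).submatrix g id).map (fun x : ℤ => (x : ℝ)) := by
      ext i j
      simp [incidence]
    rw [h2, ← Int.cast_det]
    rcases Int.isUnit_iff.1 h1 with h | h <;> simp [h]
  · obtain ⟨b, hb⟩ := hπ none
    set S := edgeSetoid s t F ⊔ Setoid.ker π with hS
    -- The kernel vector is the indicator of the vertices not connected to the root.
    let f : Y → ℝ := fun y => if S y b then 0 else 1
    have hf : ∀ y z, S y z → f y = f z := by
      intro y z h
      have : S y b ↔ S z b := ⟨fun h' => S.trans (S.symm h) h', fun h' => S.trans h h'⟩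
      simp only [f, this]
    have hex : ∃ y, ¬ S y b := by
      by_contra hcon
      push Not at hcon
      exact hc (Setoid.eq_top_iff.2 fun y z => S.trans (hcon y) (S.symm (hcon z)))
    obtain ⟨y, hy⟩ := hex
    choose r hr using hπ
    have hkey : ∀ z, ∑ x, (if π z = some x then 1 else 0) * f (r (some x)) = f z := by
      intro z
      cases hz : π z with
      | none =>
        have : S z b := (le_sup_right : Setoid.ker π ≤ S) (by rw [Setoid.ker_def, hz, hb])
        simp [f, this]
      | some x =>
        have : S (r (some x)) z :=
          (le_sup_right : Setoid.ker π ≤ S) (by rw [Setoid.ker_def, hr, hz])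
        simp [hf _ _ this]
    rw [sq_eq_zero_iff, ← Matrix.exists_mulVec_eq_zero_iff]
    refine ⟨fun x => f (r (some x)), ?_, ?_⟩
    · intro h0
      have := hkey y
      have h1 : ∀ x, f (r (some x)) = 0 := fun x => congrFun h0 x
      simp [h1, f, hy] at this
    · ext x
      have hx : g x ∈ F := by rw [← hgF]; simp
      simp only [Matrix.mulVec, dotProduct, Matrix.submatrix_apply, id, incidence, Matrix.of_apply,
        sub_mul, sum_sub_distrib, hkey, Pi.zero_apply]
      exact sub_eq_zero.2 (hf _ _ ((le_sup_left : edgeSetoid s t F ≤ S) (edgeSetoid_rel s t hx)))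

open Classical in
/-- Weighted matrix-tree theorem: the reduced Laplacian determinant of the multigraph obtained from
`(Y, E)` by collapsing the fibres of `π` is the weighted sum over forests on `Y` that become
spanning trees after collapsing. -/
theorem sum_forest_eq_det {E Y X : Type*} [Fintype E] [Fintype X] [DecidableEq X] [Finite Y]
    (s t : E → Y) (c : E → ℝ) (π : Y → Option X) (hπ : Function.Surjective π) :
    ∑ F : Finset E with
        (F.card + Nat.card (Quotient (edgeSetoid s t F)) = Nat.card Y ∧
          Nat.card (Quotient (Setoid.ker π)) + Nat.card (Quotient (edgeSetoid s t F)) =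
            Nat.card Y + 1) ∧
          edgeSetoid s t F ⊔ Setoid.ker π = ⊤, ∏ e ∈ F, c e =
      (Matrix.of fun x y =>
        ∑ e, c e * incidence ℝ s t π e x * incidence ℝ s t π e y).det := by
  have : Nonempty Y := ⟨(hπ none).choose⟩
  rw [det_gram_eq_sum (incidence ℝ s t π) c
    (fun F => if edgeSetoid s t F ⊔ Setoid.ker π = ⊤ then 1 else 0)
    (fun F g _ hgF => det_incidence_sq s t π hπ F g hgF)]
  have hcard : Nat.card (Quotient (Setoid.ker π)) = Fintype.card X + 1 := by
    rw [Nat.card_congr (Setoid.quotientKerEquivOfSurjective π hπ)]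
    simp
  simp only [mul_ite, mul_one, mul_zero]
  rw [← Finset.sum_filter, Finset.filter_filter]
  refine sum_congr (filter_congr fun F _ => ?_) fun _ _ => rfl
  refine and_congr_left fun h => ?_
  rw [← card_succ_eq_iff s t F (Setoid.ker π) h, hcard]
  omega

/-! ### Laplacians as sums over edges -/

/-- The `0/1` matrix of a collapsing map `π`, with the column of the root `none` deleted. -/
def collapse {Y X : Type*} [DecidableEq X] (π : Y → Option X) : Matrix Y X ℝ :=
  Matrix.of fun y x => if π y = some x then 1 else 0

theorem incidence_eq_collapse {E Y X : Type*} [DecidableEq X] (s t : E → Y) (π : Y → Option X)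
    (e : E) (x : X) : incidence ℝ s t π e x = collapse π (s e) x - collapse π (t e) x := rfl

/-- Summation by parts for a symmetric matrix with vanishing row sums. -/
theorem two_mul_form_eq {Y : Type*} [Fintype Y] (Λ : Matrix Y Y ℝ) (hsymm : ∀ u v, Λ u v = Λ v u)
    (hrow : ∀ u, ∑ v, Λ u v = 0) (f g : Y → ℝ) :
    2 * ∑ u, ∑ v, f u * Λ u v * g v =
      ∑ u, ∑ v, -Λ u v * ((f u - f v) * (g u - g v)) := by
  have h1 : ∑ u, ∑ v, Λ u v * (f u * g u) = 0 := by
    simp only [← sum_mul, hrow, zero_mul, sum_const_zero]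
  have h2 : ∑ u, ∑ v, Λ u v * (f v * g v) = 0 := by
    rw [sum_comm, ← h1]
    exact sum_congr rfl fun u _ => sum_congr rfl fun v _ => by rw [hsymm]
  have h3 : ∑ u, ∑ v, Λ u v * (f v * g u) = ∑ u, ∑ v, f u * Λ u v * g v := by
    rw [sum_comm]
    exact sum_congr rfl fun u _ => sum_congr rfl fun v _ => by rw [hsymm]; ring
  have h4 : ∑ u, ∑ v, -Λ u v * ((f u - f v) * (g u - g v)) =
      (∑ u, ∑ v, f u * Λ u v * g v) + (∑ u, ∑ v, Λ u v * (f v * g u))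
      - (∑ u, ∑ v, Λ u v * (f u * g u)) - ∑ u, ∑ v, Λ u v * (f v * g v) := by
    simp only [← sum_add_distrib, ← sum_sub_distrib]
    exact sum_congr rfl fun u _ => sum_congr rfl fun v _ => by ring
  rw [h4, h1, h2, h3]
  ring

theorem collapse_mul_apply {Y X : Type*} [Fintype Y] [DecidableEq X] (Λ : Matrix Y Y ℝ)
    (π : Y → Option X) (x y : X) : ((collapse π).transpose * Λ * collapse π) x y =
      ∑ u, ∑ v, collapse π u x * Λ u v * collapse π v y := by
  simp only [Matrix.mul_apply, Matrix.transpose_apply, sum_mul]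
  rw [sum_comm]

theorem two_mul_sum_lt {n : ℕ} (h : Fin n → Fin n → ℝ) (hsymm : ∀ i j, h i j = h j i)
    (hdiag : ∀ i, h i i = 0) :
    2 * ∑ p : Fin n × Fin n, (if p.1 < p.2 then h p.1 p.2 else 0) = ∑ i, ∑ j, h i j := by
  rw [Fintype.sum_prod_type, two_mul]
  nth_rewrite 2 [sum_comm]
  simp only [← sum_add_distrib]
  refine sum_congr rfl fun i _ => sum_congr rfl fun j _ => ?_
  rcases lt_trichotomy i j with hij | rfl | hij
  · simp [hij, hij.not_gt]
  · simp [hdiag]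
  · simp [hij, hij.not_gt, hsymm j i]

theorem two_mul_sum_sym2 {V : Type*} [Fintype V] [DecidableEq V] (h : Sym2 V → ℝ)
    (hdiag : ∀ v, h s(v, v) = 0) : 2 * ∑ e, h e = ∑ u, ∑ v, h s(u, v) := by
  rw [← Fintype.sum_prod_type', ← Finset.sum_fiberwise (s := univ)
    (g := fun p : V × V => s(p.1, p.2)), mul_sum]
  refine sum_congr rfl fun e _ => ?_
  induction e using Sym2.inductionOn with
  | _ a b =>
    have h1 : ∀ p ∈ univ.filter (fun p : V × V => s(p.1, p.2) = s(a, b)),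
        h s(p.1, p.2) = h s(a, b) := by
      intro p hp
      rw [(mem_filter.1 hp).2]
    rw [sum_congr rfl h1, sum_const]
    by_cases hab : a = b
    · subst hab; simp [hdiag]
    · have h2 : univ.filter (fun p : V × V => s(p.1, p.2) = s(a, b)) = {(a, b), (b, a)} := by
        ext ⟨x, y⟩
        simp
      rw [h2, card_pair (by simp [hab])]
      simp

/-! ### Sums over groves and forests, sorted by type -/

open Classical in
theorem sum_mul_sum_filter {ι κ : Type*} [Fintype ι] [Fintype κ] (b : κ → ℝ) (W : ι → ℝ)
    (P : ι → Prop) (T : ι → κ) :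
    ∑ τ, b τ * ∑ F with P F ∧ T F = τ, W F = ∑ F with P F, b (T F) * W F := by
  rw [← Finset.sum_fiberwise (s := univ.filter P) (g := T)]
  refine sum_congr rfl fun τ _ => ?_
  rw [mul_sum, filter_filter]
  refine sum_congr rfl fun F hF => ?_
  rw [(mem_filter.1 hF).2.2]

open Classical in
theorem sum_bform_mul {n : ℕ} {ι : Type*} [Fintype ι] (σ : Setoid (Fin n)) (W : ι → ℝ)
    (P : ι → Prop) (T : ι → Setoid (Fin n)) :
    ∑ τ, (bform σ τ : ℝ) * ∑ F with P F ∧ T F = τ, W F =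
      ∑ F with P F ∧ (Nat.card (Quotient σ) + Nat.card (Quotient (T F)) = n + 1 ∧ σ ⊔ T F = ⊤),
        W F := by
  rw [sum_mul_sum_filter (fun τ => (bform σ τ : ℝ)), ← filter_filter, sum_filter (s := filter _ _)]
  refine sum_congr rfl fun F _ => ?_
  simp [bform]

theorem sum_filter_congr {ι : Type*} [Fintype ι] {p q : ι → Prop} {ip : DecidablePred p}
    {iq : DecidablePred q} (f : ι → ℝ) (h : ∀ x, p x ↔ q x) :
    ∑ x with p x, f x = ∑ x with q x, f x :=
  sum_congr (filter_congr fun x _ => h x) fun _ _ => rfl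

open Classical in
/-- The matrix-tree theorem with the weights `w` supported on the edges satisfying `a`, for a
matrix `M` that is known to be the reduced Laplacian. -/
theorem sum_forest_eq_det_of_support {E Y X : Type*} [Fintype E] [Fintype X] [DecidableEq X]
    [Finite Y] (s t : E → Y) (a : E → Prop) [DecidablePred a] (w : E → ℝ) (π : Y → Option X)
    (hπ : Function.Surjective π) (M : Matrix X X ℝ)
    (hM : ∀ x y, M x y = ∑ e, (if a e then w e else 0) *
      (incidence ℝ s t π e x * incidence ℝ s t π e y)) :
    ∑ F : Finset E with
        (∀ e ∈ F, a e) ∧ (F.card + Nat.card (Quotient (edgeSetoid s t F)) = Nat.card Y ∧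
          Nat.card (Quotient (Setoid.ker π)) + Nat.card (Quotient (edgeSetoid s t F)) =
            Nat.card Y + 1) ∧
          edgeSetoid s t F ⊔ Setoid.ker π = ⊤, ∏ e ∈ F, w e = M.det := by
  have h := sum_forest_eq_det s t (fun e => if a e then w e else 0) π hπ
  have hM' : M = Matrix.of fun x y => ∑ e, (if a e then w e else 0) *
      incidence ℝ s t π e x * incidence ℝ s t π e y := by
    ext x y
    rw [hM]
    simp only [Matrix.of_apply, mul_assoc]
  rw [hM', ← h, sum_filter, sum_filter]
  refine sum_congr rfl fun F _ => ?_
  by_cases ha : ∀ e ∈ F, a e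
  · rw [prod_congr rfl fun e he => if_pos (ha e he)]
    simp only [and_iff_right ha]
  · rw [if_neg (fun h => ha h.1)]
    push Not at ha
    obtain ⟨e, he, hae⟩ := ha
    rw [prod_eq_zero he (if_neg hae), ite_self]

theorem eqvGen_eq_edgeSetoid {n : ℕ} (F : Finset (Fin n × Fin n)) :
    Relation.EqvGen.setoid (fun a b => (a, b) ∈ F ∨ (b, a) ∈ F) =
      edgeSetoid Prod.fst Prod.snd F := by
  refine le_antisymm (Setoid.eqvGen_le ?_) (edgeSetoid_le_iff.2 ?_)
  · rintro a b (h | h)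
    · exact edgeSetoid_rel Prod.fst Prod.snd h
    · exact Setoid.symm' _ (edgeSetoid_rel Prod.fst Prod.snd h)
  · rintro ⟨a, b⟩ h
    exact Relation.EqvGen.rel _ _ (Or.inl h)

/-- The right-hand sum counts spanning trees of the complete graph on the nodes, with conductances
`-Λ i j`, after the parts of `ker π` are collapsed. -/
theorem sum_bform_forestPoly {n : ℕ} {X : Type*} [Fintype X] [DecidableEq X]
    (Λ : Matrix (Fin n) (Fin n) ℝ)
    (hsymm : ∀ u v, Λ u v = Λ v u) (hrow : ∀ u, ∑ v, Λ u v = 0)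
    (π : Fin n → Option X) (hπ : Function.Surjective π) :
    ∑ τ, (bform (Setoid.ker π) τ : ℝ) * forestPoly (fun i j => -Λ i j) τ =
      ((collapse π).transpose * Λ * collapse π).det := by
  classical
  refine Eq.trans ?_ ((sum_bform_mul (Setoid.ker π)
    (fun F : Finset (Fin n × Fin n) => ∏ p ∈ F, -Λ p.1 p.2)
    (fun F => (∀ p ∈ F, p.1 < p.2) ∧
      F.card + Nat.card (Quotient (edgeSetoid Prod.fst Prod.snd F)) = n)
    (edgeSetoid Prod.fst Prod.snd)).trans ?_)
  · refine sum_congr rfl fun τ _ => congrArg _ (sum_filter_congr _ fun F => ?_)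
    rw [eqvGen_eq_edgeSetoid]
    constructor
    · rintro ⟨h1, rfl, h3⟩; exact ⟨⟨h1, h3⟩, rfl⟩
    · rintro ⟨⟨h1, h3⟩, rfl⟩; exact ⟨h1, rfl, h3⟩
  refine Eq.trans (sum_filter_congr _ fun F => ?_) (sum_forest_eq_det_of_support
    (Prod.fst : Fin n × Fin n → Fin n) Prod.snd (fun p => p.1 < p.2) (fun p => -Λ p.1 p.2) π hπ _
    fun x y => ?_)
  · rw [sup_comm, Nat.card_fin]
    tauto
  · rw [collapse_mul_apply]
    apply mul_left_cancel₀ (two_ne_zero (α := ℝ))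
    rw [two_mul_form_eq Λ hsymm hrow, ← two_mul_sum_lt]
    · congr 1
      refine sum_congr rfl fun e _ => ?_
      simp only [incidence_eq_collapse, ite_mul, zero_mul]
    · intro i j; rw [hsymm]; ring
    · intro i; ring

/-! ### Acyclic edge sets and groves -/

section Groves

set_option linter.unusedSectionVars false

variable {V : Type} [Fintype V] [DecidableEq V] {n : ℕ}

/-- An arbitrarily chosen first endpoint of an edge. -/
noncomputable def src (e : Sym2 V) : V := (Quot.out e).1

/-- The second endpoint of an edge, in the ordering chosen for `src`. -/
noncomputable def tgt (e : Sym2 V) : V := (Quot.out e).2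

theorem mk_src_tgt (e : Sym2 V) : s(src e, tgt e) = e := Quot.out_eq e

theorem src_tgt_cases (u v : V) :
    (src s(u, v) = u ∧ tgt s(u, v) = v) ∨ (src s(u, v) = v ∧ tgt s(u, v) = u) := by
  have h := mk_src_tgt s(u, v)
  simpa using h

theorem edgeSetoid_iff_reachable (F : Finset (Sym2 V)) (u v : V) :
    edgeSetoid src tgt F u v ↔ (groveGraph F).Reachable u v := by
  constructor
  · have h : edgeSetoid src tgt F ≤ (groveGraph F).reachableSetoid := by
      refine edgeSetoid_le_iff.2 fun e he => ?_
      show (groveGraph F).Reachable _ _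
      by_cases hne : src e = tgt e
      · rw [hne]
      · refine SimpleGraph.Adj.reachable ?_
        rw [groveGraph, SimpleGraph.fromEdgeSet_adj, mk_src_tgt]
        exact ⟨he, hne⟩
    intro h'
    exact h h'
  · rintro ⟨p⟩
    induction p with
    | nil => exact Setoid.refl' _ _
    | @cons a b _ hadj _ ih =>
      refine Setoid.trans' _ ?_ ih
      rw [groveGraph, SimpleGraph.fromEdgeSet_adj] at hadj
      have hr := edgeSetoid_rel src tgt (Finset.mem_coe.1 hadj.1)
      rcases src_tgt_cases a b with ⟨h1, h2⟩ | ⟨h1, h2⟩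
      · rwa [h1, h2] at hr
      · rw [h1, h2] at hr
        exact Setoid.symm' _ hr

theorem edgeSetoid_mono {F F' : Finset (Sym2 V)} (h : F ⊆ F') :
    edgeSetoid src tgt F ≤ edgeSetoid src tgt F' :=
  edgeSetoid_le_iff.2 fun _ he => edgeSetoid_rel src tgt (h he)

theorem groveGraph_mono {F F' : Finset (Sym2 V)} (h : F ⊆ F') : groveGraph F ≤ groveGraph F' :=
  SimpleGraph.fromEdgeSet_mono (Finset.coe_subset.2 h)

theorem card_add_le_of_isAcyclic (F : Finset (Sym2 V)) (hF : ∀ e ∈ F, ¬ e.IsDiag)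
    (hac : (groveGraph F).IsAcyclic) :
    F.card + Nat.card (Quotient (edgeSetoid src tgt F)) ≤ Nat.card V := by
  induction F using Finset.induction_on with
  | empty =>
    rw [card_empty, zero_add]
    exact Nat.card_le_card_of_surjective _ (Quotient.mk_surjective (s := edgeSetoid src tgt ∅))
  | insert e F he ih =>
    have ih' := ih (fun e' he' => hF e' (mem_insert_of_mem he'))
      (hac.anti (groveGraph_mono (subset_insert e F)))
    have hlt : Nat.card (Quotient (edgeSetoid src tgt (insert e F))) <
        Nat.card (Quotient (edgeSetoid src tgt F)) := by
      refine card_quotient_lt (edgeSetoid_mono (subset_insert e F)) (a := src e) (b := tgt e) ?_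
        (edgeSetoid_rel src tgt (mem_insert_self e F))
      rw [edgeSetoid_iff_reachable]
      have hdiag := hF e (mem_insert_self e F)
      have hmem : s(src e, tgt e) ∈ (groveGraph (insert e F)).edgeSet := by
        rw [mk_src_tgt, groveGraph, SimpleGraph.edgeSet_fromEdgeSet]
        exact ⟨by simp, hdiag⟩
      have hb := SimpleGraph.isAcyclic_iff_forall_isBridge.1 hac hmem
      rw [SimpleGraph.isBridge_iff] at hb
      refine fun hr => hb (hr.mono ?_)
      intro u v huv
      rw [groveGraph, SimpleGraph.fromEdgeSet_adj] at huv
      rw [SimpleGraph.deleteEdges_adj, mk_src_tgt, groveGraph, SimpleGraph.fromEdgeSet_adj]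
      refine ⟨⟨by simp [Finset.mem_coe.1 huv.1], huv.2⟩, fun h => he ?_⟩
      rw [← Set.mem_singleton_iff.1 h]
      exact huv.1
    rw [card_insert_of_notMem he]
    omega

theorem isAcyclic_iff_card (F : Finset (Sym2 V)) (hF : ∀ e ∈ F, ¬ e.IsDiag) :
    (groveGraph F).IsAcyclic ↔
      F.card + Nat.card (Quotient (edgeSetoid src tgt F)) = Nat.card V := by
  refine ⟨fun h => le_antisymm (card_add_le_of_isAcyclic F hF h) (card_le_card_add src tgt F),
    fun h => ?_⟩
  rw [SimpleGraph.isAcyclic_iff_forall_isBridge]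
  intro e he
  by_contra hb
  have heF : e ∈ F := by
    rw [groveGraph, SimpleGraph.edgeSet_fromEdgeSet] at he
    exact he.1
  rw [← mk_src_tgt e, SimpleGraph.isBridge_iff, not_not, mk_src_tgt] at hb
  have hr : edgeSetoid src tgt (F.erase e) (src e) (tgt e) := by
    rw [edgeSetoid_iff_reachable]
    refine hb.mono ?_
    intro u v huv
    rw [SimpleGraph.deleteEdges_adj, groveGraph, SimpleGraph.fromEdgeSet_adj] at huv
    rw [groveGraph, SimpleGraph.fromEdgeSet_adj]
    refine ⟨?_, huv.1.2⟩
    rw [Finset.mem_coe, mem_erase]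
    exact ⟨huv.2, huv.1.1⟩
  -- Deleting an edge of a cycle leaves the components unchanged, against the edge count.
  have heq : edgeSetoid src tgt (F.erase e) = edgeSetoid src tgt F := by
    refine le_antisymm (edgeSetoid_mono (erase_subset e F)) (edgeSetoid_le_iff.2 fun e' he' => ?_)
    by_cases h' : e' = e
    · rwa [h']
    · exact edgeSetoid_rel src tgt (mem_erase.2 ⟨h', he'⟩)
  have hle := card_le_card_add src tgt (F.erase e)
  rw [heq, card_erase_of_mem heF] at hle
  have := card_pos.2 ⟨e, heF⟩
  omega

/-- Extension of a collapsing map `p` of the nodes to all vertices, under which the inner vertices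
stay distinct. -/
noncomputable def extendCollapse {X : Type*} (node : Fin n → V) (p : Fin n → Option X) (v : V) :
    Option (X ⊕ InnerVx node) :=
  open Classical in
  if h : ∃ i, node i = v then (p h.choose).map Sum.inl
  else some (Sum.inr ⟨v, fun i hi => h ⟨i, hi⟩⟩)

variable {X : Type*} (node : Fin n → V) (hnode : Function.Injective node) (p : Fin n → Option X)

include hnode in
theorem extendCollapse_node (i : Fin n) :
    extendCollapse node p (node i) = (p i).map Sum.inl := by
  have h : ∃ j, node j = node i := ⟨i, rfl⟩
  rw [extendCollapse, dif_pos h, hnode h.choose_spec]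

theorem extendCollapse_inner (u : InnerVx node) :
    extendCollapse node p u.val = some (Sum.inr u) := by
  have h : ¬ ∃ j, node j = u.val := fun ⟨j, hj⟩ => u.2 j hj
  rw [extendCollapse, dif_neg h]
  rfl

theorem node_or_inner (v : V) : (∃ i, node i = v) ∨ ∃ u : InnerVx node, u.val = v := by
  by_cases h : ∃ i, node i = v
  · exact Or.inl h
  · exact Or.inr ⟨⟨v, fun i hi => h ⟨i, hi⟩⟩, rfl⟩

include hnode in
theorem extendCollapse_surjective (hp : Function.Surjective p) :
    Function.Surjective (extendCollapse node p) := by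
  rintro (_ | x | u)
  · obtain ⟨i, hi⟩ := hp none
    exact ⟨node i, by rw [extendCollapse_node node hnode, hi]; rfl⟩
  · obtain ⟨i, hi⟩ := hp (some x)
    exact ⟨node i, by rw [extendCollapse_node node hnode, hi]; rfl⟩
  · exact ⟨u.val, extendCollapse_inner node p u⟩

include hnode in
theorem extendCollapse_node_eq_iff (i j : Fin n) :
    extendCollapse node p (node i) = extendCollapse node p (node j) ↔ p i = p j := by
  rw [extendCollapse_node node hnode, extendCollapse_node node hnode]
  exact (Option.map_injective Sum.inl_injective).eq_iff

include hnode in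
theorem extendCollapse_eq_cases {u v : V} (h : extendCollapse node p u = extendCollapse node p v) :
    u = v ∨ ∃ i j, node i = u ∧ node j = v ∧ p i = p j := by
  rcases node_or_inner node u with ⟨i, rfl⟩ | ⟨a, rfl⟩ <;>
    rcases node_or_inner node v with ⟨j, rfl⟩ | ⟨b, rfl⟩
  · exact Or.inr ⟨i, j, rfl, rfl, (extendCollapse_node_eq_iff node hnode p i j).1 h⟩
  · rw [extendCollapse_node node hnode, extendCollapse_inner] at h
    cases hpi : p i <;> simp [hpi] at h
  · rw [extendCollapse_node node hnode, extendCollapse_inner] at h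
    cases hpj : p j <;> simp [hpj] at h
  · rw [extendCollapse_inner, extendCollapse_inner] at h
    left
    simp only [Option.some.injEq, Sum.inr.injEq] at h
    rw [h]

/-- The vertices, as the disjoint union of the nodes and the inner vertices. -/
noncomputable def vertexEquiv : Fin n ⊕ InnerVx node ≃ V :=
  Equiv.ofBijective (Sum.elim node fun u => u.val) (by
    refine ⟨?_, fun v => ?_⟩
    · rintro (i | a) (j | b) h
      · exact congrArg _ (hnode h)
      · exact absurd h (b.2 i)
      · exact absurd h.symm (a.2 j)
      · exact congrArg _ (Subtype.ext h)
    · rcases node_or_inner node v with ⟨i, rfl⟩ | ⟨u, rfl⟩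
      · exact ⟨Sum.inl i, rfl⟩
      · exact ⟨Sum.inr u, rfl⟩)

include hnode in
theorem card_ker_extendCollapse [Finite X] (hp : Function.Surjective p) :
    Nat.card (Quotient (Setoid.ker (extendCollapse node p))) + n =
      Nat.card (Quotient (Setoid.ker p)) + Nat.card V := by
  have := Fintype.ofFinite X
  rw [Nat.card_congr (Setoid.quotientKerEquivOfSurjective _
      (extendCollapse_surjective node hnode p hp)),
    Nat.card_congr (Setoid.quotientKerEquivOfSurjective p hp),
    ← Nat.card_congr (vertexEquiv node hnode)]
  simp only [Nat.card_eq_fintype_card, Fintype.card_option, Fintype.card_sum, Fintype.card_fin]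
  omega

include hnode in
/-- An edge set connects the collapsed graph iff each of its components contains a node and the
partition it induces on the nodes joins with `ker p` to the one-part partition. -/
theorem sup_eq_top_iff (hp : Function.Surjective p) (F : Finset (Sym2 V)) :
    edgeSetoid src tgt F ⊔ Setoid.ker (extendCollapse node p) = ⊤ ↔
      (∀ v : V, ∃ i : Fin n, (groveGraph F).Reachable v (node i)) ∧
        Setoid.ker p ⊔ connSetoid node F = ⊤ := by
  set R := edgeSetoid src tgt F with hR
  set κ := Setoid.ker (extendCollapse node p) with hκ
  constructor
  · intro htop
    have hreach : ∀ v : V, ∃ i : Fin n, (groveGraph F).Reachable v (node i) := by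
      let S : Setoid V := Setoid.ker fun v => ∃ i : Fin n, (groveGraph F).Reachable v (node i)
      have hS : S = ⊤ := by
        rw [eq_top_iff, ← htop]
        refine sup_le ?_ ?_
        · intro u v huv
          have h := (edgeSetoid_iff_reachable F u v).1 huv
          exact propext ⟨fun ⟨i, hi⟩ => ⟨i, h.symm.trans hi⟩, fun ⟨i, hi⟩ => ⟨i, h.trans hi⟩⟩
        · intro u v huv
          rcases extendCollapse_eq_cases node hnode p (Setoid.ker_def.1 huv) with
            rfl | ⟨i, j, rfl, rfl, -⟩
          · exact Setoid.refl' _ _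
          · exact propext ⟨fun _ => ⟨j, .refl _⟩, fun _ => ⟨i, .refl _⟩⟩
      intro v
      obtain ⟨i₀, -⟩ := hp none
      have h : S (node i₀) v := by rw [hS]; trivial
      have h' := Setoid.ker_def.1 h
      exact h'.mp ⟨i₀, .refl _⟩
    refine ⟨hreach, ?_⟩
    choose nd hnd using hreach
    let T := Setoid.ker p ⊔ connSetoid node F
    let S : Setoid V := Setoid.comap nd T
    have hconn : ∀ i j, (groveGraph F).Reachable (node i) (node j) → T i j := fun i j h =>
      (le_sup_right : connSetoid node F ≤ T) h
    have hS : S = ⊤ := by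
      rw [eq_top_iff, ← htop]
      refine sup_le ?_ ?_
      · intro u v huv
        have h := (edgeSetoid_iff_reachable F u v).1 huv
        exact hconn _ _ ((hnd u).symm.trans (h.trans (hnd v)))
      · intro u v huv
        rcases extendCollapse_eq_cases node hnode p (Setoid.ker_def.1 huv) with
          rfl | ⟨i, j, rfl, rfl, hij⟩
        · exact Setoid.refl' _ _
        · have h1 : T (nd (node i)) i := hconn _ _ (hnd (node i)).symm
          have h2 : T i j := (le_sup_left : Setoid.ker p ≤ T) hij
          have h3 : T j (nd (node j)) := hconn _ _ (hnd (node j))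
          exact Setoid.trans' T h1 (Setoid.trans' T h2 h3)
    refine Setoid.eq_top_iff.2 fun i j => ?_
    have h1 : T i (nd (node i)) := hconn _ _ (hnd (node i))
    have h2 : S (node i) (node j) := by rw [hS]; trivial
    have h3 : T (nd (node j)) j := hconn _ _ (hnd (node j)).symm
    exact Setoid.trans' T h1 (Setoid.trans' T h2 h3)
  · rintro ⟨hreach, htop⟩
    have hle : Setoid.ker p ⊔ connSetoid node F ≤ Setoid.comap node (R ⊔ κ) := by
      refine sup_le ?_ ?_
      · intro i j hij
        exact (le_sup_right : κ ≤ R ⊔ κ) ((extendCollapse_node_eq_iff node hnode p i j).2 hij)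
      · intro i j hij
        exact (le_sup_left : R ≤ R ⊔ κ) ((edgeSetoid_iff_reachable F _ _).2 hij)
    refine Setoid.eq_top_iff.2 fun u v => ?_
    obtain ⟨i, hi⟩ := hreach u
    obtain ⟨j, hj⟩ := hreach v
    have h1 : (R ⊔ κ) u (node i) :=
      (le_sup_left : R ≤ R ⊔ κ) ((edgeSetoid_iff_reachable F _ _).2 hi)
    have h2 : (R ⊔ κ) (node i) (node j) := hle (by rw [htop]; trivial)
    have h3 : (R ⊔ κ) (node j) v :=
      (le_sup_left : R ≤ R ⊔ κ) ((edgeSetoid_iff_reachable F _ _).2 hj.symm)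
    exact Setoid.trans' _ h1 (Setoid.trans' _ h2 h3)

theorem card_connSetoid (F : Finset (Sym2 V))
    (h : ∀ v : V, ∃ i : Fin n, (groveGraph F).Reachable v (node i)) :
    Nat.card (Quotient (connSetoid node F)) = Nat.card (Quotient (edgeSetoid src tgt F)) := by
  refine Nat.card_congr (Equiv.ofBijective (Quotient.map' (s₁ := connSetoid node F)
    (s₂ := edgeSetoid src tgt F) node
    fun i j hij => (edgeSetoid_iff_reachable F _ _).2 hij) ⟨?_, ?_⟩)
  · intro a b
    induction a using Quotient.inductionOn
    induction b using Quotient.inductionOn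
    intro hab
    exact Quotient.sound ((edgeSetoid_iff_reachable F _ _).1 (Quotient.exact hab))
  · intro q
    induction q using Quotient.inductionOn with
    | _ v =>
      obtain ⟨i, hi⟩ := h v
      exact ⟨Quotient.mk _ i, Quotient.sound ((edgeSetoid_iff_reachable F _ _).2 hi.symm)⟩

/-! ### The Laplacian of the graph -/

theorem lapMatrix'_symm (G : SimpleGraph V) (w : Sym2 V → ℝ) (u v : V) :
    lapMatrix' G w u v = lapMatrix' G w v u := by
  by_cases h : u = v
  · rw [h]
  · by_cases ha : G.Adj u v
    · simp [lapMatrix', h, Ne.symm h, ha, ha.symm, Sym2.eq_swap]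
    · have ha' : ¬ G.Adj v u := fun h' => ha h'.symm
      simp [lapMatrix', h, Ne.symm h, ha, ha']

theorem lapMatrix'_row (G : SimpleGraph V) (w : Sym2 V → ℝ) (u : V) :
    ∑ v, lapMatrix' G w u v = 0 := by
  classical
  have h : ∀ v, lapMatrix' G w u v =
      (if u = v then ∑ x : V, (if G.Adj u x then w s(u, x) else 0) else 0) -
        (if G.Adj u v then w s(u, v) else 0) := by
    intro v
    by_cases huv : u = v
    · subst huv
      simp [lapMatrix']
    · simp [lapMatrix', huv]
  simp only [h, sum_sub_distrib, sum_ite_eq, mem_univ, if_true, sub_self]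

open Classical in
theorem neg_lapMatrix'_mul (G : SimpleGraph V) (w : Sym2 V → ℝ) (u v : V) (f g : V → ℝ) :
    -lapMatrix' G w u v * ((f u - f v) * (g u - g v)) =
      (if s(u, v) ∈ G.edgeSet then w s(u, v) else 0) * ((f u - f v) * (g u - g v)) := by
  by_cases huv : u = v
  · subst huv; simp
  · simp [lapMatrix', huv]

include hnode in
/-- The left-hand sum counts spanning trees of the graph obtained from `G` by collapsing the parts
of `ker p`: these are the groves whose type is paired to `1` with `ker p`. -/
theorem sum_bform_Zgrove [Fintype X] [DecidableEq X] (G : SimpleGraph V) (w : Sym2 V → ℝ)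
    (hp : Function.Surjective p) :
    ∑ τ, (bform (Setoid.ker p) τ : ℝ) * Zgrove G w node τ =
      ((collapse (extendCollapse node p)).transpose * lapMatrix' G w *
        collapse (extendCollapse node p)).det := by
  classical
  refine (sum_bform_mul (Setoid.ker p) (fun F : Finset (Sym2 V) => ∏ e ∈ F, w e)
    (IsGrove G node) (connSetoid node)).trans ?_
  refine Eq.trans (sum_filter_congr _ fun F => ?_) (sum_forest_eq_det_of_support
    src tgt (fun e => e ∈ G.edgeSet) w (extendCollapse node p)
    (extendCollapse_surjective node hnode p hp) _ fun x y => ?_)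
  · have hcard := card_ker_extendCollapse node hnode p hp
    rw [sup_eq_top_iff node hnode p hp, IsGrove]
    have hsub : (F : Set (Sym2 V)) ⊆ G.edgeSet ↔ ∀ e ∈ F, e ∈ G.edgeSet := Iff.rfl
    rw [hsub]
    by_cases ha : ∀ e ∈ F, e ∈ G.edgeSet
    · rw [isAcyclic_iff_card F fun e he => G.not_isDiag_of_mem_edgeSet (ha e he)]
      by_cases hr : ∀ v : V, ∃ i : Fin n, (groveGraph F).Reachable v (node i)
      · rw [card_connSetoid node F hr]
        have : Nat.card (Quotient (Setoid.ker p)) + Nat.card (Quotient (edgeSetoid src tgt F)) =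
            n + 1 ↔ Nat.card (Quotient (Setoid.ker (extendCollapse node p))) +
              Nat.card (Quotient (edgeSetoid src tgt F)) = Nat.card V + 1 := by omega
        rw [this]
        tauto
      · tauto
    · tauto
  · rw [collapse_mul_apply]
    apply mul_left_cancel₀ (two_ne_zero (α := ℝ))
    rw [two_mul_form_eq _ (lapMatrix'_symm G w) (lapMatrix'_row G w), two_mul_sum_sym2]
    · refine sum_congr rfl fun u _ => sum_congr rfl fun v _ => ?_
      rw [neg_lapMatrix'_mul G w u v (fun u => collapse (extendCollapse node p) u x)
        (fun u => collapse (extendCollapse node p) u y), incidence_eq_collapse,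
        incidence_eq_collapse]
      congr 1
      rcases src_tgt_cases u v with ⟨h1, h2⟩ | ⟨h1, h2⟩
      · rw [h1, h2]
      · rw [h1, h2]; ring
    · intro v
      rw [incidence_eq_collapse]
      rcases src_tgt_cases v v with ⟨h1, h2⟩ | ⟨h1, h2⟩ <;> rw [h1, h2] <;> ring

end Groves

/-! ### The Schur complement -/

section Schur

set_option linter.unusedSectionVars false

variable {V : Type} [Fintype V] [DecidableEq V] {n : ℕ} (G : SimpleGraph V) (w : Sym2 V → ℝ)
  (node : Fin n → V)

/-- The block of the Laplacian with node rows and node columns. -/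
noncomputable def blockA : Matrix (Fin n) (Fin n) ℝ :=
  Matrix.of fun i j => lapMatrix' G w (node i) (node j)

/-- The block of the Laplacian with node rows and inner columns. -/
noncomputable def blockB : Matrix (Fin n) (InnerVx node) ℝ :=
  Matrix.of fun i u => lapMatrix' G w (node i) u.val

/-- The block of the Laplacian with inner rows and inner columns. -/
noncomputable def blockK : Matrix (InnerVx node) (InnerVx node) ℝ :=
  Matrix.of fun u v => lapMatrix' G w u.val v.val

theorem responseMatrix_eq : responseMatrix G w node =
    blockA G w node - blockB G w node * (blockK G w node)⁻¹ * (blockB G w node).transpose := by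
  have h : (blockB G w node).transpose =
      Matrix.of fun (u : InnerVx node) (j : Fin n) => lapMatrix' G w u.val (node j) := by
    ext u j
    exact lapMatrix'_symm G w _ _
  rw [h]
  rfl

theorem blockK_transpose : (blockK G w node).transpose = blockK G w node := by
  ext u v
  exact lapMatrix'_symm G w _ _

theorem responseMatrix_symm (i j : Fin n) :
    responseMatrix G w node i j = responseMatrix G w node j i := by
  have hA : (blockA G w node).transpose = blockA G w node := by
    ext u v
    exact lapMatrix'_symm G w _ _
  have h : (responseMatrix G w node).transpose = responseMatrix G w node := by
    rw [responseMatrix_eq, Matrix.transpose_sub, Matrix.transpose_mul, Matrix.transpose_mul,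
      Matrix.transpose_transpose, Matrix.transpose_nonsing_inv, blockK_transpose, hA,
      Matrix.mul_assoc]
  exact congrFun (congrFun h j) i

variable (hnode : Function.Injective node)

include hnode in
theorem sum_vertices (f : V → ℝ) :
    ∑ v, f v = ∑ i, f (node i) + ∑ u : InnerVx node, f u.val := by
  rw [← Equiv.sum_comp (vertexEquiv node hnode) f, Fintype.sum_sum_type]
  rfl

include hnode in
theorem responseMatrix_row (hK : IsUnit (blockK G w node).det) (i : Fin n) :
    ∑ j, responseMatrix G w node i j = 0 := by
  have h1 : (blockA G w node).mulVec 1 + (blockB G w node).mulVec 1 = 0 := by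
    ext i
    have := lapMatrix'_row G w (node i)
    rw [sum_vertices node hnode] at this
    simpa [Matrix.mulVec, dotProduct, blockA, blockB] using this
  have h2 : (blockB G w node).transpose.mulVec 1 = -(blockK G w node).mulVec 1 := by
    rw [eq_neg_iff_add_eq_zero]
    ext u
    have := lapMatrix'_row G w u.val
    rw [sum_vertices node hnode] at this
    simp only [lapMatrix'_symm G w u.val (node _)] at this
    simpa [Matrix.mulVec, dotProduct, blockK, blockB] using this
  have h3 : (responseMatrix G w node).mulVec 1 = 0 := by
    rw [responseMatrix_eq, Matrix.sub_mulVec, ← Matrix.mulVec_mulVec, h2, Matrix.mulVec_neg,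
      Matrix.mulVec_mulVec, Matrix.mul_assoc, Matrix.nonsing_inv_mul _ hK, Matrix.mul_one,
      sub_neg_eq_add, h1]
  have := congrFun h3 i
  simpa [Matrix.mulVec, dotProduct] using this

include hnode in
/-- The inner block is invertible: a kernel vector, extended by zero to the nodes, has zero
Dirichlet energy, so it is constant on the connected graph, hence zero. -/
theorem isUnit_det_blockK (hG : G.Connected) (hw : ∀ e ∈ G.edgeSet, 0 < w e) (hn : 1 ≤ n) :
    IsUnit (blockK G w node).det := by
  classical
  rw [isUnit_iff_ne_zero]
  intro h0
  obtain ⟨x, hx0, hx⟩ := Matrix.exists_mulVec_eq_zero_iff.2 h0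
  let f : V → ℝ := fun v => if h : ∀ i, node i ≠ v then x ⟨v, h⟩ else 0
  have hfn : ∀ i, f (node i) = 0 := fun i => dif_neg fun h => h i rfl
  have hfi : ∀ u : InnerVx node, f u.val = x u := fun u => dif_pos u.2
  have hform : ∑ u, ∑ v, f u * lapMatrix' G w u v * f v = 0 := by
    rw [sum_vertices node hnode]
    have h1 : ∀ u : InnerVx node, ∑ v, f u.val * lapMatrix' G w u.val v * f v = 0 := by
      intro u
      rw [sum_vertices node hnode]
      have h2 := congrFun hx u
      simp only [Matrix.mulVec, dotProduct, blockK, Matrix.of_apply, Pi.zero_apply] at h2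
      simp only [hfn, hfi, mul_zero, sum_const_zero, zero_add, mul_assoc, ← mul_sum, h2]
    simp only [h1, hfn, zero_mul, sum_const_zero, add_zero]
  have henergy := two_mul_form_eq _ (lapMatrix'_symm G w) (lapMatrix'_row G w) f f
  rw [hform, mul_zero] at henergy
  simp only [fun u v => neg_lapMatrix'_mul G w u v f f] at henergy
  have hnonneg : ∀ u v, 0 ≤ (if s(u, v) ∈ G.edgeSet then w s(u, v) else 0) *
      ((f u - f v) * (f u - f v)) := by
    intro u v
    refine mul_nonneg ?_ (mul_self_nonneg _)
    split_ifs with h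
    · exact (hw _ h).le
    · exact le_rfl
  have hadj : ∀ u v, G.Adj u v → f u = f v := by
    intro u v huv
    have h1 := (sum_eq_zero_iff_of_nonneg fun u _ => sum_nonneg fun v _ => hnonneg u v).1
      henergy.symm u (mem_univ u)
    have h2 := (sum_eq_zero_iff_of_nonneg fun v _ => hnonneg u v).1 h1 v (mem_univ v)
    rw [if_pos (G.mem_edgeSet.2 huv), mul_eq_zero, mul_self_eq_zero, sub_eq_zero] at h2
    exact h2.resolve_left (hw _ (G.mem_edgeSet.2 huv)).ne'
  have hconst : ∀ u v, f u = f v := by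
    intro u v
    obtain ⟨q⟩ := hG.preconnected u v
    induction q with
    | nil => rfl
    | cons h _ ih => exact (hadj _ _ h).trans ih
  apply hx0
  ext u
  rw [← hfi u, hconst u.val (node ⟨0, hn⟩), hfn]
  rfl

include hnode in
/-- The Schur complement formula. The collapsing matrix is block diagonal with blocks `collapse p`
and the identity on the inner vertices, so it commutes with eliminating the latter. -/
theorem det_collapse_lapMatrix' {X : Type*} [Fintype X] [DecidableEq X] (p : Fin n → Option X)
    (hK : IsUnit (blockK G w node).det) :
    ((collapse (extendCollapse node p)).transpose * lapMatrix' G w *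
        collapse (extendCollapse node p)).det =
      (blockK G w node).det *
        ((collapse p).transpose * responseMatrix G w node * collapse p).det := by
  let e := vertexEquiv node hnode
  have hΔ : (lapMatrix' G w).submatrix e e = Matrix.fromBlocks (blockA G w node)
      (blockB G w node) (blockB G w node).transpose (blockK G w node) := by
    ext (i | u) (j | v)
    · rfl
    · rfl
    · exact lapMatrix'_symm G w _ _
    · rfl
  have hP : (collapse (extendCollapse node p)).submatrix e id =
      Matrix.fromBlocks (collapse p) 0 0 1 := by
    ext (i | u) (x | v)
    · show (if extendCollapse node p (node i) = some (Sum.inl x) then (1 : ℝ) else 0) =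
        if p i = some x then 1 else 0
      rw [extendCollapse_node node hnode]
      simp
    · show (if extendCollapse node p (node i) = some (Sum.inr v) then (1 : ℝ) else 0) = 0
      rw [extendCollapse_node node hnode]
      simp
    · show (if extendCollapse node p u.val = some (Sum.inl x) then (1 : ℝ) else 0) = 0
      rw [extendCollapse_inner]
      simp
    · show (if extendCollapse node p u.val = some (Sum.inr v) then (1 : ℝ) else 0) =
        (1 : Matrix (InnerVx node) (InnerVx node) ℝ) u v
      rw [extendCollapse_inner]
      simp [Matrix.one_apply]
  have hprod : (collapse (extendCollapse node p)).transpose * lapMatrix' G w *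
      collapse (extendCollapse node p) =
      ((collapse (extendCollapse node p)).submatrix e id).transpose *
        (lapMatrix' G w).submatrix e e * (collapse (extendCollapse node p)).submatrix e id := by
    rw [Matrix.transpose_submatrix, Matrix.submatrix_mul_equiv, Matrix.submatrix_mul_equiv,
      Matrix.submatrix_id_id]
  have : Invertible (blockK G w node) := Matrix.invertibleOfIsUnitDet _ hK
  rw [hprod, hΔ, hP, Matrix.fromBlocks_transpose, Matrix.fromBlocks_multiply,
    Matrix.fromBlocks_multiply]
  simp only [Matrix.transpose_zero, Matrix.transpose_one, Matrix.zero_mul, Matrix.mul_zero,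
    Matrix.one_mul, Matrix.mul_one, add_zero, zero_add]
  rw [Matrix.det_fromBlocks₂₂, Matrix.invOf_eq_nonsing_inv, responseMatrix_eq]
  simp only [Matrix.mul_sub, Matrix.sub_mul, Matrix.mul_assoc]

include hnode in
/-- `Z(uncrossing)` is the determinant of the inner block: collapse all nodes to the root. -/
theorem Zgrove_bot (hK : IsUnit (blockK G w node).det) (hn : 1 ≤ n) :
    Zgrove G w node ⊥ = (blockK G w node).det := by
  classical
  have : Nonempty (Fin n) := ⟨⟨0, hn⟩⟩
  let p : Fin n → Option Empty := fun _ => none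
  have hp : Function.Surjective p := by
    rintro (_ | x)
    · exact ⟨⟨0, hn⟩, rfl⟩
    · exact x.elim
  have hker : Setoid.ker p = ⊤ := Setoid.eq_top_iff.2 fun _ _ => rfl
  have h := sum_bform_Zgrove node hnode p G w hp
  have hdet : ((collapse p).transpose * responseMatrix G w node * collapse p).det = 1 :=
    Matrix.det_isEmpty
  rw [det_collapse_lapMatrix' G w node hnode p hK, hdet, mul_one, hker] at h
  rw [← h, sum_eq_single ⊥]
  · have hbot : Nat.card (Quotient (⊥ : Setoid (Fin n))) = n := by
      rw [Nat.card_congr (Setoid.quotientBotEquiv), Nat.card_fin]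
    have hb : bform (⊤ : Setoid (Fin n)) ⊥ = 1 := by
      unfold bform
      rw [if_pos ⟨by rw [card_quotient_top, hbot, add_comm], by simp⟩]
    rw [hb, Int.cast_one, one_mul]
  · intro τ _ hτ
    have hlt : Nat.card (Quotient τ) < n := by
      obtain ⟨a, b, hab, hne⟩ : ∃ a b, τ a b ∧ a ≠ b := by
        by_contra hcon
        push Not at hcon
        exact hτ (le_bot_iff.1 fun a b hab => hcon a b hab)
      have := card_quotient_lt (bot_le : ⊥ ≤ τ) (a := a) (b := b) hne hab
      rwa [Nat.card_congr (Setoid.quotientBotEquiv), Nat.card_fin] at this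
    have : ¬ (1 + Nat.card (Quotient τ) = n + 1) := by omega
    have hb : bform (⊤ : Setoid (Fin n)) τ = 0 := by
      unfold bform
      rw [if_neg fun hcon => this (by rw [← hcon.1, card_quotient_top])]
    rw [hb, Int.cast_zero, zero_mul]
  · exact fun h => absurd (mem_univ _) h

end Schur

/-- Every partition of a nonempty set is the kernel of a surjection onto some `Option X`, where
`none` is a chosen part. -/
theorem exists_collapse {Y : Type} [Finite Y] [Nonempty Y] (σ : Setoid Y) :
    ∃ (X : Type) (_ : Fintype X) (p : Y → Option X),
      Function.Surjective p ∧ Setoid.ker p = σ := by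
  classical
  let r : Quotient σ := Quotient.mk σ (Classical.arbitrary Y)
  let e : Quotient σ ≃ Option {q : Quotient σ // q ≠ r} := (Equiv.optionSubtypeNe r).symm
  refine ⟨{q : Quotient σ // q ≠ r}, Fintype.ofFinite _, fun y => e (Quotient.mk σ y),
    e.surjective.comp Quotient.mk_surjective, ?_⟩
  ext a b
  rw [Setoid.ker_def, e.injective.eq_iff]
  exact Quotient.eq

end GroveSum

/-
STATEMENT 8: Let G be a finite connected graph with positive real edge weights and n ≥ 1
distinct nodes labeled 1,…,n.  Then for every partition σ of {1,…,n}: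
  Σ_τ ⟨σ,τ⟩ₜ · Z(τ) = Z(uncrossing) · Σ_τ ⟨σ,τ⟩ₜ · L_τ,
both sums over all partitions τ of {1,…,n}, where L_{i,j} = −Λ_{i,j} with Λ the response
matrix, and L_τ is the forest polynomial.
-/
theorem sum_bform_Z_eq_uncrossing_mul_sum_bform_L
    {V : Type} [Fintype V] [DecidableEq V] (G : SimpleGraph V) (hG : G.Connected)
    (w : Sym2 V → ℝ) (hw : ∀ e ∈ G.edgeSet, 0 < w e)
    (n : ℕ) (hn : 1 ≤ n) (node : Fin n → V) (hnode : Function.Injective node)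
    (σ : Setoid (Fin n)) :
    ∑ τ : Setoid (Fin n), (bform σ τ : ℝ) * Zgrove G w node τ =
      Zgrove G w node ⊥ *
        ∑ τ : Setoid (Fin n), (bform σ τ : ℝ) *
          forestPoly (fun i j => -(responseMatrix G w node i j)) τ := by
  classical
  have : Nonempty (Fin n) := ⟨⟨0, hn⟩⟩
  obtain ⟨X, _, p, hp, rfl⟩ := GroveSum.exists_collapse σ
  have hK := GroveSum.isUnit_det_blockK G w node hnode hG hw hn
  rw [GroveSum.sum_bform_Zgrove node hnode p G w hp,
    GroveSum.det_collapse_lapMatrix' G w node hnode p hK,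
    GroveSum.Zgrove_bot G w node hnode hK hn,
    GroveSum.sum_bform_forestPoly (responseMatrix G w node) (GroveSum.responseMatrix_symm G w node)
      (GroveSum.responseMatrix_row G w node hnode hK) p hp]
end

section
/- Let n ≥ 1 and suppose that for each partition τ of {1,…,n} we are given integers P_{σ,τ}, indexed by the noncrossing partitions σ of {1,…,n}, such that for every partition ρ of {1,…,n}: ⟨ρ,τ⟩ₜ = Σ_σ P_{σ,τ} · ⟨ρ,σ⟩ₜ. Let G be a finite connected graph with positive real edge weights and n distinct nodes labeled 1,…,n, and assume that Z(τ) = 0 for every partition τ of {1,…,n} that is not noncrossing (as holds when G is a circular planar graph with the nodes in counterclockwise order on the outer face). Then for every noncrossing partition σ of {1,…,n}: Z(σ) = Z(uncrossing) · Σ_τ P_{σ,τ} · L_τ, the sum over all partitions τ of {1,…,n}. -/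
/-- A partition σ of {1,…,m} is noncrossing (planar) if there are no a < b < c < d with
a,c in one part of σ and b,d in another part. -/
def IsNoncrossing {m : ℕ} (σ : Setoid (Fin m)) : Prop :=
  ¬ ∃ a b c d : Fin m, a < b ∧ b < c ∧ c < d ∧ σ a c ∧ σ b d ∧ ¬ σ a b

set_option linter.unusedSectionVars false

/-! ### Component counts in the partition lattice -/

section Partitions

variable {U ι : Type*} [Fintype U]

/-- Real functions on `U` that are constant on the parts of `ρ`. -/
def constSub (ρ : Setoid U) : Submodule ℝ (U → ℝ) where
  carrier := {f | ρ ≤ Setoid.ker f}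
  add_mem' := by
    intro f g hf hg u v h
    have h1 : f u = f v := hf h
    have h2 : g u = g v := hg h
    change f u + g u = f v + g v
    rw [h1, h2]
  zero_mem' := by intro u v _; rfl
  smul_mem' := by
    intro c f hf u v h
    have h1 : f u = f v := hf h
    change c • f u = c • f v
    rw [h1]

lemma mem_constSub {ρ : Setoid U} {f : U → ℝ} : f ∈ constSub ρ ↔ ρ ≤ Setoid.ker f := Iff.rfl

lemma finrank_constSub (ρ : Setoid U) :
    Module.finrank ℝ (constSub ρ) = Nat.card (Quotient ρ) := by
  classical
  have : constSub ρ = LinearMap.range (LinearMap.funLeft ℝ ℝ (Quotient.mk ρ)) := by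
    ext f
    rw [mem_constSub, LinearMap.mem_range]
    constructor
    · intro h
      refine ⟨Quotient.lift f (fun a b hab => h hab), ?_⟩
      ext u; rfl
    · rintro ⟨g, rfl⟩ u v h
      change g _ = g _
      rw [Quotient.sound h]
  rw [this, LinearMap.finrank_range_of_inj
    (LinearMap.funLeft_injective_of_surjective _ _ _ Quotient.mk_surjective)]
  rw [Module.finrank_fintype_fun_eq_card, Nat.card_eq_fintype_card]

lemma constSub_sup (ρ σ : Setoid U) : constSub (ρ ⊔ σ) = constSub ρ ⊓ constSub σ := by
  ext f
  simp only [Submodule.mem_inf, mem_constSub, sup_le_iff]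

/-- Semimodularity of the partition lattice. -/
lemma card_quotient_add_le (ρ σ : Setoid U) :
    Nat.card (Quotient ρ) + Nat.card (Quotient σ)
      ≤ Fintype.card U + Nat.card (Quotient (ρ ⊔ σ)) := by
  rw [← finrank_constSub, ← finrank_constSub, ← finrank_constSub, constSub_sup,
    ← Submodule.finrank_sup_add_finrank_inf_eq]
  have := Submodule.finrank_le (constSub ρ ⊔ constSub σ)
  rw [Module.finrank_fintype_fun_eq_card] at this
  omega

/-- The partition of the vertices `U` into the connected components of the multigraph with
edge set `F`, the edge `e` joining `a e` and `b e`. -/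
def edgeSetoid (a b : ι → U) (F : Finset ι) : Setoid U :=
  Relation.EqvGen.setoid (fun u v => ∃ e ∈ F, a e = u ∧ b e = v)

lemma edgeSetoid_le_iff (a b : ι → U) (F : Finset ι) (ρ : Setoid U) :
    edgeSetoid a b F ≤ ρ ↔ ∀ e ∈ F, ρ (a e) (b e) := by
  constructor
  · intro h e he
    exact h (Relation.EqvGen.rel _ _ ⟨e, he, rfl, rfl⟩)
  · intro h
    apply Setoid.eqvGen_le
    rintro _ _ ⟨e, he, rfl, rfl⟩
    exact h e he

lemma edgeSetoid_rel {a b : ι → U} {F : Finset ι} {e : ι} (he : e ∈ F) :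
    edgeSetoid a b F (a e) (b e) := (edgeSetoid_le_iff a b F _).1 le_rfl e he

/-- Each edge decreases the number of components by at most one. -/
lemma card_le_card_add_quotient (a b : ι → U) (F : Finset ι) :
    Fintype.card U ≤ F.card + Nat.card (Quotient (edgeSetoid a b F)) := by
  classical
  let T : (U → ℝ) →ₗ[ℝ] (F → ℝ) :=
    LinearMap.pi fun e : F =>
      LinearMap.proj (R := ℝ) (φ := fun _ : U => ℝ) (a e.1) -
        LinearMap.proj (R := ℝ) (φ := fun _ : U => ℝ) (b e.1)
  have hk : LinearMap.ker T = constSub (edgeSetoid a b F) := by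
    ext f
    rw [LinearMap.mem_ker, mem_constSub, edgeSetoid_le_iff]
    constructor
    · intro h e he
      have := congrFun h ⟨e, he⟩
      exact sub_eq_zero.1 this
    · intro h
      ext e
      exact sub_eq_zero.2 (h e.1 e.2)
  have h1 := LinearMap.finrank_range_add_finrank_ker T
  rw [hk, finrank_constSub, Module.finrank_fintype_fun_eq_card] at h1
  have h2 := Submodule.finrank_le (LinearMap.range T)
  rw [Module.finrank_fintype_fun_eq_card, Fintype.card_coe] at h2
  omega

lemma card_quotient_lt_of_lt {ρ σ : Setoid U} (h : ρ < σ) :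
    Nat.card (Quotient σ) < Nat.card (Quotient ρ) := by
  classical
  rw [← finrank_constSub, ← finrank_constSub]
  apply Submodule.finrank_lt_finrank_of_lt
  refine lt_of_le_of_ne (fun f hf => h.le.trans hf) fun heq => ?_
  apply h.not_ge
  intro u v huv
  by_contra hn
  have hf : (fun x => if ρ u x then (1 : ℝ) else 0) ∈ constSub ρ := by
    intro x y hxy
    change (if ρ u x then (1 : ℝ) else 0) = if ρ u y then (1 : ℝ) else 0
    have : ρ u x ↔ ρ u y := ⟨fun h => ρ.trans h hxy, fun h => ρ.trans h (ρ.symm hxy)⟩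
    simp [this]
  rw [← heq] at hf
  have h2 : (if ρ u u then (1 : ℝ) else 0) = if ρ u v then (1 : ℝ) else 0 := hf huv
  rw [if_pos (ρ.refl u), if_neg hn] at h2
  exact one_ne_zero h2

lemma card_quotient_top [Nonempty U] : Nat.card (Quotient (⊤ : Setoid U)) = 1 := by
  have : Subsingleton (Quotient (⊤ : Setoid U)) :=
    ⟨fun x y => Quotient.inductionOn₂ x y fun a b => Quotient.sound trivial⟩
  exact Nat.card_of_subsingleton (Quotient.mk _ (Classical.arbitrary U))

end Partitions

/-! ### The matrix-tree theorem for glued graphs -/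

section MatrixTree

open Matrix

variable {W ι : Type*} [Fintype W] [DecidableEq W] [Fintype ι] [DecidableEq ι]

/-- Cauchy–Binet for `N D Nᵀ` with `D` diagonal, where the value of each maximal minor squared is
given as `δ F`. -/
lemma det_mul_diagonal_mul_transpose (N : Matrix W ι ℝ) (w : ι → ℝ) (δ : Finset ι → ℝ)
    (hδ : ∀ g : W → ι, Function.Injective g →
      (Matrix.of fun c d => N c (g d)).det ^ 2 = δ (Finset.univ.image g)) :
    (N * Matrix.diagonal w * Nᵀ).det =
      ∑ F ∈ Finset.univ.filter (fun F : Finset ι => F.card = Fintype.card W),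
        δ F * ∏ e ∈ F, w e := by
  classical
  -- expansion of the determinant along all rows
  have h1 : (N * Matrix.diagonal w * Nᵀ).det = ∑ f : W → ι,
      (∏ c, N c (f c)) * (∏ c, w (f c)) * (Matrix.of fun c d => N c (f d)).det := by
    have : N * Matrix.diagonal w * Nᵀ = fun c => ∑ e, (N c e * w e) • (fun d => N d e) := by
      ext c d
      rw [Matrix.mul_apply]
      simp [Finset.sum_apply, Matrix.mul_diagonal]
    rw [this]
    have h := MultilinearMap.map_sum
      (Matrix.detRowAlternating (R := ℝ) (n := W)).toMultilinearMap
      (fun (c : W) (e : ι) => (N c e * w e) • (fun d => N d e))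
    refine Eq.trans h ?_
    refine Finset.sum_congr rfl fun f _ => ?_
    rw [MultilinearMap.map_smul_univ, Finset.prod_mul_distrib, smul_eq_mul]
    congr 1
    rw [← Matrix.det_transpose]
    rfl
  have h2 : ∀ f : W → ι, ¬ Function.Injective f →
      (Matrix.of fun c d => N c (f d)).det = 0 := by
    intro f hf
    simp only [Function.Injective, not_forall] at hf
    obtain ⟨c, d, hcd, hne⟩ := hf
    exact Matrix.det_zero_of_column_eq hne (fun i => by simp [hcd])
  rw [h1]
  rw [← Finset.sum_filter_of_ne (p := fun f : W → ι => Function.Injective f)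
    (fun f _ hf => by by_contra h; exact hf (by rw [h2 f h, mul_zero]))]
  rw [← Finset.sum_fiberwise_of_maps_to (s := Finset.univ.filter fun f : W → ι => f.Injective)
    (t := Finset.univ.filter (fun F : Finset ι => F.card = Fintype.card W))
    (g := fun f => Finset.univ.image f) (by
      intro f hf
      simp only [Finset.mem_filter, Finset.mem_univ, true_and] at hf ⊢
      rw [Finset.card_image_of_injective _ hf, Finset.card_univ])]
  refine Finset.sum_congr rfl fun F hF => ?_
  simp only [Finset.mem_filter, Finset.mem_univ, true_and] at hF
  obtain ⟨e⟩ : Nonempty (W ≃ F) := by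
    rw [← Fintype.card_eq, Fintype.card_coe, hF]
  let g : W → ι := fun c => (e c).1
  have hg : Function.Injective g := fun c d h => e.injective (Subtype.ext h)
  have hgF : Finset.univ.image g = F := by
    ext x
    simp only [Finset.mem_image, Finset.mem_univ, true_and]
    constructor
    · rintro ⟨c, rfl⟩; exact (e c).2
    · intro hx; exact ⟨e.symm ⟨x, hx⟩, by simp [g]⟩
  -- the injections with image `F` are `g ∘ π` for permutations `π`
  have h3 : ∑ f ∈ (Finset.univ.filter fun f : W → ι => f.Injective).filter
        (fun f => Finset.univ.image f = F),
      (∏ c, N c (f c)) * (∏ c, w (f c)) * (Matrix.of fun c d => N c (f d)).det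
      = ∑ π : Equiv.Perm W, (∏ c, N c (g (π c))) * (∏ c, w (g (π c))) *
          (Matrix.of fun c d => N c (g (π d))).det := by
    symm
    refine Finset.sum_bij (fun π _ => fun c => g (π c)) ?_ ?_ ?_ ?_
    · intro π _
      simp only [Finset.mem_filter, Finset.mem_univ, true_and]
      refine ⟨hg.comp π.injective, ?_⟩
      rw [← hgF]
      ext x
      simp only [Finset.mem_image, Finset.mem_univ, true_and]
      exact ⟨fun ⟨c, hc⟩ => ⟨π c, hc⟩, fun ⟨c, hc⟩ => ⟨π.symm c, by simpa using hc⟩⟩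
    · intro π _ π' _ h
      ext c
      exact hg (congrFun h c)
    · intro f hf
      simp only [Finset.mem_filter, Finset.mem_univ, true_and] at hf
      have hm : ∀ c, f c ∈ F := fun c => by
        rw [← hf.2]; exact Finset.mem_image_of_mem _ (Finset.mem_univ c)
      have hinj : Function.Injective (fun c => e.symm ⟨f c, hm c⟩) := by
        intro c d h
        have := e.symm.injective h
        exact hf.1 (congrArg Subtype.val this)
      refine ⟨Equiv.ofBijective _ (Finite.injective_iff_bijective.1 hinj), Finset.mem_univ _, ?_⟩
      funext c
      simp [g]
    · intro π _; rfl
  rw [h3]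
  have h4 : ∀ π : Equiv.Perm W, (∏ c, w (g (π c))) = ∏ x ∈ F, w x := by
    intro π
    rw [Equiv.prod_comp π (fun c => w (g c)), ← hgF,
      Finset.prod_image (fun x _ y _ h => hg h)]
  have h5 : ∀ π : Equiv.Perm W, (Matrix.of fun c d => N c (g (π d))).det
      = (Equiv.Perm.sign π : ℝ) * (Matrix.of fun c d => N c (g d)).det := by
    intro π
    exact Matrix.det_permute' π (Matrix.of fun c d => N c (g d))
  simp only [h4, h5]
  have h6 : ∑ π : Equiv.Perm W, (Equiv.Perm.sign π : ℝ) * ∏ c, N c (g (π c))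
      = (Matrix.of fun c d => N c (g d)).det := by
    rw [← Matrix.det_transpose, Matrix.det_apply']
    rfl
  calc _ = (∑ π : Equiv.Perm W, (Equiv.Perm.sign π : ℝ) * ∏ c, N c (g (π c))) *
        (Matrix.of fun c d => N c (g d)).det * ∏ x ∈ F, w x := by
        rw [Finset.sum_mul, Finset.sum_mul]
        exact Finset.sum_congr rfl fun π _ => by ring
    _ = _ := by rw [h6, ← sq, hδ g hg, hgF]

variable {U : Type*} [Fintype U] [DecidableEq U]

/-- The `W × U` indicator matrix of the parts of the partition `ker q`, the part `q ⁻¹ none`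
being left out. -/
def partMatrix (R : Type*) [Zero R] [One R] (q : U → Option W) : Matrix W U R :=
  Matrix.of fun c u => if q u = some c then 1 else 0

/-- The signed incidence matrix of a multigraph. -/
def incidence (R : Type*) [Ring R] (a b : ι → U) : Matrix U ι R :=
  Matrix.of fun u e => (if a e = u then 1 else 0) - (if b e = u then 1 else 0)

lemma partMatrix_mul_incidence (R : Type*) [Ring R] (q : U → Option W) (a b : ι → U) (c : W)
    (e : ι) :
    (partMatrix R q * incidence R a b) c e =
      (if q (a e) = some c then 1 else 0) - (if q (b e) = some c then 1 else 0) := by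
  simp [Matrix.mul_apply, partMatrix, incidence, mul_sub, Finset.sum_sub_distrib]

open Classical in
/-- The maximal minors of the incidence matrix of a quotient graph are `±1` for spanning trees
and `0` otherwise. -/
lemma minor_sq (q : U → Option W) (hq : Function.Surjective q) (a b : ι → U) (g : W → ι) :
    (Matrix.of fun c d => (partMatrix ℝ q * incidence ℝ a b) c (g d)).det ^ 2 =
      if edgeSetoid a b (Finset.univ.image g) ⊔ Setoid.ker q = ⊤ then 1 else 0 := by
  set F := Finset.univ.image g with hF
  split_ifs with h
  · -- the columns span the integer lattice, so the determinant is a unit of `ℤ`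
    let Nz : Matrix W W ℤ := Matrix.of fun c d => (partMatrix ℤ q * incidence ℤ a b) c (g d)
    have hcast : (Matrix.of fun c d => (partMatrix ℝ q * incidence ℝ a b) c (g d))
        = Nz.map (Int.castRingHom ℝ) := by
      ext c d
      simp [Nz, partMatrix_mul_incidence, Matrix.map_apply, apply_ite (Int.cast : ℤ → ℝ)]
    let vec : U → W → ℤ := fun u c => if q u = some c then 1 else 0
    let S : Setoid U :=
      { r := fun u v => ∃ x : W → ℤ, Nz *ᵥ x = vec u - vec v
        iseqv := ⟨fun u => ⟨0, by simp⟩,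
          fun {u v} ⟨x, hx⟩ => ⟨-x, by rw [Matrix.mulVec_neg, hx]; abel⟩,
          fun {u v t} ⟨x, hx⟩ ⟨y, hy⟩ => ⟨x + y, by rw [Matrix.mulVec_add, hx, hy]; abel⟩⟩ }
    have hS : S = ⊤ := by
      rw [eq_top_iff, ← h, sup_le_iff]
      constructor
      · rw [edgeSetoid_le_iff]
        intro e he
        obtain ⟨d, -, rfl⟩ := Finset.mem_image.1 he
        refine ⟨Pi.single d 1, ?_⟩
        ext c
        rw [Matrix.mulVec_single_one]
        simp [Nz, vec, partMatrix_mul_incidence]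
      · intro u v huv
        have huv' : q u = q v := huv
        exact ⟨0, by ext c; simp [vec, huv']⟩
    obtain ⟨u0, hu0⟩ := hq none
    have hcol : ∀ c : W, ∃ x : W → ℤ, Nz *ᵥ x = Pi.single c 1 := by
      intro c
      obtain ⟨u, hu⟩ := hq (some c)
      have : S u u0 := by rw [hS]; trivial
      obtain ⟨x, hx⟩ := this
      refine ⟨x, ?_⟩
      rw [hx]
      ext d
      simp [vec, hu, hu0, Pi.single_apply, eq_comm]
    choose X hX using hcol
    have hinv : Nz * (Matrix.of fun c d => X d c) = 1 := by
      ext c d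
      have := congrFun (hX d) c
      rw [Matrix.one_apply]
      simpa [Matrix.mulVec, dotProduct, Matrix.mul_apply, Pi.single_apply] using this
    have hu : IsUnit Nz.det := by
      have := congrArg Matrix.det hinv
      rw [Matrix.det_mul, Matrix.det_one] at this
      exact IsUnit.of_mul_eq_one _ this
    rw [hcast, ← RingHom.mapMatrix_apply, ← RingHom.map_det]
    rcases Int.isUnit_iff.1 hu with h1 | h1 <;> rw [h1] <;> simp
  · -- the indicator of a union of components avoiding the root part is a left null vector
    obtain ⟨u0, hu0⟩ := hq none
    set T := edgeSetoid a b F ⊔ Setoid.ker q with hT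
    obtain ⟨u1, hu1⟩ : ∃ u, ¬ T u0 u := by
      by_contra hcon
      push Not at hcon
      apply h
      rw [eq_top_iff]
      intro u v _
      exact T.trans (T.symm (hcon u)) (hcon v)
    have hqT : ∀ {u v}, q u = q v → T u v := fun {u v} huv =>
      (le_sup_right : Setoid.ker q ≤ T) huv
    let rep : W → U := fun c => (hq (some c)).choose
    have hrep : ∀ c, q (rep c) = some c := fun c => (hq (some c)).choose_spec
    let x : W → ℝ := fun c => if T u1 (rep c) then 1 else 0
    -- the extension of `x` to the vertices
    have hx : ∀ u : U, (∑ c, x c * (if q u = some c then 1 else 0)) = if T u1 u then 1 else 0 := by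
      intro u
      rcases hqu : q u with _ | c
      · have h1 : T u0 u := hqT (by rw [hu0, hqu])
        have : ¬ T u1 u := fun h2 => hu1 (T.trans h1 (T.symm h2))
        simp [this]
      · have h1 : T (rep c) u := hqT (by rw [hrep, hqu])
        have : T u1 (rep c) ↔ T u1 u := ⟨fun h => T.trans h h1, fun h => T.trans h (T.symm h1)⟩
        simp [x, this]
    have hzero : x ᵥ* (Matrix.of fun c d => (partMatrix ℝ q * incidence ℝ a b) c (g d)) = 0 := by
      ext d
      simp only [Matrix.vecMul, dotProduct, Matrix.of_apply, partMatrix_mul_incidence, mul_sub,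
        Finset.sum_sub_distrib, hx, Pi.zero_apply]
      have h1 : T (a (g d)) (b (g d)) := (le_sup_left : edgeSetoid a b F ≤ T)
        (edgeSetoid_rel (Finset.mem_image_of_mem _ (Finset.mem_univ d)))
      have : T u1 (a (g d)) ↔ T u1 (b (g d)) :=
        ⟨fun h => T.trans h h1, fun h => T.trans h (T.symm h1)⟩
      simp [this]
    have hxne : x ≠ 0 := by
      intro h0
      have := hx u1
      rw [if_pos (T.refl u1)] at this
      simp [h0] at this
    have : (Matrix.of fun c d => (partMatrix ℝ q * incidence ℝ a b) c (g d)).det = 0 := by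
      by_contra hd
      exact hxne (Matrix.eq_zero_of_vecMul_eq_zero hd hzero)
    rw [this]; simp

/-- A matrix with zero row sums whose off-diagonal entries are the negated edge weights is the
Laplacian of these weights. -/
lemma laplacian_eq (M : Matrix U U ℝ) (hrow : ∀ u, ∑ v, M u v = 0)
    (a b : ι → U) (w : ι → ℝ) (hab : ∀ e, w e ≠ 0 → a e ≠ b e)
    (hM : ∀ u v, u ≠ v → M u v = -∑ e, if s(a e, b e) = s(u, v) then w e else 0) :
    M = incidence ℝ a b * Matrix.diagonal w * (incidence ℝ a b)ᵀ := by
  classical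
  set M' := incidence ℝ a b * Matrix.diagonal w * (incidence ℝ a b)ᵀ with hM'
  have hentry : ∀ u v, M' u v = ∑ e, w e *
      (((if a e = u then 1 else 0) - (if b e = u then 1 else 0)) *
      ((if a e = v then 1 else 0) - (if b e = v then 1 else 0))) := by
    intro u v
    rw [hM', Matrix.mul_apply]
    refine Finset.sum_congr rfl fun e _ => ?_
    simp only [Matrix.mul_diagonal, Matrix.transpose_apply, incidence, Matrix.of_apply]
    ring
  have hrow' : ∀ u, ∑ v, M' u v = 0 := by
    intro u
    simp only [hentry]
    rw [Finset.sum_comm]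
    refine Finset.sum_eq_zero fun e _ => ?_
    rw [← Finset.mul_sum, ← Finset.mul_sum, Finset.sum_sub_distrib]
    simp
  have hoff : ∀ u v, u ≠ v → M u v = M' u v := by
    intro u v huv
    rw [hM u v huv, hentry, ← Finset.sum_neg_distrib]
    refine Finset.sum_congr rfl fun e _ => ?_
    by_cases hw : w e = 0
    · simp [hw]
    have hne := hab e hw
    by_cases h : s(a e, b e) = s(u, v)
    · rw [if_pos h]
      rcases Sym2.eq_iff.1 h with ⟨h1, h2⟩ | ⟨h1, h2⟩
      · subst h1 h2; simp [hne, hne.symm]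
      · subst h1 h2; simp [hne, hne.symm]
    · rw [if_neg h]
      rw [Sym2.eq_iff] at h
      push Not at h
      by_cases h1 : a e = u <;> by_cases h2 : b e = u <;> by_cases h3 : a e = v <;>
        by_cases h4 : b e = v <;> simp_all
  ext u v
  by_cases huv : u = v
  · subst huv
    have h1 := hrow u
    have h2 := hrow' u
    rw [← Finset.add_sum_erase _ _ (Finset.mem_univ u)] at h1 h2
    have h3 : ∑ x ∈ Finset.univ.erase u, M u x = ∑ x ∈ Finset.univ.erase u, M' u x :=
      Finset.sum_congr rfl fun x hx => hoff u x (Finset.ne_of_mem_erase hx).symm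
    linarith
  · exact hoff u v huv

open Classical in
/-- The weighted matrix-tree theorem for the quotient of a multigraph by `ker q`, rooted at the
part `q ⁻¹ none`. -/
theorem matrix_tree (M : Matrix U U ℝ) (hrow : ∀ u, ∑ v, M u v = 0)
    (a b : ι → U) (w : ι → ℝ) (hab : ∀ e, w e ≠ 0 → a e ≠ b e)
    (hM : ∀ u v, u ≠ v → M u v = -∑ e, if s(a e, b e) = s(u, v) then w e else 0)
    (q : U → Option W) (hq : Function.Surjective q) :
    (partMatrix ℝ q * M * (partMatrix ℝ q)ᵀ).det =
      ∑ F ∈ Finset.univ.filter (fun F : Finset ι => F.card = Fintype.card W ∧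
        edgeSetoid a b F ⊔ Setoid.ker q = ⊤), ∏ e ∈ F, w e := by
  have h := det_mul_diagonal_mul_transpose (partMatrix ℝ q * incidence ℝ a b) w
    (fun F => if edgeSetoid a b F ⊔ Setoid.ker q = ⊤ then 1 else 0)
    (fun g _ => minor_sq q hq a b g)
  have hM2 : partMatrix ℝ q * M * (partMatrix ℝ q)ᵀ =
      partMatrix ℝ q * incidence ℝ a b * diagonal w * (partMatrix ℝ q * incidence ℝ a b)ᵀ := by
    rw [laplacian_eq M hrow a b w hab hM, Matrix.transpose_mul]
    simp only [Matrix.mul_assoc]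
  rw [hM2, h, ← Finset.filter_filter, Finset.sum_filter (fun F => _ = ⊤)]
  refine Finset.sum_congr rfl fun F _ => ?_
  split_ifs <;> simp

end MatrixTree

/-! ### Noncrossing partitions as parenthesis systems -/

section Noncrossing

variable {n : ℕ}

/-- `x` is the least element of a part of `σ` that does not contain `z`. -/
def IsLow (z : Fin n) (σ : Setoid (Fin n)) (x : Fin n) : Prop :=
  (∀ y, σ y x → x ≤ y) ∧ ¬ σ x z

/-- `x` is the greatest element of a part of `σ` that does not contain `z`. -/
def IsHigh (z : Fin n) (σ : Setoid (Fin n)) (x : Fin n) : Prop :=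
  (∀ y, σ y x → y ≤ x) ∧ ¬ σ x z

lemma exists_isHigh {z : Fin n} {σ : Setoid (Fin n)} {x : Fin n} (h : ¬ σ x z) :
    ∃ e, σ x e ∧ IsHigh z σ e := by
  classical
  obtain ⟨e, he, hmax⟩ := Finset.exists_max_image (Finset.univ.filter fun e => σ x e) id
    ⟨x, by simp⟩
  simp only [Finset.mem_filter, Finset.mem_univ, true_and, id] at he hmax
  exact ⟨e, he, fun y hy => hmax y (σ.trans he (σ.symm hy)), fun hez => h (σ.trans he hez)⟩

/-- The inductive step of `nc_ext`: reading from left to right, the part that `x` joins is the one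
last opened and not yet closed, hence is forced by the part minima and maxima. -/
lemma nc_ext_step {z : Fin n} (hz : ∀ x, x ≤ z) {σ σ' : Setoid (Fin n)} (h : IsNoncrossing σ)
    (h' : IsNoncrossing σ') (hlow : ∀ x, IsLow z σ x ↔ IsLow z σ' x)
    (hhigh : ∀ x, IsHigh z σ x ↔ IsHigh z σ' x) (x : Fin n)
    (ih : ∀ u v, u < x → v < x → (σ u v ↔ σ' u v)) (y : Fin n) (hyx : y < x) (hσ : σ y x) :
    σ' y x := by
  classical
  -- it suffices to treat the predecessor of `x` in its part
  suffices H : ∀ y, y < x → σ y x → (∀ u, y < u → u < x → ¬ σ u x) → σ' y x by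
    obtain ⟨p, hp, hmax⟩ := Finset.exists_max_image
      (Finset.univ.filter fun e => e < x ∧ σ e x) id ⟨y, by simp [hyx, hσ]⟩
    simp only [Finset.mem_filter, Finset.mem_univ, true_and, id] at hp hmax
    have h1 := H p hp.1 hp.2 (fun u hpu hux hu => absurd (hmax u ⟨hux, hu⟩) (not_le.2 hpu))
    exact σ'.trans ((ih y p hyx hp.1).1 (σ.trans hσ (σ.symm hp.2))) h1
  intro y hyx hσ hpred
  by_contra hn
  -- no part of `σ'` reaching back to `y` closes before `x`
  have key : ∀ e, σ' y e → IsHigh z σ' e → x < e := by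
    intro e hye he
    rcases lt_trichotomy e x with hex | hex | hex
    · have h1 := (ih y e hyx hex).2 hye
      have h2 := ((hhigh e).2 he).1 x (σ.trans (σ.symm hσ) h1)
      exact absurd h2 (not_le.2 hex)
    · subst hex; exact absurd hye hn
    · exact hex
  obtain ⟨e, hye, hxe⟩ : ∃ e, σ' y e ∧ x < e := by
    by_cases hyz : σ' y z
    · refine ⟨z, hyz, lt_of_le_of_ne (hz x) ?_⟩
      rintro rfl; exact hn hyz
    · obtain ⟨e, he1, he2⟩ := exists_isHigh hyz
      exact ⟨e, he1, key e he1 he2⟩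
  have hxlow : ¬ IsLow z σ' x := by
    rw [← hlow]
    intro hl
    exact absurd (hl.1 y hσ) (not_le.2 hyx)
  by_cases hxmin : ∀ u, σ' u x → x ≤ u
  · have hxz : σ' x z := by
      by_contra hc; exact hxlow ⟨hxmin, hc⟩
    rcases eq_or_lt_of_le (hz e) with rfl | hez
    · exact hn (σ'.trans hye (σ'.symm hxz))
    · exact h' ⟨y, x, e, z, hyx, hxe, hez, hye, hxz, hn⟩
  · push Not at hxmin
    obtain ⟨u, hux, hlt⟩ := hxmin
    rcases lt_trichotomy u y with huy | huy | huy
    · exact h' ⟨u, y, x, e, huy, hyx, hxe, hux, hye,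
        fun hc => hn (σ'.trans (σ'.symm hc) hux)⟩
    · subst huy; exact hn hux
    · -- the part of `u` in `σ` lies strictly between `y` and `x`
      have hnu : ¬ σ u x := hpred u huy hlt
      have hbd : ∀ v, σ u v → v < x := by
        intro v hv
        by_contra hc
        rcases eq_or_lt_of_le (not_lt.1 hc) with rfl | hc
        · exact hnu hv
        · exact h ⟨y, u, x, v, huy, hlt, hc, hσ, hv,
            fun hc => hnu (σ.trans (σ.symm hc) hσ)⟩
      have huz : ¬ σ u z := fun hc => absurd (hbd z hc) (not_lt.2 (hz x))
      obtain ⟨e', he1, he2⟩ := exists_isHigh huz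
      have hlast := hbd e' he1
      have h3 := ((hhigh e').1 he2).1 x (σ'.trans (σ'.symm hux) ((ih u e' hlt hlast).1 he1))
      exact absurd h3 (not_le.2 hlast)

/-- A noncrossing partition is determined by the minima and the maxima of its parts other than
the part of the last element, since these form a parenthesis system. -/
lemma nc_ext {z : Fin n} (hz : ∀ x, x ≤ z) {σ σ' : Setoid (Fin n)} (h : IsNoncrossing σ)
    (h' : IsNoncrossing σ') (hlow : ∀ x, IsLow z σ x ↔ IsLow z σ' x)
    (hhigh : ∀ x, IsHigh z σ x ↔ IsHigh z σ' x) : σ = σ' := by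
  have main : ∀ m : ℕ, ∀ u v : Fin n, u.1 < m → v.1 < m → (σ u v ↔ σ' u v) := by
    intro m
    induction m with
    | zero => intro u v hu; omega
    | succ m ih =>
      have aux : ∀ u v : Fin n, u < v → v.1 = m → (σ u v ↔ σ' u v) := by
        intro u v huv hv
        have ih' : ∀ a b, a < v → b < v → (σ a b ↔ σ' a b) := fun a b ha hb =>
          ih a b (hv ▸ ha) (hv ▸ hb)
        exact ⟨nc_ext_step hz h h' hlow hhigh v ih' u huv,
          nc_ext_step hz h' h (fun x => (hlow x).symm) (fun x => (hhigh x).symm) v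
            (fun a b ha hb => (ih' a b ha hb).symm) u huv⟩
      intro u v hu hv
      rcases lt_trichotomy u v with huv | rfl | huv
      · by_cases hvm : v.1 = m
        · exact aux u v huv hvm
        · exact ih u v (by have : u.1 < v.1 := huv; omega) (by omega)
      · exact ⟨fun _ => σ'.refl _, fun _ => σ.refl _⟩
      · by_cases hum : u.1 = m
        · rw [σ.comm', σ'.comm']; exact aux v u huv hum
        · exact ih u v (by omega) (by have : v.1 < u.1 := huv; omega)
  ext u v
  exact main n u v u.2 v.2

end Noncrossing

/-! ### Polarization of squared minors -/

section Polarization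

open Matrix Finset

variable {k : ℕ}

/-- The coefficient of `t₁ ⋯ t_k` in `det (P + diag(t) Q) ^ 2`, as a function of the rows. -/
noncomputable def mixedSq (P Q : Fin k → Fin k → ℝ) : ℝ :=
  ∑ S : Finset (Fin k), det (of (S.piecewise Q P)) * det (of (S.piecewise P Q))

/-- Averaging over signs extracts the coefficient `mixedSq`, which is therefore a linear combination
of squared determinants. -/
lemma sum_sign_det_sq (P Q : Fin k → Fin k → ℝ) :
    ∑ ε : Fin k → ℤˣ, (∏ r, ((ε r : ℤ) : ℝ)) *
      det (of fun r => P r + ((ε r : ℤ) : ℝ) • Q r) ^ 2 = 2 ^ k * mixedSq P Q := by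
  classical
  have hexp : ∀ ε : Fin k → ℤˣ, det (of fun r => P r + ((ε r : ℤ) : ℝ) • Q r) =
      ∑ S : Finset (Fin k), (∏ r, if r ∈ S then ((ε r : ℤ) : ℝ) else 1) *
        det (of (S.piecewise Q P)) := by
    intro ε
    have h := (detRowAlternating (R := ℝ) (n := Fin k)).toMultilinearMap.map_add_univ
      (fun r => ((ε r : ℤ) : ℝ) • Q r) P
    have h0 : (of fun r => P r + ((ε r : ℤ) : ℝ) • Q r) =
      (fun r => ((ε r : ℤ) : ℝ) • Q r) + P := by
      ext r c; simp [add_comm]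
    rw [h0]
    refine Eq.trans h (Finset.sum_congr rfl fun S _ => ?_)
    have h1 : S.piecewise (fun r => ((ε r : ℤ) : ℝ) • Q r) P =
        fun r => (if r ∈ S then ((ε r : ℤ) : ℝ) else 1) • S.piecewise Q P r := by
      funext r
      by_cases hr : r ∈ S <;> simp [hr]
    rw [h1, MultilinearMap.map_smul_univ]
    rfl
  have hu : ∀ f : ℤˣ → ℝ, ∑ x : ℤˣ, f x = f 1 + f (-1) := by
    intro f
    have : (Finset.univ : Finset ℤˣ) = {1, -1} := by decide
    rw [this, Finset.sum_pair (by decide)]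
  have horth : ∀ S S' : Finset (Fin k), ∑ ε : Fin k → ℤˣ, (∏ r, ((ε r : ℤ) : ℝ)) *
      ((∏ r, if r ∈ S then ((ε r : ℤ) : ℝ) else 1) *
        (∏ r, if r ∈ S' then ((ε r : ℤ) : ℝ) else 1)) = if S' = Sᶜ then 2 ^ k else 0 := by
    intro S S'
    simp only [← Finset.prod_mul_distrib]
    have h := (Finset.prod_univ_sum (fun _ : Fin k => (Finset.univ : Finset ℤˣ))
      (fun r x => ((x : ℤ) : ℝ) * ((if r ∈ S then ((x : ℤ) : ℝ) else 1) *
        (if r ∈ S' then ((x : ℤ) : ℝ) else 1)))).symm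
    rw [Fintype.piFinset_univ] at h
    rw [h]
    simp only [hu]
    split_ifs with hS
    · subst hS
      rw [Finset.prod_congr rfl (g := fun _ => (2 : ℝ)), Finset.prod_const, Finset.card_univ,
        Fintype.card_fin]
      intro r _
      by_cases hr : r ∈ S <;> simp [hr] <;> norm_num
    · obtain ⟨r, hr⟩ : ∃ r, ¬ (r ∈ S' ↔ r ∈ Sᶜ) := by
        by_contra hc; push Not at hc; exact hS (Finset.ext hc)
      apply Finset.prod_eq_zero (Finset.mem_univ r)
      rw [Finset.mem_compl] at hr
      by_cases h1 : r ∈ S <;> by_cases h2 : r ∈ S' <;> simp_all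
  simp only [hexp, sq, Finset.sum_mul_sum]
  simp only [Finset.mul_sum]
  rw [Finset.sum_comm]
  rw [mixedSq, Finset.mul_sum]
  refine Finset.sum_congr rfl fun S _ => ?_
  rw [Finset.sum_comm]
  have : ∀ S' : Finset (Fin k), ∑ ε : Fin k → ℤˣ, (∏ r, ((ε r : ℤ) : ℝ)) *
      ((∏ r, if r ∈ S then ((ε r : ℤ) : ℝ) else 1) * det (of (S.piecewise Q P)) *
      ((∏ r, if r ∈ S' then ((ε r : ℤ) : ℝ) else 1) * det (of (S'.piecewise Q P)))) =
      (if S' = Sᶜ then 2 ^ k else 0) * (det (of (S.piecewise Q P)) *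
        det (of (S'.piecewise Q P))) := by
    intro S'
    rw [← horth, Finset.sum_mul]
    exact Finset.sum_congr rfl fun ε _ => by ring
  simp only [this, ite_mul, zero_mul, Finset.sum_ite_eq', Finset.mem_univ, if_true]
  rw [Finset.piecewise_compl]

lemma mixedSq_update (P Q : Fin k → Fin k → ℝ) (r : Fin k) (x : Fin k → ℝ) :
    mixedSq P (Function.update Q r x) = ∑ S : Finset (Fin k), if r ∈ S then
      det (of (Function.update (S.piecewise Q P) r x)) * det (of (S.piecewise P Q)) else
      det (of (S.piecewise Q P)) * det (of (Function.update (S.piecewise P Q) r x)) := by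
  classical
  refine Finset.sum_congr rfl fun S _ => ?_
  have h1 : r ∈ S → S.piecewise (Function.update Q r x) P = Function.update (S.piecewise Q P) r x := by
    intro h; funext s; by_cases hs : s = r
    · subst hs; simp [h]
    · by_cases hS : s ∈ S <;> simp [hS, hs]
  have h2 : r ∈ S → S.piecewise P (Function.update Q r x) = S.piecewise P Q := by
    intro h; funext s; by_cases hs : s = r
    · subst hs; simp [h]
    · by_cases hS : s ∈ S <;> simp [hS, hs]
  have h3 : r ∉ S → S.piecewise (Function.update Q r x) P = S.piecewise Q P := by
    intro h; funext s; by_cases hs : s = r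
    · subst hs; simp [h]
    · by_cases hS : s ∈ S <;> simp [hS, hs]
  have h4 : r ∉ S → S.piecewise P (Function.update Q r x) = Function.update (S.piecewise P Q) r x := by
    intro h; funext s; by_cases hs : s = r
    · subst hs; simp [h]
    · by_cases hS : s ∈ S <;> simp [hS, hs]
  split_ifs with h
  · rw [h1 h, h2 h]
  · rw [h3 h, h4 h]

/-- `mixedSq P` is multilinear in the rows of `Q`. -/
noncomputable def mixedSqMultilinear (P : Fin k → Fin k → ℝ) :
    MultilinearMap ℝ (fun _ : Fin k => Fin k → ℝ) ℝ where
  toFun := mixedSq P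
  map_update_add' := by
    intro inst Q r x y
    obtain rfl : inst = instDecidableEqFin k := Subsingleton.elim _ _
    simp only [mixedSq_update, ← Finset.sum_add_distrib]
    refine Finset.sum_congr rfl fun S _ => ?_
    have hd : ∀ A : Fin k → Fin k → ℝ, det (of (Function.update A r (x + y))) =
      det (of (Function.update A r x)) + det (of (Function.update A r y)) :=
      fun A => Matrix.det_updateRow_add A r x y
    split_ifs <;> rw [hd] <;> ring
  map_update_smul' := by
    intro inst Q r c x
    obtain rfl : inst = instDecidableEqFin k := Subsingleton.elim _ _
    simp only [mixedSq_update, Finset.smul_sum]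
    refine Finset.sum_congr rfl fun S _ => ?_
    have hd : ∀ A : Fin k → Fin k → ℝ, det (of (Function.update A r (c • x))) =
      c * det (of (Function.update A r x)) :=
      fun A => Matrix.det_updateRow_smul A r c x
    split_ifs <;> rw [hd] <;> simp only [smul_eq_mul] <;> ring

lemma mixedSq_comm (P Q : Fin k → Fin k → ℝ) : mixedSq P Q = mixedSq Q P :=
  Finset.sum_congr rfl fun _ _ => mul_comm _ _

lemma mixedSq_perm (P Q : Fin k → Fin k → ℝ) (π : Equiv.Perm (Fin k)) :
    mixedSq (P ∘ π) (Q ∘ π) = mixedSq P Q := by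
  classical
  unfold mixedSq
  refine Fintype.sum_equiv (Equiv.finsetCongr π) _ _ fun S => ?_
  have h : ∀ A B : Fin k → Fin k → ℝ, det (of (S.piecewise (A ∘ π) (B ∘ π))) =
      (Equiv.Perm.sign π : ℝ) * det (of ((Equiv.finsetCongr π S).piecewise A B)) := by
    intro A B
    rw [← Matrix.det_permute]
    congr 1
    ext r c
    by_cases hr : r ∈ S <;> simp [hr, Finset.piecewise]
  rw [h, h]
  have : (Equiv.Perm.sign π : ℝ) * (Equiv.Perm.sign π : ℝ) = 1 := by
    rcases Int.units_eq_one_or (Equiv.Perm.sign π) with h | h <;> rw [h] <;> norm_num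
  linear_combination (det (of ((Equiv.finsetCongr π S).piecewise Q P)) *
    det (of ((Equiv.finsetCongr π S).piecewise P Q))) * this

/-- The antisymmetrization of `mixedSq P` over the rows of `Q`. -/
noncomputable def altSq (P Q : Fin k → Fin k → ℝ) : ℝ :=
  ∑ π : Equiv.Perm (Fin k), (Equiv.Perm.sign π : ℝ) * mixedSq P (Q ∘ π)

lemma altSq_eq_alternatization (P Q : Fin k → Fin k → ℝ) :
    altSq P Q = MultilinearMap.alternatization (mixedSqMultilinear P) Q := by
  rw [MultilinearMap.alternatization_apply]
  refine Finset.sum_congr rfl fun π _ => ?_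
  rw [Units.smul_def, zsmul_eq_mul]
  rfl

/-- The rows of the identity matrix, as a plain family of vectors. -/
noncomputable def idRows (k : ℕ) : Fin k → Fin k → ℝ := fun r c => if r = c then 1 else 0

lemma altSq_eq_mul_det (P Q : Fin k → Fin k → ℝ) :
    altSq P Q = altSq P (idRows k) * det (of Q) := by
  rw [altSq_eq_alternatization, altSq_eq_alternatization]
  have h := (MultilinearMap.alternatization (mixedSqMultilinear P)).eq_smul_basis_det
    (Pi.basisFun ℝ (Fin k))
  have h2 := congrArg (fun f => f Q) h
  simp only [AlternatingMap.smul_apply, smul_eq_mul] at h2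
  rw [h2]
  congr 1
  · congr 1
    ext r c
    simp [idRows, Pi.single_apply, eq_comm]
  · rw [Pi.basisFun_det_apply]

lemma altSq_comm (P Q : Fin k → Fin k → ℝ) : altSq P Q = altSq Q P := by
  unfold altSq
  refine Fintype.sum_equiv (Equiv.inv _) _ _ fun π => ?_
  rw [Equiv.inv_apply, Equiv.Perm.sign_inv, mixedSq_comm Q, ← mixedSq_perm (P ∘ _) Q π]
  congr 2
  funext r; simp

/-- Every term of the double sum defining `altSq` at the identity is nonnegative. -/
lemma altSq_one_pos : 0 < altSq (idRows k) (idRows k) := by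
  classical
  unfold altSq mixedSq
  simp only [Finset.mul_sum]
  have hterm : ∀ (π : Equiv.Perm (Fin k)) (S : Finset (Fin k)),
      0 ≤ (Equiv.Perm.sign π : ℝ) *
        (det (of (S.piecewise (idRows k ∘ π) (idRows k))) *
        det (of (S.piecewise (idRows k) (idRows k ∘ π)))) := by
    intro π S
    let f : Fin k → Fin k := fun r => if r ∈ S then π r else r
    let g : Fin k → Fin k := fun r => if r ∈ S then r else π r
    have hf : of (S.piecewise (idRows k ∘ π) (idRows k))
        = (1 : Matrix (Fin k) (Fin k) ℝ).submatrix f id := by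
      ext r c; by_cases hr : r ∈ S <;> simp [hr, f, idRows, Matrix.one_apply]
    have hg : of (S.piecewise (idRows k) (idRows k ∘ π))
        = (1 : Matrix (Fin k) (Fin k) ℝ).submatrix g id := by
      ext r c; by_cases hr : r ∈ S <;> simp [hr, g, idRows, Matrix.one_apply]
    rw [hf, hg]
    by_cases hinj : Function.Injective f
    · -- injectivity of `f` forces `π` to preserve `S`
      have hin : ∀ s ∈ S, π s ∈ S := by
        intro s hs
        by_contra hc
        have : f s = f (π s) := by simp [f, hs, hc]
        exact hc (hinj this ▸ hs)
      have himg : S.image π = S :=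
        Finset.eq_of_subset_of_card_le (Finset.image_subset_iff.2 hin)
          (Finset.card_image_of_injective S π.injective).ge
      have hfg : ∀ r, f (g r) = π r := by
        intro r
        by_cases hr : r ∈ S
        · simp [f, g, hr]
        · have : π r ∉ S := by
            intro hc
            rw [← himg, Finset.mem_image] at hc
            obtain ⟨s, hs, hsr⟩ := hc
            exact hr (π.injective hsr ▸ hs)
          simp [f, g, hr, this]
      have hmul : (1 : Matrix (Fin k) (Fin k) ℝ).submatrix g id *
          (1 : Matrix (Fin k) (Fin k) ℝ).submatrix f id =
          (1 : Matrix (Fin k) (Fin k) ℝ).submatrix π id := by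
        ext r c
        rw [Matrix.mul_apply, Finset.sum_eq_single (g r)]
        · change (1 : Matrix (Fin k) (Fin k) ℝ) (g r) (g r) * (1 : Matrix (Fin k) (Fin k) ℝ)
            (f (g r)) c = (1 : Matrix (Fin k) (Fin k) ℝ) (π r) c
          rw [Matrix.one_apply_eq, one_mul, hfg]
        · intro j _ hj
          change (1 : Matrix (Fin k) (Fin k) ℝ) (g r) j * _ = 0
          rw [Matrix.one_apply_ne (Ne.symm hj), zero_mul]
        · simp
      rw [mul_comm (det _), ← Matrix.det_mul, hmul, Matrix.det_permute, Matrix.det_one, mul_one]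
      exact mul_self_nonneg _
    · simp only [Function.Injective, not_forall] at hinj
      obtain ⟨r, s, hrs, hne⟩ := hinj
      rw [Matrix.det_zero_of_row_eq (M := (1 : Matrix (Fin k) (Fin k) ℝ).submatrix f id) hne
        (by ext c; rw [Matrix.submatrix_apply, hrs]; rfl)]
      simp
  refine Finset.sum_pos' (fun π _ => Finset.sum_nonneg fun S _ => hterm π S)
    ⟨1, Finset.mem_univ _, ?_⟩
  refine Finset.sum_pos (fun S _ => ?_) ⟨∅, Finset.mem_univ _⟩
  have h1 : idRows k ∘ (1 : Equiv.Perm (Fin k)) = idRows k := rfl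
  have h2 : of (idRows k) = (1 : Matrix (Fin k) (Fin k) ℝ) := by
    ext r c; simp [idRows, Matrix.one_apply]
  rw [h1]
  simp only [Finset.piecewise_same, h2]
  simp

/-- Being alternating in the rows of both arguments, `altSq` is a multiple of the product of the
determinants. -/
lemma altSq_eq (P Q : Fin k → Fin k → ℝ) :
    altSq P Q = altSq (idRows k) (idRows k) *
      (det (of P) * det (of Q)) := by
  rw [altSq_eq_mul_det P Q, altSq_comm P, altSq_eq_mul_det _ P]
  ring

/-- The rows of the product `X E`. -/
noncomputable def mulRows {n : ℕ} (X : Matrix (Fin k) (Fin n) ℝ) (E : Matrix (Fin n) (Fin k) ℝ) :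
    Fin k → Fin k → ℝ := fun r t => ∑ j, X r j * E j t

lemma of_mulRows {n : ℕ} (X : Matrix (Fin k) (Fin n) ℝ) (E : Matrix (Fin n) (Fin k) ℝ) :
    of (mulRows X E) = X * E := by
  ext r t; simp [mulRows, Matrix.mul_apply]

/-- If a linear combination of the functions `X ↦ det (X Eᵢ) ^ 2` vanishes, then so does the
combination of the functions `(X, Y) ↦ det (X Eᵢ) det (Y Eᵢ)`. -/
lemma polarize {I : Type*} (s : Finset I) (c : I → ℝ) {n : ℕ} (E : I → Matrix (Fin n) (Fin k) ℝ)
    (h : ∀ X : Matrix (Fin k) (Fin n) ℝ, ∑ i ∈ s, c i * det (X * E i) ^ 2 = 0)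
    (X Y : Matrix (Fin k) (Fin n) ℝ) :
    ∑ i ∈ s, c i * (det (X * E i) * det (Y * E i)) = 0 := by
  have h1 : ∀ X Y : Matrix (Fin k) (Fin n) ℝ, ∑ i ∈ s, c i * mixedSq (mulRows X (E i)) (mulRows Y (E i)) = 0 := by
    intro X Y
    have h2 : ∀ i, (2 : ℝ) ^ k * mixedSq (mulRows X (E i)) (mulRows Y (E i)) = ∑ ε : Fin k → ℤˣ,
        (∏ r, ((ε r : ℤ) : ℝ)) *
          det ((of fun r => X r + ((ε r : ℤ) : ℝ) • Y r) * E i) ^ 2 := by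
      intro i
      rw [← sum_sign_det_sq]
      refine Finset.sum_congr rfl fun ε _ => ?_
      congr 3
      ext r t
      simp [mulRows, Matrix.mul_apply, add_mul, Finset.sum_add_distrib, Finset.mul_sum, mul_assoc]
    have h3 : (2 : ℝ) ^ k * ∑ i ∈ s, c i * mixedSq (mulRows X (E i)) (mulRows Y (E i)) = 0 := by
      rw [Finset.mul_sum]
      calc _ = ∑ i ∈ s, c i * ((2 : ℝ) ^ k * mixedSq (mulRows X (E i)) (mulRows Y (E i))) :=
            Finset.sum_congr rfl fun i _ => by ring
        _ = ∑ ε : Fin k → ℤˣ, (∏ r, ((ε r : ℤ) : ℝ)) * ∑ i ∈ s, c i *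
          det ((of fun r => X r + ((ε r : ℤ) : ℝ) • Y r) * E i) ^ 2 := by
            simp only [h2, Finset.mul_sum]
            rw [Finset.sum_comm]
            exact Finset.sum_congr rfl fun ε _ => Finset.sum_congr rfl fun i _ => by ring
        _ = 0 := by simp only [h, mul_zero, Finset.sum_const_zero]
    exact (mul_eq_zero.1 h3).resolve_left (by positivity)
  have h4 : ∑ i ∈ s, c i * altSq (mulRows X (E i)) (mulRows Y (E i)) = 0 := by
    simp only [altSq, Finset.mul_sum]
    rw [Finset.sum_comm]
    refine Finset.sum_eq_zero fun π _ => ?_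
    have := h1 X (Y.submatrix π id)
    calc _ = (Equiv.Perm.sign π : ℝ) * ∑ i ∈ s, c i * mixedSq (mulRows X (E i)) (mulRows (Y.submatrix π id) (E i)) := by
          rw [Finset.mul_sum]
          refine Finset.sum_congr rfl fun i _ => ?_
          have : mulRows Y (E i) ∘ π = mulRows (Y.submatrix π id) (E i) := by
            ext r t; simp [mulRows]
          rw [this]; ring
      _ = 0 := by rw [this, mul_zero]
  have h5 : altSq (idRows k) (idRows k) *
      ∑ i ∈ s, c i * (det (X * E i) * det (Y * E i)) = 0 := by
    rw [← h4, Finset.mul_sum]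
    refine Finset.sum_congr rfl fun i _ => ?_
    rw [altSq_eq (mulRows X (E i)), of_mulRows, of_mulRows]
    ring
  exact (mul_eq_zero.1 h5).resolve_left altSq_one_pos.ne'

end Polarization

/-! ### Pairings of forest polynomials -/

section Labelling

variable {U : Type*} [Fintype U]

/-- The parts of a partition with `k + 1` parts can be labelled by `Option (Fin k)`, the label
`none` going to a prescribed element. -/
lemma exists_labelling (σ : Setoid U) (z : U) {k : ℕ} (hk : Nat.card (Quotient σ) = k + 1) :
    ∃ q : U → Option (Fin k), Function.Surjective q ∧ Setoid.ker q = σ ∧ q z = none := by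
  classical
  have : Finite (Quotient σ) := Quotient.finite σ
  obtain ⟨e0⟩ : Nonempty (Quotient σ ≃ Option (Fin k)) := by
    rw [← Finite.card_eq, hk]; simp
  let e := e0.trans (Equiv.swap (e0 (Quotient.mk σ z)) none)
  refine ⟨fun u => e (Quotient.mk σ u), e.surjective.comp Quotient.mk_surjective, ?_, ?_⟩
  · ext u v
    rw [Setoid.ker_def, e.apply_eq_iff_eq]
    exact Quotient.eq
  · simp [e]

lemma card_quotient_ker {W : Type*} [Fintype W] (q : U → Option W) (hq : Function.Surjective q) :
    Nat.card (Quotient (Setoid.ker q)) = Fintype.card W + 1 := by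
  rw [Nat.card_congr (Setoid.quotientKerEquivOfSurjective q hq), Nat.card_eq_fintype_card,
    Fintype.card_option]

end Labelling

section Forests

open Matrix

variable {n : ℕ}

lemma bform_comm (ρ σ : Setoid (Fin n)) : bform ρ σ = bform σ ρ := by
  unfold bform
  rw [add_comm, sup_comm]

lemma eqvGen_eq_edgeSetoid (F : Finset (Fin n × Fin n)) :
    Relation.EqvGen.setoid (fun a b => (a, b) ∈ F ∨ (b, a) ∈ F) =
      edgeSetoid Prod.fst Prod.snd F := by
  apply le_antisymm
  · apply Setoid.eqvGen_le
    rintro u v (h | h)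
    · exact edgeSetoid_rel (a := Prod.fst) (b := Prod.snd) h
    · exact (edgeSetoid Prod.fst Prod.snd F).symm
        (edgeSetoid_rel (a := Prod.fst) (b := Prod.snd) h)
  · rw [edgeSetoid_le_iff]
    intro e he
    exact Relation.EqvGen.rel _ _ (Or.inl he)

/-- An edge set connecting the `m + 1` parts of `σ` has the minimal size `m` exactly when it is a
forest and its component partition satisfies the counting condition of the pairing with `σ`. -/
lemma tree_count_iff {U ι : Type*} [Fintype U] [Nonempty U] (a b : ι → U) (F : Finset ι)
    (σ : Setoid U) {m : ℕ} (hm : Nat.card (Quotient σ) = m + 1)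
    (h : edgeSetoid a b F ⊔ σ = ⊤) :
    F.card = m ↔ F.card + Nat.card (Quotient (edgeSetoid a b F)) = Fintype.card U ∧
      Nat.card (Quotient (edgeSetoid a b F)) + Nat.card (Quotient σ) = Fintype.card U + 1 := by
  have h1 := card_quotient_add_le (edgeSetoid a b F) σ
  have h2 := card_le_card_add_quotient a b F
  rw [h, card_quotient_top] at h1
  omega

/-- The forest polynomials, paired with `σ`, sum to the principal minor of the Laplacian of the
graph obtained by gluing the parts of `σ`. -/
lemma sum_bform_forestPoly {m : ℕ} (σ : Setoid (Fin n)) (q : Fin n → Option (Fin m))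
    (hq : Function.Surjective q) (hker : Setoid.ker q = σ) (M : Matrix (Fin n) (Fin n) ℝ)
    (hsym : ∀ i j, M i j = M j i) (hrow : ∀ i, ∑ j, M i j = 0) :
    ∑ ρ : Setoid (Fin n), (bform ρ σ : ℝ) * forestPoly (fun i j => -M i j) ρ =
      (partMatrix ℝ q * M * (partMatrix ℝ q)ᵀ).det := by
  classical
  have : Nonempty (Fin n) := ⟨(hq none).choose⟩
  have hm : Nat.card (Quotient σ) = m + 1 := by
    rw [← hker, card_quotient_ker q hq, Fintype.card_fin]
  let w : Fin n × Fin n → ℝ := fun p => if p.1 < p.2 then -M p.1 p.2 else 0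
  rw [matrix_tree M hrow Prod.fst Prod.snd w ?_ ?_ q hq, hker]
  · unfold forestPoly
    simp only [Finset.sum_filter, Finset.mul_sum]
    rw [Finset.sum_comm]
    refine Finset.sum_congr rfl fun F _ => ?_
    by_cases hF : ∀ p ∈ F, p.1 < p.2
    · have hw : ∏ e ∈ F, w e = ∏ p ∈ F, -M p.1 p.2 :=
        Finset.prod_congr rfl fun p hp => by simp [w, hF p hp]
      rw [eqvGen_eq_edgeSetoid, Finset.sum_eq_single (edgeSetoid Prod.fst Prod.snd F)]
      · by_cases hs : edgeSetoid Prod.fst Prod.snd F ⊔ σ = ⊤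
        · have hc := tree_count_iff Prod.fst Prod.snd F σ hm hs
          rw [Fintype.card_fin] at hc
          rw [Fintype.card_fin, hw]
          by_cases hFm : F.card = m
          · obtain ⟨h1, h2⟩ := hc.1 hFm
            rw [if_pos ⟨hF, rfl, h1⟩, if_pos ⟨hFm, hs⟩, bform, if_pos ⟨h2, hs⟩, Int.cast_one,
              one_mul]
          · rw [if_neg (c := F.card = m ∧ _) fun h => hFm h.1]
            by_cases h1 : F.card + Nat.card (Quotient (edgeSetoid Prod.fst Prod.snd F)) = n
            · rw [bform, if_neg fun h => hFm (hc.2 ⟨h1, h.1⟩), Int.cast_zero, zero_mul]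
            · rw [if_neg fun h => h1 h.2.2, mul_zero]
        · simp [bform, hs]
      · intro ρ _ hρ
        rw [if_neg (fun h => hρ h.2.1.symm), mul_zero]
      · simp
    · have hw : ∏ e ∈ F, w e = 0 := by
        push Not at hF
        obtain ⟨p, hp, hlt⟩ := hF
        exact Finset.prod_eq_zero hp (by simp [w, hlt])
      rw [hw, ite_self]
      exact Finset.sum_eq_zero fun ρ _ => by rw [if_neg fun h => hF h.1, mul_zero]
  · intro e he
    by_contra hc
    apply he
    simp [w, hc]
  · intro u v huv
    rw [← Finset.sum_filter]
    rcases lt_or_gt_of_ne huv with h | h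
    · rw [Finset.sum_eq_single_of_mem (u, v) (by simp)]
      · simp [w, h]
      · rintro ⟨x, y⟩ hxy hne
        simp only [Finset.mem_filter, Finset.mem_univ, true_and, Sym2.eq_iff] at hxy
        rcases hxy with ⟨rfl, rfl⟩ | ⟨rfl, rfl⟩
        · exact absurd rfl hne
        · simp [w, not_lt.2 h.le]
    · rw [Finset.sum_eq_single_of_mem (v, u) (by simp)]
      · simp [w, h, hsym u v]
      · rintro ⟨x, y⟩ hxy hne
        simp only [Finset.mem_filter, Finset.mem_univ, true_and, Sym2.eq_iff] at hxy
        rcases hxy with ⟨rfl, rfl⟩ | ⟨rfl, rfl⟩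
        · simp [w, not_lt.2 h.le]
        · exact absurd rfl hne

end Forests

/-! ### The pairing separates noncrossing partitions -/

section Independence

open Matrix

variable {n : ℕ}

lemma exists_perm_of_det_ne_zero {k : ℕ} (A : Matrix (Fin k) (Fin k) ℝ) (h : A.det ≠ 0) :
    ∃ π : Equiv.Perm (Fin k), ∀ i, A (π i) i ≠ 0 := by
  by_contra hc
  push Not at hc
  apply h
  rw [Matrix.det_apply]
  refine Finset.sum_eq_zero fun π _ => ?_
  obtain ⟨i, hi⟩ := hc π
  rw [Finset.prod_eq_zero (f := fun i => A (π i) i) (Finset.mem_univ i) hi, smul_zero]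

lemma exists_low {k : ℕ} (q : Fin n → Option (Fin k)) (hq : Function.Surjective q) :
    ∃ lo : Fin k → Fin n, ∀ r, q (lo r) = some r ∧ ∀ y, q y = some r → lo r ≤ y := by
  classical
  have : ∀ r, ∃ x, q x = some r ∧ ∀ y, q y = some r → x ≤ y := by
    intro r
    obtain ⟨x, hx⟩ := hq (some r)
    obtain ⟨e, he, hmin⟩ := Finset.exists_min_image (Finset.univ.filter fun e => q e = some r) id
      ⟨x, by simp [hx]⟩
    exact ⟨e, by simpa using he, fun y hy => hmin y (by simpa using hy)⟩
  exact ⟨fun r => (this r).choose, fun r => (this r).choose_spec⟩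

lemma exists_high {k : ℕ} (q : Fin n → Option (Fin k)) (hq : Function.Surjective q) :
    ∃ hi : Fin k → Fin n, ∀ r, q (hi r) = some r ∧ ∀ y, q y = some r → y ≤ hi r := by
  classical
  have : ∀ r, ∃ x, q x = some r ∧ ∀ y, q y = some r → y ≤ x := by
    intro r
    obtain ⟨x, hx⟩ := hq (some r)
    obtain ⟨e, he, hmax⟩ := Finset.exists_max_image (Finset.univ.filter fun e => q e = some r) id
      ⟨x, by simp [hx]⟩
    exact ⟨e, by simpa using he, fun y hy => hmax y (by simpa using hy)⟩
  exact ⟨fun r => (this r).choose, fun r => (this r).choose_spec⟩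

lemma isLow_iff {k : ℕ} {q : Fin n → Option (Fin k)} {σ : Setoid (Fin n)} {z : Fin n}
    (hker : Setoid.ker q = σ) (hz : q z = none) {lo : Fin k → Fin n}
    (hlo : ∀ r, q (lo r) = some r ∧ ∀ y, q y = some r → lo r ≤ y) (x : Fin n) :
    IsLow z σ x ↔ ∃ r, lo r = x := by
  subst hker
  constructor
  · rintro ⟨h1, h2⟩
    obtain ⟨r, hr⟩ : ∃ r, q x = some r :=
      Option.ne_none_iff_exists'.1 fun hc => h2 (Setoid.ker_def.2 (hc.trans hz.symm))
    exact ⟨r, le_antisymm ((hlo r).2 x hr) (h1 _ (Setoid.ker_def.2 ((hlo r).1.trans hr.symm)))⟩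
  · rintro ⟨r, rfl⟩
    refine ⟨fun y hy => (hlo r).2 y ((Setoid.ker_def.1 hy).trans (hlo r).1), fun hc => ?_⟩
    have := Setoid.ker_def.1 hc
    rw [(hlo r).1, hz] at this
    exact absurd this (by simp)

lemma isHigh_iff {k : ℕ} {q : Fin n → Option (Fin k)} {σ : Setoid (Fin n)} {z : Fin n}
    (hker : Setoid.ker q = σ) (hz : q z = none) {hi : Fin k → Fin n}
    (hhi : ∀ r, q (hi r) = some r ∧ ∀ y, q y = some r → y ≤ hi r) (x : Fin n) :
    IsHigh z σ x ↔ ∃ r, hi r = x := by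
  subst hker
  constructor
  · rintro ⟨h1, h2⟩
    obtain ⟨r, hr⟩ : ∃ r, q x = some r :=
      Option.ne_none_iff_exists'.1 fun hc => h2 (Setoid.ker_def.2 (hc.trans hz.symm))
    exact ⟨r, le_antisymm (h1 _ (Setoid.ker_def.2 ((hhi r).1.trans hr.symm))) ((hhi r).2 x hr)⟩
  · rintro ⟨r, rfl⟩
    refine ⟨fun y hy => (hhi r).2 y ((Setoid.ker_def.1 hy).trans (hhi r).1), fun hc => ?_⟩
    have := Setoid.ker_def.1 hc
    rw [(hhi r).1, hz] at this
    exact absurd this (by simp)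

/-- If `c` pairs to zero with every partition, then the corresponding combination of squared minors
vanishes: the Laplacians `Xᵀ X` with `X` having zero row sums detect it. -/
lemma sum_sq_det_eq_zero {k : ℕ} (z : Fin n) (s : Finset (Setoid (Fin n)))
    (c : Setoid (Fin n) → ℝ) (hc : ∀ ρ, ∑ σ ∈ s, c σ * (bform ρ σ : ℝ) = 0)
    (q : Setoid (Fin n) → Fin n → Option (Fin k))
    (hq : ∀ σ ∈ s, Function.Surjective (q σ) ∧ Setoid.ker (q σ) = σ ∧ q σ z = none)
    (X : Matrix (Fin k) (Fin n) ℝ) :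
    ∑ σ ∈ s, c σ * (X * (partMatrix ℝ (q σ))ᵀ).det ^ 2 = 0 := by
  classical
  let X' : Matrix (Fin k) (Fin n) ℝ := of fun r u => X r u - if u = z then ∑ v, X r v else 0
  have hX' : ∀ r, ∑ u, X' r u = 0 := by
    intro r; simp [X', Finset.sum_sub_distrib]
  have hXE : ∀ σ ∈ s, X' * (partMatrix ℝ (q σ))ᵀ = X * (partMatrix ℝ (q σ))ᵀ := by
    intro σ hσ
    ext r t
    rw [Matrix.mul_apply, Matrix.mul_apply]
    refine Finset.sum_congr rfl fun u _ => ?_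
    by_cases hu : u = z
    · subst hu; simp [partMatrix, (hq σ hσ).2.2]
    · simp [X', hu]
  let M : Matrix (Fin n) (Fin n) ℝ := X'ᵀ * X'
  have hsym : ∀ i j, M i j = M j i := by
    intro i j
    simp only [M, Matrix.mul_apply, Matrix.transpose_apply]
    exact Finset.sum_congr rfl fun _ _ => mul_comm _ _
  have hrow : ∀ i, ∑ j, M i j = 0 := by
    intro i
    simp only [M, Matrix.mul_apply, Matrix.transpose_apply]
    rw [Finset.sum_comm]
    refine Finset.sum_eq_zero fun r _ => ?_
    rw [← Finset.mul_sum, hX', mul_zero]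
  have hdet : ∀ σ ∈ s, (X * (partMatrix ℝ (q σ))ᵀ).det ^ 2 =
      ∑ ρ : Setoid (Fin n), (bform ρ σ : ℝ) * forestPoly (fun i j => -M i j) ρ := by
    intro σ hσ
    obtain ⟨h1, h2, h3⟩ := hq σ hσ
    rw [sum_bform_forestPoly σ (q σ) h1 h2 M hsym hrow, ← hXE σ hσ]
    have : partMatrix ℝ (q σ) * M * (partMatrix ℝ (q σ))ᵀ =
        (X' * (partMatrix ℝ (q σ))ᵀ)ᵀ * (X' * (partMatrix ℝ (q σ))ᵀ) := by
      simp only [M, Matrix.transpose_mul, Matrix.transpose_transpose, Matrix.mul_assoc]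
    rw [this, Matrix.det_mul, Matrix.det_transpose, sq]
  rw [Finset.sum_congr rfl fun σ hσ => by rw [hdet σ hσ]]
  simp only [Finset.mul_sum]
  rw [Finset.sum_comm]
  refine Finset.sum_eq_zero fun ρ _ => ?_
  calc _ = (∑ σ ∈ s, c σ * (bform ρ σ : ℝ)) * forestPoly (fun i j => -M i j) ρ := by
        rw [Finset.sum_mul]
        exact Finset.sum_congr rfl fun σ _ => by ring
    _ = 0 := by rw [hc, zero_mul]

/-- The pairing with noncrossing partitions separates points: a combination of noncrossing
partitions pairing to zero with every partition is zero. -/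
lemma eq_zero_of_bform (z : Fin n) (hz : ∀ x, x ≤ z) (c : Setoid (Fin n) → ℝ)
    (hnc : ∀ σ, c σ ≠ 0 → IsNoncrossing σ)
    (hc : ∀ ρ, ∑ σ, c σ * (bform ρ σ : ℝ) = 0) (σ₀ : Setoid (Fin n)) : c σ₀ = 0 := by
  classical
  by_contra hσ₀
  obtain ⟨k, hk⟩ : ∃ k, Nat.card (Quotient σ₀) = k + 1 := by
    have : Nonempty (Quotient σ₀) := ⟨Quotient.mk _ z⟩
    exact ⟨Nat.card (Quotient σ₀) - 1, by have := Nat.card_pos (α := Quotient σ₀); omega⟩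
  -- the pairing is homogeneous in the number of parts
  let s : Finset (Setoid (Fin n)) := Finset.univ.filter fun σ => Nat.card (Quotient σ) = k + 1
  have hs : ∀ ρ, ∑ σ ∈ s, c σ * (bform ρ σ : ℝ) = 0 := by
    intro ρ
    by_cases hρ : Nat.card (Quotient ρ) + (k + 1) = n + 1
    · rw [← hc ρ]
      refine Finset.sum_subset (Finset.subset_univ _) fun σ _ hσ => ?_
      have : bform ρ σ = 0 := if_neg fun h => hσ <| by
        simp only [s, Finset.mem_filter, Finset.mem_univ, true_and]
        omega
      rw [this, Int.cast_zero, mul_zero]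
    · refine Finset.sum_eq_zero fun σ hσ => ?_
      have hσ' : Nat.card (Quotient σ) = k + 1 := (Finset.mem_filter.1 hσ).2
      have : bform ρ σ = 0 := if_neg fun h => hρ (by rw [← hσ']; exact h.1)
      rw [this, Int.cast_zero, mul_zero]
  have hex : ∀ σ : Setoid (Fin n), ∃ q : Fin n → Option (Fin k), σ ∈ s →
      Function.Surjective q ∧ Setoid.ker q = σ ∧ q z = none := by
    intro σ
    by_cases hσ : σ ∈ s
    · obtain ⟨q, hq⟩ := exists_labelling σ z (Finset.mem_filter.1 hσ).2
      exact ⟨q, fun _ => hq⟩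
    · exact ⟨fun _ => none, fun h => absurd h hσ⟩
  choose q hq using hex
  have hlo : ∀ σ : Setoid (Fin n), ∃ lo : Fin k → Fin n, σ ∈ s →
      ∀ r, q σ (lo r) = some r ∧ ∀ y, q σ y = some r → lo r ≤ y := by
    intro σ
    by_cases hσ : σ ∈ s
    · obtain ⟨lo, h⟩ := exists_low (q σ) (hq σ hσ).1
      exact ⟨lo, fun _ => h⟩
    · exact ⟨fun _ => z, fun h => absurd h hσ⟩
  choose lo hlo using hlo
  have hhi : ∀ σ : Setoid (Fin n), ∃ hi : Fin k → Fin n, σ ∈ s →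
      ∀ r, q σ (hi r) = some r ∧ ∀ y, q σ y = some r → y ≤ hi r := by
    intro σ
    by_cases hσ : σ ∈ s
    · obtain ⟨hi, h⟩ := exists_high (q σ) (hq σ hσ).1
      exact ⟨hi, fun _ => h⟩
    · exact ⟨fun _ => z, fun h => absurd h hσ⟩
  choose hi hhi using hhi
  -- a partition in the support whose parts have maximal total width is separated from the others
  let wid : Setoid (Fin n) → ℤ := fun σ =>
    ∑ r, (((hi σ r).1 : ℤ)) - ∑ r, (((lo σ r).1 : ℤ))
  obtain ⟨σ, hσ, hmax⟩ := Finset.exists_max_image (s.filter fun σ => c σ ≠ 0) wid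
    ⟨σ₀, Finset.mem_filter.2 ⟨Finset.mem_filter.2 ⟨Finset.mem_univ _, hk⟩, hσ₀⟩⟩
  rw [Finset.mem_filter] at hσ
  obtain ⟨hσs, hσc⟩ := hσ
  have hpol := polarize s c (fun σ => (partMatrix ℝ (q σ))ᵀ) (sum_sq_det_eq_zero z s c hs q hq)
  let sel : (Fin k → Fin n) → Matrix (Fin k) (Fin n) ℝ := fun f => of fun r u =>
    if u = f r then 1 else 0
  have hsel : ∀ f σ' r t, (sel f * (partMatrix ℝ (q σ'))ᵀ) r t =
      if q σ' (f r) = some t then 1 else 0 := by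
    intro f σ' r t
    rw [Matrix.mul_apply, Finset.sum_eq_single (f r)]
    · simp [sel, partMatrix]
    · intro j _ hj
      simp [sel, hj]
    · simp
  have hone : ∀ f, (∀ r, q σ (f r) = some r) → (sel f * (partMatrix ℝ (q σ))ᵀ).det = 1 := by
    intro f hf
    have : sel f * (partMatrix ℝ (q σ))ᵀ = 1 := by
      ext r t
      rw [hsel, hf, Matrix.one_apply]
      simp
    rw [this, Matrix.det_one]
  -- evaluate the polarized identity at the coordinate matrices of the part minima and maxima of `σ`
  have h0 := hpol (sel (lo σ)) (sel (hi σ))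
  rw [Finset.sum_eq_single_of_mem σ hσs, hone _ fun r => (hlo σ hσs r).1,
    hone _ fun r => (hhi σ hσs r).1, mul_one, mul_one] at h0
  · exact hσc h0
  intro σ' hσ's hne
  by_contra hnz
  have hc' : c σ' ≠ 0 := left_ne_zero_of_mul hnz
  have hd := right_ne_zero_of_mul hnz
  -- two nonzero minors force the parts of the other partition to be at least as wide
  obtain ⟨π, hπ⟩ := exists_perm_of_det_ne_zero _ (left_ne_zero_of_mul hd)
  obtain ⟨π', hπ'⟩ := exists_perm_of_det_ne_zero _ (right_ne_zero_of_mul hd)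
  simp only [hsel, ne_eq, ite_eq_right_iff, one_ne_zero, imp_false, not_not] at hπ hπ'
  have hle1 : ∀ i, ((lo σ' i).1 : ℤ) ≤ ((lo σ (π i)).1 : ℤ) := fun i => by
    exact_mod_cast Fin.le_def.1 ((hlo σ' hσ's i).2 _ (hπ i))
  have hle2 : ∀ i, ((hi σ (π' i)).1 : ℤ) ≤ ((hi σ' i).1 : ℤ) := fun i => by
    exact_mod_cast Fin.le_def.1 ((hhi σ' hσ's i).2 _ (hπ' i))
  have hs1 : ∑ i, ((lo σ (π i)).1 : ℤ) = ∑ i, ((lo σ i).1 : ℤ) :=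
    Equiv.sum_comp π fun i => ((lo σ i).1 : ℤ)
  have hs2 : ∑ i, ((hi σ (π' i)).1 : ℤ) = ∑ i, ((hi σ i).1 : ℤ) :=
    Equiv.sum_comp π' fun i => ((hi σ i).1 : ℤ)
  have hS1 := Finset.sum_le_sum (s := Finset.univ) fun i _ => hle1 i
  have hS2 := Finset.sum_le_sum (s := Finset.univ) fun i _ => hle2 i
  have hw : wid σ' ≤ wid σ := hmax σ' (Finset.mem_filter.2 ⟨hσ's, hc'⟩)
  simp only [wid] at hw
  have e1 : ∀ i, lo σ' i = lo σ (π i) := by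
    have := (Finset.sum_eq_sum_iff_of_le (s := Finset.univ) fun i _ => hle1 i).1 (by omega)
    exact fun i => Fin.ext (by exact_mod_cast this i (Finset.mem_univ i))
  have e2 : ∀ i, hi σ (π' i) = hi σ' i := by
    have := (Finset.sum_eq_sum_iff_of_le (s := Finset.univ) fun i _ => hle2 i).1 (by omega)
    exact fun i => Fin.ext (by exact_mod_cast this i (Finset.mem_univ i))
  apply hne
  refine nc_ext hz (hnc _ hc') (hnc _ hσc) (fun x => ?_) (fun x => ?_)
  · rw [isLow_iff (hq σ' hσ's).2.1 (hq σ' hσ's).2.2 (hlo σ' hσ's),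
      isLow_iff (hq σ hσs).2.1 (hq σ hσs).2.2 (hlo σ hσs)]
    simp only [e1]
    exact π.surjective.exists (p := fun r => lo σ r = x) |>.symm
  · rw [isHigh_iff (hq σ' hσ's).2.1 (hq σ' hσ's).2.2 (hhi σ' hσ's),
      isHigh_iff (hq σ hσs).2.1 (hq σ hσs).2.2 (hhi σ hσs)]
    simp only [← e2]
    exact π'.surjective.exists (p := fun r => hi σ r = x) |>.symm

end Independence

/-! ### Groves as spanning trees of the glued graph -/

section GroveCount

variable {V : Type} [Fintype V] [DecidableEq V]

/-- An endpoint of an unordered pair, chosen arbitrarily. -/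
noncomputable def sfst (e : Sym2 V) : V := (Quot.out e).1

/-- The remaining endpoint of an unordered pair once `sfst` is chosen (equal to it for a loop). -/
noncomputable def ssnd (e : Sym2 V) : V := (Quot.out e).2

lemma mk_sfst_ssnd (e : Sym2 V) : s(sfst e, ssnd e) = e := Quot.out_eq e

lemma edgeSetoid_iff_reachable (F : Finset (Sym2 V)) (u v : V) :
    edgeSetoid sfst ssnd F u v ↔ (groveGraph F).Reachable u v := by
  constructor
  · have : edgeSetoid sfst ssnd F ≤ (groveGraph F).reachableSetoid := by
      rw [edgeSetoid_le_iff]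
      intro e he
      by_cases hd : sfst e = ssnd e
      · rw [hd]
      · apply SimpleGraph.Adj.reachable
        rw [groveGraph, SimpleGraph.fromEdgeSet_adj, mk_sfst_ssnd]
        exact ⟨he, hd⟩
    exact fun h => this h
  · rintro ⟨p⟩
    induction p with
    | nil => exact (edgeSetoid sfst ssnd F).refl _
    | @cons x y _ h p ih =>
      refine (edgeSetoid sfst ssnd F).trans ?_ ih
      rw [groveGraph, SimpleGraph.fromEdgeSet_adj] at h
      have h1 := edgeSetoid_rel (a := sfst) (b := ssnd) (Finset.mem_coe.1 h.1)
      have h2 := (mk_sfst_ssnd s(x, y)).symm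
      rcases Sym2.eq_iff.1 h2 with ⟨e1, e2⟩ | ⟨e1, e2⟩
      · rwa [← e1, ← e2] at h1
      · rw [← e1, ← e2] at h1
        exact (edgeSetoid sfst ssnd F).symm h1

lemma edgeSetoid_mono {U ι : Type*} [Fintype U] (a b : ι → U) {F F' : Finset ι} (h : F ⊆ F') :
    edgeSetoid a b F ≤ edgeSetoid a b F' := by
  rw [edgeSetoid_le_iff]
  exact fun e he => edgeSetoid_rel (h he)

lemma groveGraph_erase (F : Finset (Sym2 V)) (e : Sym2 V) :
    groveGraph (F.erase e) = (groveGraph F).deleteEdges {e} := by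
  ext u v
  simp only [groveGraph, SimpleGraph.fromEdgeSet_adj, SimpleGraph.deleteEdges_adj,
    Finset.coe_erase, Set.mem_sdiff, Set.mem_singleton_iff]
  tauto

/-- A loopless edge set is acyclic exactly when each edge merges two components. -/
lemma acyclic_iff_card (F : Finset (Sym2 V)) (hF : ∀ e ∈ F, ¬ e.IsDiag) :
    (groveGraph F).IsAcyclic ↔
      F.card + Nat.card (Quotient (edgeSetoid sfst ssnd F)) = Fintype.card V := by
  constructor
  · intro h
    refine le_antisymm ?_ (card_le_card_add_quotient sfst ssnd F)
    induction F using Finset.induction_on with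
    | empty =>
      rw [Finset.card_empty, zero_add, ← Nat.card_eq_fintype_card]
      exact Nat.card_le_card_of_surjective _ Quotient.mk_surjective
    | insert e F he ih =>
      have ih' := ih (fun e' he' => hF e' (Finset.mem_insert_of_mem he'))
        (h.anti (SimpleGraph.fromEdgeSet_mono (by simp)))
      have hlt : edgeSetoid sfst ssnd F < edgeSetoid sfst ssnd (insert e F) := by
        refine lt_of_le_of_ne (edgeSetoid_mono _ _ (Finset.subset_insert e F)) fun heq => ?_
        have h1 : edgeSetoid sfst ssnd F (sfst e) (ssnd e) := by
          rw [heq]; exact edgeSetoid_rel (Finset.mem_insert_self e F)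
        rw [edgeSetoid_iff_reachable] at h1
        have hadj : (groveGraph (insert e F)).Adj (sfst e) (ssnd e) := by
          rw [groveGraph, SimpleGraph.fromEdgeSet_adj, mk_sfst_ssnd]
          refine ⟨by simp, fun hd => hF e (Finset.mem_insert_self e F) ?_⟩
          rw [← mk_sfst_ssnd e]; exact hd
        have hb := SimpleGraph.isAcyclic_iff_forall_adj_isBridge.1 h hadj
        rw [SimpleGraph.isBridge_iff, mk_sfst_ssnd, ← groveGraph_erase,
          Finset.erase_insert he] at hb
        exact hb h1
      have := card_quotient_lt_of_lt hlt
      rw [Finset.card_insert_of_notMem he]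
      omega
  · intro h
    rw [SimpleGraph.isAcyclic_iff_forall_adj_isBridge]
    intro u v huv
    rw [groveGraph, SimpleGraph.fromEdgeSet_adj] at huv
    rw [SimpleGraph.isBridge_iff, ← groveGraph_erase, ← edgeSetoid_iff_reachable]
    intro hr
    have heq : edgeSetoid sfst ssnd (F.erase s(u, v)) = edgeSetoid sfst ssnd F := by
      refine le_antisymm (edgeSetoid_mono _ _ (Finset.erase_subset _ _)) ?_
      rw [edgeSetoid_le_iff]
      intro e he
      by_cases hee : e = s(u, v)
      · have h2 := mk_sfst_ssnd e
        rw [hee] at h2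
        rw [hee]
        rcases Sym2.eq_iff.1 h2 with ⟨e1, e2⟩ | ⟨e1, e2⟩
        · rwa [e1, e2]
        · rw [e1, e2]; exact (edgeSetoid sfst ssnd _).symm hr
      · exact edgeSetoid_rel (Finset.mem_erase.2 ⟨hee, he⟩)
    have hle := card_le_card_add_quotient sfst ssnd (F.erase s(u, v))
    rw [heq, Finset.card_erase_of_mem (Finset.mem_coe.1 huv.1)] at hle
    have hpos : 0 < F.card := Finset.card_pos.2 ⟨_, Finset.mem_coe.1 huv.1⟩
    omega

variable {n : ℕ}

/-- The vertices of the graph, split into nodes and inner vertices. -/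
noncomputable def vxEquiv (node : Fin n → V) (hnode : Function.Injective node) :
    Fin n ⊕ InnerVx node ≃ V :=
  Equiv.ofBijective (Sum.elim node Subtype.val) <| by
    constructor
    · rintro (i | u) (j | v) h
      · exact congrArg Sum.inl (hnode h)
      · exact absurd h (v.2 i)
      · exact absurd h.symm (u.2 j)
      · exact congrArg Sum.inr (Subtype.ext h)
    · intro v
      by_cases h : ∃ i, node i = v
      · exact ⟨Sum.inl h.choose, h.choose_spec⟩
      · push Not at h
        exact ⟨Sum.inr ⟨v, h⟩, rfl⟩

lemma card_eq_add_card_inner (node : Fin n → V) (hnode : Function.Injective node) :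
    Fintype.card V = n + Fintype.card (InnerVx node) := by
  rw [← Fintype.card_congr (vxEquiv node hnode), Fintype.card_sum, Fintype.card_fin]

/-- The labelling of vertices that labels the nodes by `q` and gives each inner vertex its own
label. -/
noncomputable def extLabel (node : Fin n → V) (hnode : Function.Injective node) {m : ℕ}
    (q : Fin n → Option (Fin m)) (v : V) : Option (Fin m ⊕ InnerVx node) :=
  Sum.elim (fun i => (q i).map Sum.inl) (fun u => some (Sum.inr u))
    ((vxEquiv node hnode).symm v)

section

variable (node : Fin n → V) (hnode : Function.Injective node) {m : ℕ} (q : Fin n → Option (Fin m))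

lemma extLabel_equiv (x : Fin n ⊕ InnerVx node) :
    extLabel node hnode q (vxEquiv node hnode x) =
      Sum.elim (fun i => (q i).map Sum.inl) (fun u => some (Sum.inr u)) x := by
  rw [extLabel, Equiv.symm_apply_apply]

lemma extLabel_node (i : Fin n) : extLabel node hnode q (node i) = (q i).map Sum.inl :=
  extLabel_equiv node hnode q (Sum.inl i)

lemma extLabel_surjective (hq : Function.Surjective q) :
    Function.Surjective (extLabel node hnode q) := by
  rintro (_ | (c | u))
  · obtain ⟨i, hi⟩ := hq none
    exact ⟨node i, by rw [extLabel_node, hi]; rfl⟩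
  · obtain ⟨i, hi⟩ := hq (some c)
    exact ⟨node i, by rw [extLabel_node, hi]; rfl⟩
  · exact ⟨u.1, extLabel_equiv node hnode q (Sum.inr u)⟩

lemma extLabel_eq_iff (v v' : V) : extLabel node hnode q v = extLabel node hnode q v' ↔
    v = v' ∨ ∃ i j, node i = v ∧ node j = v' ∧ q i = q j := by
  constructor
  · obtain ⟨x, rfl⟩ := (vxEquiv node hnode).surjective v
    obtain ⟨y, rfl⟩ := (vxEquiv node hnode).surjective v'
    rw [extLabel_equiv, extLabel_equiv]
    intro h
    rcases x with i | u <;> rcases y with j | u'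
    · exact Or.inr ⟨i, j, rfl, rfl, Option.map_injective Sum.inl_injective h⟩
    · simp only [Sum.elim_inl, Sum.elim_inr] at h
      cases hqi : q i <;> simp [hqi] at h
    · simp only [Sum.elim_inl, Sum.elim_inr] at h
      cases hqj : q j <;> simp [hqj] at h
    · simp only [Sum.elim_inr, Option.some.injEq, Sum.inr.injEq] at h
      rw [h]; exact Or.inl rfl
  · rintro (rfl | ⟨i, j, rfl, rfl, h⟩)
    · rfl
    · rw [extLabel_node, extLabel_node, h]

lemma card_connSetoid (F : Finset (Sym2 V))
    (hF : ∀ v : V, ∃ i : Fin n, (groveGraph F).Reachable v (node i)) :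
    Nat.card (Quotient (connSetoid node F)) = Nat.card (Quotient (edgeSetoid sfst ssnd F)) := by
  refine Nat.card_eq_of_bijective
    (Quotient.map (sa := connSetoid node F) (sb := edgeSetoid sfst ssnd F) node
      fun i j h => (edgeSetoid_iff_reachable F _ _).2 h) ⟨?_, ?_⟩
  · rintro ⟨i⟩ ⟨j⟩ h
    exact Quotient.sound ((edgeSetoid_iff_reachable F _ _).1 (Quotient.exact h))
  · rintro ⟨v⟩
    obtain ⟨i, hi⟩ := hF v
    exact ⟨Quotient.mk _ i,
      Quotient.sound ((edgeSetoid_iff_reachable F _ _).2 hi.symm)⟩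

/-- The groves pairing to `1` with `ρ` are the spanning trees of the graph obtained by gluing the
nodes in each part of `ρ`. -/
lemma grove_iff (G : SimpleGraph V) (hq : Function.Surjective q) (ρ : Setoid (Fin n))
    (hker : Setoid.ker q = ρ) (F : Finset (Sym2 V)) (hFG : (F : Set (Sym2 V)) ⊆ G.edgeSet) :
    (IsGrove G node F ∧ bform ρ (connSetoid node F) = 1) ↔
      (F.card = Fintype.card (Fin m ⊕ InnerVx node) ∧
        edgeSetoid sfst ssnd F ⊔ Setoid.ker (extLabel node hnode q) = ⊤) := by
  classical
  obtain ⟨i₀, -⟩ := hq none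
  have : Nonempty V := ⟨node i₀⟩
  have hVc := card_eq_add_card_inner node hnode
  have hsum : Fintype.card (Fin m ⊕ InnerVx node) = m + Fintype.card (InnerVx node) := by
    rw [Fintype.card_sum, Fintype.card_fin]
  have hρc : Nat.card (Quotient ρ) = m + 1 := by
    rw [← hker, card_quotient_ker q hq, Fintype.card_fin]
  have hσc := card_quotient_ker _ (extLabel_surjective node hnode q hq)
  have hacyc := acyclic_iff_card F fun e he => G.not_isDiag_of_mem_edgeSet (hFG he)
  have hcount := tree_count_iff sfst ssnd F (Setoid.ker (extLabel node hnode q)) hσc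
  constructor
  · rintro ⟨⟨-, hac, hreach⟩, hb⟩
    have hb' : Nat.card (Quotient ρ) + Nat.card (Quotient (connSetoid node F)) = n + 1 ∧
        ρ ⊔ connSetoid node F = ⊤ := by
      by_contra hc
      rw [bform, if_neg hc] at hb
      exact absurd hb (by norm_num)
    have hsup : edgeSetoid sfst ssnd F ⊔ Setoid.ker (extLabel node hnode q) = ⊤ := by
      set T := edgeSetoid sfst ssnd F ⊔ Setoid.ker (extLabel node hnode q) with hT
      have h1 : ρ ⊔ connSetoid node F ≤ Setoid.comap node T := by
        apply sup_le
        · intro i j hij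
          rw [← hker] at hij
          refine (le_sup_right : _ ≤ T) (Setoid.ker_def.2 ?_)
          rw [extLabel_node, extLabel_node, Setoid.ker_def.1 hij]
        · intro i j hij
          exact (le_sup_left : _ ≤ T) ((edgeSetoid_iff_reachable F _ _).2 hij)
      rw [hb'.2] at h1
      rw [eq_top_iff]
      intro v v' _
      obtain ⟨i, hi⟩ := hreach v
      obtain ⟨j, hj⟩ := hreach v'
      have h2 : T v (node i) := (le_sup_left : _ ≤ T) ((edgeSetoid_iff_reachable F _ _).2 hi)
      have h3 : T v' (node j) := (le_sup_left : _ ≤ T) ((edgeSetoid_iff_reachable F _ _).2 hj)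
      have h4 : T (node i) (node j) := h1 trivial
      exact T.trans h2 (T.trans h4 (T.symm h3))
    refine ⟨(hcount hsup).2 ⟨hacyc.1 hac, ?_⟩, hsup⟩
    have h5 := card_connSetoid node F hreach
    have h6 := hb'.1
    omega
  · rintro ⟨hFc, hsup⟩
    obtain ⟨h1, h2⟩ := (hcount hsup).1 hFc
    have hreach : ∀ v : V, ∃ i : Fin n, (groveGraph F).Reachable v (node i) := by
      let T : Setoid V := Setoid.ker fun v => ∃ i : Fin n, (groveGraph F).Reachable v (node i)
      have hT : T = ⊤ := by
        rw [eq_top_iff, ← hsup]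
        apply sup_le
        · intro v v' h
          rw [edgeSetoid_iff_reachable] at h
          exact Setoid.ker_def.2 (propext ⟨fun ⟨i, hi⟩ => ⟨i, h.symm.trans hi⟩,
            fun ⟨i, hi⟩ => ⟨i, h.trans hi⟩⟩)
        · intro v v' h
          rcases (extLabel_eq_iff node hnode q v v').1 (Setoid.ker_def.1 h) with
            rfl | ⟨i, j, rfl, rfl, -⟩
          · exact T.refl _
          · exact Setoid.ker_def.2 (propext ⟨fun _ => ⟨j, SimpleGraph.Reachable.refl _⟩,
              fun _ => ⟨i, SimpleGraph.Reachable.refl _⟩⟩)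
      intro v
      have h3 : T v (node i₀) := by rw [hT]; trivial
      rw [Setoid.ker_def.1 h3]
      exact ⟨i₀, SimpleGraph.Reachable.refl _⟩
    refine ⟨⟨hFG, hacyc.2 h1, hreach⟩, ?_⟩
    rw [bform, if_pos]
    refine ⟨?_, ?_⟩
    · have h5 := card_connSetoid node F hreach
      omega
    · choose r hr using hreach
      set J := ρ ⊔ connSetoid node F with hJ
      let T : Setoid V := Setoid.ker fun v => Quotient.mk J (r v)
      have hrn : ∀ i, J i (r (node i)) := fun i => (le_sup_right : _ ≤ J) (hr (node i))
      have hT : T = ⊤ := by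
        rw [eq_top_iff, ← hsup]
        apply sup_le
        · intro v v' h
          rw [edgeSetoid_iff_reachable] at h
          exact Setoid.ker_def.2 (Quotient.sound
            ((le_sup_right : _ ≤ J) ((hr v).symm.trans (h.trans (hr v')))))
        · intro v v' h
          rcases (extLabel_eq_iff node hnode q v v').1 (Setoid.ker_def.1 h) with
            rfl | ⟨i, j, rfl, rfl, hij⟩
          · exact T.refl _
          · refine Setoid.ker_def.2 (Quotient.sound ?_)
            have h3 : J i j := (le_sup_left : _ ≤ J) (by rw [← hker]; exact Setoid.ker_def.2 hij)
            exact J.trans (J.symm (hrn i)) (J.trans h3 (hrn j))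
      rw [eq_top_iff]
      intro i j _
      have h3 : T (node i) (node j) := by rw [hT]; trivial
      exact J.trans (hrn i) (J.trans (Quotient.exact (Setoid.ker_def.1 h3)) (J.symm (hrn j)))

end

end GroveCount

/-! ### Grove sums and the response matrix -/

section GroveMinor

open Matrix

variable {V : Type} [Fintype V] [DecidableEq V] {n : ℕ}

open Classical in
/-- The edge weights, set to zero off the edges of the graph. -/
noncomputable def edgeWeight (G : SimpleGraph V) (w : Sym2 V → ℝ) (e : Sym2 V) : ℝ :=
  if e ∈ G.edgeSet then w e else 0

variable (G : SimpleGraph V) (w : Sym2 V → ℝ)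

lemma lap_row_sum (u : V) : ∑ v, lapMatrix' G w u v = 0 := by
  classical
  have h : ∀ v, lapMatrix' G w u v =
      (if u = v then ∑ x : V, (if G.Adj u x then w s(u, x) else 0) else 0) -
        (if G.Adj u v then w s(u, v) else 0) := by
    intro v
    by_cases huv : u = v
    · subst huv
      simp only [lapMatrix', if_true, SimpleGraph.irrefl, if_false, sub_zero]
    · simp only [lapMatrix', huv, if_false, zero_sub]
  simp only [h, Finset.sum_sub_distrib]
  simp

lemma lap_symm (u v : V) : lapMatrix' G w u v = lapMatrix' G w v u := by
  by_cases huv : u = v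
  · rw [huv]
  · by_cases h : G.Adj u v
    · simp [lapMatrix', huv, Ne.symm huv, h, h.symm, Sym2.eq_swap (a := u)]
    · have h' : ¬ G.Adj v u := fun h' => h h'.symm
      simp [lapMatrix', huv, Ne.symm huv, h, h']

lemma edgeWeight_ne (e : Sym2 V) (h : edgeWeight G w e ≠ 0) : sfst e ≠ ssnd e := by
  intro hd
  apply h
  refine if_neg fun he => G.not_isDiag_of_mem_edgeSet he ?_
  rw [← mk_sfst_ssnd e]; exact hd

lemma lap_offDiag (u v : V) (huv : u ≠ v) : lapMatrix' G w u v =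
    -∑ e, if s(sfst e, ssnd e) = s(u, v) then edgeWeight G w e else 0 := by
  simp only [mk_sfst_ssnd, Finset.sum_ite_eq', Finset.mem_univ, if_true]
  by_cases h : G.Adj u v <;> simp [lapMatrix', huv, edgeWeight, h]

/-- The block of the Laplacian on the inner vertices. -/
noncomputable def innerBlock (node : Fin n → V) : Matrix (InnerVx node) (InnerVx node) ℝ :=
  of fun u v => lapMatrix' G w u.val v.val

/-- The Laplacian quadratic form is the weighted sum of the squared differences along edges. -/
lemma energy (f : V → ℝ) : f ⬝ᵥ (lapMatrix' G w *ᵥ f) =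
    ∑ e, edgeWeight G w e * (f (sfst e) - f (ssnd e)) ^ 2 := by
  rw [laplacian_eq _ (lap_row_sum G w) sfst ssnd (edgeWeight G w) (edgeWeight_ne G w)
    (lap_offDiag G w)]
  set N := incidence ℝ (sfst (V := V)) ssnd with hN
  have hNf : ∀ e, (Nᵀ *ᵥ f) e = f (sfst e) - f (ssnd e) := by
    intro e
    simp [N, Matrix.mulVec, dotProduct, incidence, sub_mul, Finset.sum_sub_distrib]
  rw [← Matrix.mulVec_mulVec, ← Matrix.mulVec_mulVec, Matrix.dotProduct_mulVec,
    ← Matrix.mulVec_transpose]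
  simp only [dotProduct, Matrix.mulVec_diagonal, hNf]
  exact Finset.sum_congr rfl fun e _ => by ring

/-- The Dirichlet problem on the inner vertices is uniquely solvable. -/
lemma innerBlock_det_ne_zero (hG : G.Connected) (hw : ∀ e ∈ G.edgeSet, 0 < w e)
    (hn : 1 ≤ n) (node : Fin n → V) (hnode : Function.Injective node) :
    (innerBlock G w node).det ≠ 0 := by
  classical
  intro hdet
  obtain ⟨g, hg0, hg⟩ := Matrix.exists_mulVec_eq_zero_iff.2 hdet
  let e := vxEquiv node hnode
  let f : V → ℝ := fun v => Sum.elim (fun _ => 0) g (e.symm v)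
  have hfn : ∀ i, f (node i) = 0 := by
    intro i
    change Sum.elim (fun _ => 0) g (e.symm (e (Sum.inl i))) = 0
    rw [Equiv.symm_apply_apply]; rfl
  have hfi : ∀ u : InnerVx node, f u.val = g u := by
    intro u
    change Sum.elim (fun _ => 0) g (e.symm (e (Sum.inr u))) = _
    rw [Equiv.symm_apply_apply]; rfl
  have hsplit : ∀ h : V → ℝ, ∑ v, h v = ∑ i, h (node i) + ∑ u : InnerVx node, h u.val := by
    intro h
    rw [← Equiv.sum_comp e h, Fintype.sum_sum_type]
    rfl
  have hen : f ⬝ᵥ (lapMatrix' G w *ᵥ f) = 0 := by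
    rw [dotProduct, hsplit]
    have h1 : ∀ u : InnerVx node, (lapMatrix' G w *ᵥ f) u.val = 0 := by
      intro u
      rw [Matrix.mulVec, dotProduct, hsplit]
      simp only [hfn, hfi, mul_zero, Finset.sum_const_zero, zero_add]
      exact congrFun hg u
    simp [hfn, h1]
  rw [energy, Finset.sum_eq_zero_iff_of_nonneg] at hen
  · have hadj : ∀ u v, G.Adj u v → f u = f v := by
      intro u v huv
      have h1 := hen s(u, v) (Finset.mem_univ _)
      have hpos : 0 < edgeWeight G w s(u, v) := by
        rw [edgeWeight, if_pos (G.mem_edgeSet.2 huv)]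
        exact hw _ (G.mem_edgeSet.2 huv)
      have h2 : f (sfst s(u, v)) = f (ssnd s(u, v)) := by
        have := (mul_eq_zero.1 h1).resolve_left hpos.ne'
        exact sub_eq_zero.1 (pow_eq_zero_iff (two_ne_zero) |>.1 this)
      rcases Sym2.eq_iff.1 (mk_sfst_ssnd s(u, v)) with ⟨e1, e2⟩ | ⟨e1, e2⟩
      · rwa [e1, e2] at h2
      · rw [e1, e2] at h2; exact h2.symm
    have hconst : ∀ u v, f u = f v := by
      intro u v
      obtain ⟨p⟩ := hG.preconnected u v
      induction p with
      | nil => rfl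
      | cons h _ ih => exact (hadj _ _ h).trans ih
    apply hg0
    funext u
    rw [← hfi, hconst u.val (node ⟨0, hn⟩), hfn]; rfl
  · intro e _
    refine mul_nonneg ?_ (sq_nonneg _)
    rw [edgeWeight]
    split_ifs with h
    · exact (hw e h).le
    · exact le_rfl

/-- The minor of the Laplacian of the graph glued along the nodes is the product of the inner
minor and the corresponding minor of the response matrix. -/
lemma det_extLabel (node : Fin n → V) (hnode : Function.Injective node)
    (hK : (innerBlock G w node).det ≠ 0) {m : ℕ} (q : Fin n → Option (Fin m)) :
    (partMatrix ℝ (extLabel node hnode q) * lapMatrix' G w *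
      (partMatrix ℝ (extLabel node hnode q))ᵀ).det =
      (innerBlock G w node).det *
        (partMatrix ℝ q * responseMatrix G w node * (partMatrix ℝ q)ᵀ).det := by
  classical
  let e := vxEquiv node hnode
  let A : Matrix (Fin n) (Fin n) ℝ := of fun i j => lapMatrix' G w (node i) (node j)
  let B : Matrix (Fin n) (InnerVx node) ℝ := of fun i u => lapMatrix' G w (node i) u.val
  let Bt : Matrix (InnerVx node) (Fin n) ℝ := of fun u j => lapMatrix' G w u.val (node j)
  let K := innerBlock G w node
  let Q := partMatrix ℝ q
  have hP : (partMatrix ℝ (extLabel node hnode q)).submatrix id e = fromBlocks Q 0 0 1 := by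
    ext (c | u) (i | v)
    · have := extLabel_equiv node hnode q (Sum.inl i)
      simp only [Matrix.submatrix_apply, id, partMatrix, Matrix.of_apply, e, this, Q,
        Matrix.fromBlocks_apply₁₁, Sum.elim_inl]
      cases q i <;> simp
    · have := extLabel_equiv node hnode q (Sum.inr v)
      simp [Matrix.submatrix_apply, partMatrix, e, this]
    · have := extLabel_equiv node hnode q (Sum.inl i)
      simp only [Matrix.submatrix_apply, id, partMatrix, Matrix.of_apply, e, this,
        Matrix.fromBlocks_apply₂₁, Sum.elim_inl]
      cases q i <;> simp
    · have := extLabel_equiv node hnode q (Sum.inr v)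
      simp [Matrix.submatrix_apply, partMatrix, e, this, Matrix.one_apply, eq_comm]
  have hM : (lapMatrix' G w).submatrix e e = fromBlocks A B Bt K := by
    ext (c | u) (i | v) <;> rfl
  have hprod : partMatrix ℝ (extLabel node hnode q) * lapMatrix' G w *
      (partMatrix ℝ (extLabel node hnode q))ᵀ =
      fromBlocks (Q * A * Qᵀ) (Q * B) (Bt * Qᵀ) K := by
    let Q₁ : Matrix (Fin m ⊕ InnerVx node) (Fin n ⊕ InnerVx node) ℝ := fromBlocks Q 0 0 1
    have h1 : Q₁ * fromBlocks A B Bt K * Q₁ᵀ =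
        fromBlocks (Q * A * Qᵀ) (Q * B) (Bt * Qᵀ) K := by
      simp [Q₁, Matrix.fromBlocks_transpose, Matrix.fromBlocks_multiply]
    rw [← h1, show Q₁ = _ from hP.symm, ← hM, Matrix.transpose_submatrix, Matrix.submatrix_mul_equiv,
      Matrix.submatrix_mul_equiv]
    rfl
  have : Invertible K := Matrix.invertibleOfIsUnitDet K (Ne.isUnit hK)
  rw [hprod, Matrix.det_fromBlocks₂₂, Matrix.invOf_eq_nonsing_inv]
  congr 2
  have hR : responseMatrix G w node = A - B * K⁻¹ * Bt := rfl
  rw [hR, Matrix.mul_sub, Matrix.sub_mul]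
  simp only [Matrix.mul_assoc]
  rfl

lemma response_symm (node : Fin n → V) (i j : Fin n) :
    responseMatrix G w node i j = responseMatrix G w node j i := by
  let A : Matrix (Fin n) (Fin n) ℝ := of fun i j => lapMatrix' G w (node i) (node j)
  let B : Matrix (Fin n) (InnerVx node) ℝ := of fun i u => lapMatrix' G w (node i) u.val
  let Bt : Matrix (InnerVx node) (Fin n) ℝ := of fun u j => lapMatrix' G w u.val (node j)
  let K := innerBlock G w node
  have hR : responseMatrix G w node = A - B * K⁻¹ * Bt := rfl
  have hA : Aᵀ = A := by ext i j; exact lap_symm G w _ _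
  have hB : Bᵀ = Bt := by ext i j; exact lap_symm G w _ _
  have hBt : Btᵀ = B := by ext i j; exact lap_symm G w _ _
  have hKt : Kᵀ = K := by ext i j; exact lap_symm G w _ _
  have h : (responseMatrix G w node)ᵀ = responseMatrix G w node := by
    rw [hR, Matrix.transpose_sub, Matrix.transpose_mul, Matrix.transpose_mul,
      Matrix.transpose_nonsing_inv, hA, hB, hBt, hKt, Matrix.mul_assoc]
  exact congrFun (congrFun h j) i

lemma response_row_sum (node : Fin n → V) (hnode : Function.Injective node)
    (hK : (innerBlock G w node).det ≠ 0) (i : Fin n) :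
    ∑ j, responseMatrix G w node i j = 0 := by
  let A : Matrix (Fin n) (Fin n) ℝ := of fun i j => lapMatrix' G w (node i) (node j)
  let B : Matrix (Fin n) (InnerVx node) ℝ := of fun i u => lapMatrix' G w (node i) u.val
  let Bt : Matrix (InnerVx node) (Fin n) ℝ := of fun u j => lapMatrix' G w u.val (node j)
  let K := innerBlock G w node
  have hR : responseMatrix G w node = A - B * K⁻¹ * Bt := rfl
  have hsplit : ∀ v, ∑ j, lapMatrix' G w v (node j) +
      ∑ u : InnerVx node, lapMatrix' G w v u.val = 0 := by
    intro v
    rw [← lap_row_sum G w v, ← Equiv.sum_comp (vxEquiv node hnode), Fintype.sum_sum_type]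
    rfl
  have h1 : A *ᵥ 1 + B *ᵥ 1 = 0 := by
    funext i
    have := hsplit (node i)
    simpa [Matrix.mulVec, dotProduct, A, B] using this
  have h2 : Bt *ᵥ 1 = -(K *ᵥ 1) := by
    rw [eq_neg_iff_add_eq_zero]
    funext u
    have := hsplit u.val
    simpa [Matrix.mulVec, dotProduct, Bt, K, innerBlock] using this
  have h3 : responseMatrix G w node *ᵥ 1 = 0 := by
    rw [hR, Matrix.sub_mulVec, ← Matrix.mulVec_mulVec, h2, Matrix.mulVec_neg,
      Matrix.mulVec_mulVec, Matrix.mul_assoc, Matrix.nonsing_inv_mul K (Ne.isUnit hK),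
      Matrix.mul_one, sub_neg_eq_add, h1]
  have := congrFun h3 i
  simpa [Matrix.mulVec, dotProduct] using this

/-- The grove sums, paired with `ρ`, give the minor of the Laplacian of the graph glued along the
parts of `ρ`. -/
lemma sum_bform_Zgrove (node : Fin n → V) (hnode : Function.Injective node) {m : ℕ}
    (q : Fin n → Option (Fin m)) (hq : Function.Surjective q) (ρ : Setoid (Fin n))
    (hker : Setoid.ker q = ρ) :
    ∑ τ, Zgrove G w node τ * (bform ρ τ : ℝ) =
      (partMatrix ℝ (extLabel node hnode q) * lapMatrix' G w *
        (partMatrix ℝ (extLabel node hnode q))ᵀ).det := by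
  classical
  rw [matrix_tree _ (lap_row_sum G w) sfst ssnd (edgeWeight G w) (edgeWeight_ne G w)
    (lap_offDiag G w) _ (extLabel_surjective node hnode q hq)]
  unfold Zgrove
  simp only [Finset.sum_filter, Finset.sum_mul]
  rw [Finset.sum_comm]
  refine Finset.sum_congr rfl fun F _ => ?_
  by_cases hFG : (F : Set (Sym2 V)) ⊆ G.edgeSet
  · have hiff := grove_iff node hnode q G hq ρ hker F hFG
    have hprod : ∏ e ∈ F, edgeWeight G w e = ∏ e ∈ F, w e :=
      Finset.prod_congr rfl fun e he => if_pos (hFG he)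
    rw [Finset.sum_eq_single (connSetoid node F), hprod]
    · by_cases hg : IsGrove G node F
      · rw [if_pos ⟨hg, rfl⟩]
        by_cases hb : bform ρ (connSetoid node F) = 1
        · rw [if_pos (hiff.1 ⟨hg, hb⟩), hb, Int.cast_one, mul_one]
        · have hb0 : bform ρ (connSetoid node F) = 0 := by
            unfold bform at hb ⊢
            split_ifs at hb ⊢ <;> simp_all
          rw [if_neg fun h => hb (hiff.2 h).2, hb0, Int.cast_zero, mul_zero]
      · rw [if_neg fun h => hg h.1, if_neg fun h => hg (hiff.2 h).1, zero_mul]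
    · intro τ _ hτ
      rw [if_neg fun h => hτ h.2.symm, zero_mul]
    · simp
  · have hprod : ∏ e ∈ F, edgeWeight G w e = 0 := by
      obtain ⟨e, he, he'⟩ := Set.not_subset.1 hFG
      exact Finset.prod_eq_zero (Finset.mem_coe.1 he) (if_neg he')
    rw [hprod, ite_self]
    exact Finset.sum_eq_zero fun τ _ => by rw [if_neg fun h => hFG h.1.1, zero_mul]

open Classical in
lemma bform_top [Nonempty (Fin n)] (τ : Setoid (Fin n)) :
    bform ⊤ τ = if τ = ⊥ then 1 else 0 := by
  have hbot : Nat.card (Quotient (⊥ : Setoid (Fin n))) = n := by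
    have h : Nat.card (Fin n) = Nat.card (Quotient (⊥ : Setoid (Fin n))) :=
      Nat.card_eq_of_bijective (Quotient.mk _)
        ⟨fun i j h => Quotient.exact h, Quotient.mk_surjective⟩
    rw [← h, Nat.card_eq_fintype_card, Fintype.card_fin]
  unfold bform
  rw [card_quotient_top, top_sup_eq]
  by_cases hτ : τ = ⊥
  · subst hτ
    rw [if_pos rfl, if_pos ⟨by rw [hbot, add_comm], rfl⟩]
  · rw [if_neg hτ, if_neg]
    rintro ⟨h, -⟩
    have := card_quotient_lt_of_lt (bot_lt_iff_ne_bot.2 hτ)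
    omega

/-- Grove sums and `Z(uncrossing)` times the forest polynomials of the response matrix have the
same pairing with every partition. -/
lemma sum_Zgrove_eq (hG : G.Connected) (hw : ∀ e ∈ G.edgeSet, 0 < w e)
    (hn : 1 ≤ n) (node : Fin n → V) (hnode : Function.Injective node) (ρ : Setoid (Fin n)) :
    ∑ τ, Zgrove G w node τ * (bform ρ τ : ℝ) = Zgrove G w node ⊥ *
      ∑ τ, forestPoly (fun i j => -(responseMatrix G w node i j)) τ * (bform ρ τ : ℝ) := by
  classical
  let i₀ : Fin n := ⟨0, hn⟩
  have hne : Nonempty (Fin n) := ⟨i₀⟩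
  have hK := innerBlock_det_ne_zero G w hG hw hn node hnode
  have hbot : Zgrove G w node ⊥ = (innerBlock G w node).det := by
    obtain ⟨q, hq, hker, -⟩ := exists_labelling (⊤ : Setoid (Fin n)) i₀ (k := 0) card_quotient_top
    have h := sum_bform_Zgrove G w node hnode q hq ⊤ hker
    rw [det_extLabel G w node hnode hK, Matrix.det_fin_zero, mul_one] at h
    rw [← h]
    simp [bform_top]
  obtain ⟨k, hk⟩ : ∃ k, Nat.card (Quotient ρ) = k + 1 := by
    have : Nonempty (Quotient ρ) := ⟨Quotient.mk _ i₀⟩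
    exact ⟨Nat.card (Quotient ρ) - 1, by have := Nat.card_pos (α := Quotient ρ); omega⟩
  obtain ⟨q, hq, hker, -⟩ := exists_labelling ρ i₀ hk
  rw [sum_bform_Zgrove G w node hnode q hq ρ hker, det_extLabel G w node hnode hK, hbot,
    ← sum_bform_forestPoly ρ q hq hker _ (response_symm G w node)
      (response_row_sum G w node hnode hK)]
  congr 1
  exact Finset.sum_congr rfl fun τ _ => by rw [bform_comm, mul_comm]

end GroveMinor

/-
STATEMENT 9: Let n ≥ 1 and suppose that for each partition τ of {1,…,n} we have integers
P_{σ,τ} indexed by the noncrossing partitions σ, with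
⟨ρ,τ⟩ₜ = Σ_{σ noncrossing} P_{σ,τ}·⟨ρ,σ⟩ₜ for every partition ρ.  Let G be a finite
connected graph with positive edge weights and n distinct nodes with Z(τ) = 0 for every
partition τ that is not noncrossing.  Then for every noncrossing partition σ:
  Z(σ) = Z(uncrossing) · Σ_τ P_{σ,τ} · L_τ,
the sum over all partitions τ, where L_{i,j} = −Λ_{i,j} and L_τ is the forest polynomial.
-/
open Classical in
theorem planar_Z_eq_uncrossing_mul_P_polynomial
    {V : Type} [Fintype V] [DecidableEq V] (G : SimpleGraph V) (hG : G.Connected)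
    (w : Sym2 V → ℝ) (hw : ∀ e ∈ G.edgeSet, 0 < w e)
    (n : ℕ) (hn : 1 ≤ n) (node : Fin n → V) (hnode : Function.Injective node)
    (P : Setoid (Fin n) → Setoid (Fin n) → ℤ)
    (hP : ∀ τ ρ : Setoid (Fin n),
      bform ρ τ =
        ∑ σ ∈ Finset.univ.filter (fun σ : Setoid (Fin n) => IsNoncrossing σ),
          P σ τ * bform ρ σ)
    (hplanar : ∀ τ : Setoid (Fin n), ¬ IsNoncrossing τ → Zgrove G w node τ = 0) :
    ∀ σ : Setoid (Fin n), IsNoncrossing σ →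
      Zgrove G w node σ =
        Zgrove G w node ⊥ *
          ∑ τ : Setoid (Fin n),
            (P σ τ : ℝ) * forestPoly (fun i j => -(responseMatrix G w node i j)) τ := by
  intro σ₀ hσ₀
  set L : Setoid (Fin n) → ℝ :=
    forestPoly (fun i j => -(responseMatrix G w node i j)) with hL
  -- the defect of the claimed identity, extended by zero to the crossing partitions
  let D : Setoid (Fin n) → ℝ := fun σ =>
    if IsNoncrossing σ then Zgrove G w node σ - Zgrove G w node ⊥ * ∑ τ, (P σ τ : ℝ) * L τ else 0
  have hD : ∀ ρ, ∑ σ, D σ * (bform ρ σ : ℝ) = 0 := by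
    intro ρ
    have h1 : ∑ σ, D σ * (bform ρ σ : ℝ) =
        ∑ σ, Zgrove G w node σ * (bform ρ σ : ℝ) -
          Zgrove G w node ⊥ * ∑ τ, L τ *
            ∑ σ ∈ Finset.univ.filter (fun σ : Setoid (Fin n) => IsNoncrossing σ),
              (P σ τ : ℝ) * (bform ρ σ : ℝ) := by
      have h2 : ∑ τ, L τ * ∑ σ ∈ Finset.univ.filter (fun σ : Setoid (Fin n) => IsNoncrossing σ),
          (P σ τ : ℝ) * (bform ρ σ : ℝ) =
          ∑ σ, if IsNoncrossing σ then (∑ τ, (P σ τ : ℝ) * L τ) * (bform ρ σ : ℝ) else 0 := by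
        rw [← Finset.sum_filter]
        simp only [Finset.mul_sum, Finset.sum_mul]
        rw [Finset.sum_comm]
        exact Finset.sum_congr rfl fun σ _ => Finset.sum_congr rfl fun τ _ => by ring
      rw [h2, Finset.mul_sum, ← Finset.sum_sub_distrib]
      refine Finset.sum_congr rfl fun σ _ => ?_
      by_cases hσ : IsNoncrossing σ
      · simp only [D, if_pos hσ]; ring
      · simp only [D, if_neg hσ, hplanar σ hσ]; ring
    have h3 : ∀ τ, ∑ σ ∈ Finset.univ.filter (fun σ : Setoid (Fin n) => IsNoncrossing σ),
        (P σ τ : ℝ) * (bform ρ σ : ℝ) = (bform ρ τ : ℝ) := by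
      intro τ
      rw [hP τ ρ]
      push_cast
      rfl
    simp only [h1, h3]
    rw [sum_Zgrove_eq G w hG hw hn node hnode ρ, sub_self]
  have hz : ∀ x : Fin n, x ≤ ⟨n - 1, by omega⟩ := fun x => by
    rw [Fin.le_def]; have := x.2; simp only; omega
  have h0 := eq_zero_of_bform _ hz D
    (fun σ h => by by_contra hc; exact h (if_neg hc)) hD σ₀
  simp only [D, if_pos hσ₀] at h0
  exact sub_eq_zero.1 h0
end

section
/- Let n ≥ 1 and let q be a real number. Then the following are equivalent: (i) for every permutation ρ of {1,…,n}, Σ_{σ ∈ S_n} sign(σ) · q^{c(ρ⁻¹σ)} = 0, the sum over all permutations σ of {1,…,n}; (ii) q is an integer with 0 ≤ q < n. -/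
/-!
Multiplicativity of the sign turns the sum for `ρ` into `sign ρ` times the value at `q` of
`P = ∑ τ, sign τ • X ^ c(τ)`, so the condition for all `ρ` says that `q` is a root of `P`.

For a natural number `m`, the power `m ^ c(τ)` counts the colourings `f : Fin n → Fin m` that are
invariant under `τ` (`card_invariant_colourings`). Exchanging sums, `P(m)` is the sum over `f` of
the signs of the permutations that fix `f`. If `m < n`, every `f` takes the same value at
two points `a ≠ b`, and `τ ↦ (a b) τ` cancels these signs in pairs (`sum_sign_invariant_eq_zero`).
So `0, …, n - 1` are roots of `P`. Only the identity has `n` cycles, so `P` is monic of degree `n`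
and has no other roots.
-/

/-- The partition of α into the orbits (cycles) of the permutation π. -/
def cycleSetoid {α : Type} (π : Equiv.Perm α) : Setoid α :=
  ⟨π.SameCycle,
   ⟨fun x => Equiv.Perm.SameCycle.refl π x, Equiv.Perm.SameCycle.symm,
    Equiv.Perm.SameCycle.trans⟩⟩

/-- c(π): the number of cycles of π, counting fixed points as cycles (the number of
orbits of π). -/
noncomputable def cycleCount {α : Type} (π : Equiv.Perm α) : ℕ :=
  Nat.card (Quotient (cycleSetoid π))

open Polynomial in
/-- The signed cycle-counting polynomial `∑ τ, sign τ • X ^ c(τ)`. -/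
noncomputable def signedCyclePoly (n : ℕ) : ℝ[X] :=
  ∑ τ : Equiv.Perm (Fin n), C ((Equiv.Perm.sign τ : ℤ) : ℝ) * X ^ cycleCount τ

lemma eval_signedCyclePoly (n : ℕ) (q : ℝ) :
    (signedCyclePoly n).eval q =
      ∑ τ : Equiv.Perm (Fin n), ((Equiv.Perm.sign τ : ℤ) : ℝ) * q ^ cycleCount τ := by
  simp [signedCyclePoly, Polynomial.eval_finsetSum]

lemma comp_sameCycle {α β : Type} {τ : Equiv.Perm α} {f : α → β} (h : ∀ x, f (τ x) = f x)
    {x y : α} (hxy : τ.SameCycle x y) : f x = f y := by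
  obtain ⟨i, rfl⟩ := hxy
  induction i using Int.induction_on with
  | zero => simp
  | succ k ih => rw [ih, add_comm, zpow_add, zpow_one, Equiv.Perm.mul_apply, h]
  | pred k ih =>
    rw [ih, ← h ((τ ^ (-(k : ℤ) - 1)) x), ← Equiv.Perm.mul_apply, ← zpow_one_add]
    congr 3
    ring

/-- Colourings invariant under `τ` are the functions on the set of cycles of `τ`. -/
def invariantColouringsEquiv {α β : Type} (τ : Equiv.Perm α) :
    {f : α → β // ∀ x, f (τ x) = f x} ≃ (Quotient (cycleSetoid τ) → β) where
  toFun f := Quotient.lift f.1 fun _ _ h => comp_sameCycle f.2 h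
  invFun g := ⟨fun x => g (Quotient.mk _ x), fun x => by
    exact congrArg g (Quotient.sound (s := cycleSetoid τ)
      (show τ.SameCycle (τ x) x from (Equiv.Perm.SameCycle.refl τ x).apply_left))⟩
  left_inv f := rfl
  right_inv g := by
    funext x
    induction x using Quotient.inductionOn
    rfl

lemma card_invariant_colourings {n : ℕ} (m : ℕ) (τ : Equiv.Perm (Fin n)) :
    (Finset.univ.filter fun f : Fin n → Fin m => ∀ x, f (τ x) = f x).card =
      m ^ cycleCount τ := by
  rw [← Fintype.card_subtype, ← Nat.card_eq_fintype_card,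
    Nat.card_congr (invariantColouringsEquiv τ), Nat.card_fun, Nat.card_fin, cycleCount]

/-- Left multiplication by a transposition `(a b)` with `f a = f b` is a sign-reversing
bijection of the stabilizer of `f`. -/
lemma sum_sign_invariant_eq_zero {n m : ℕ} (hm : m < n) (f : Fin n → Fin m) :
    ∑ τ : Equiv.Perm (Fin n),
      (if ∀ x, f (τ x) = f x then ((Equiv.Perm.sign τ : ℤ) : ℝ) else 0) = 0 := by
  obtain ⟨a, b, hab, hf⟩ := Fintype.exists_ne_map_eq_of_card_lt f (by simpa using hm)
  have hs : ∀ x, f (Equiv.swap a b x) = f x := by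
    intro x
    rw [Equiv.swap_apply_def]
    split_ifs with h1 h2
    · rw [h1, hf]
    · rw [h2, hf]
    · rfl
  have h := Equiv.sum_comp (Equiv.mulLeft (Equiv.swap a b)) fun τ : Equiv.Perm (Fin n) =>
    (if ∀ x, f (τ x) = f x then ((Equiv.Perm.sign τ : ℤ) : ℝ) else 0)
  have h' : ∀ τ : Equiv.Perm (Fin n),
      (if ∀ x, f ((Equiv.mulLeft (Equiv.swap a b) τ) x) = f x then
        ((Equiv.Perm.sign (Equiv.mulLeft (Equiv.swap a b) τ) : ℤ) : ℝ) else 0) =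
      -(if ∀ x, f (τ x) = f x then ((Equiv.Perm.sign τ : ℤ) : ℝ) else 0) := by
    intro τ
    simp only [Equiv.coe_mulLeft, Equiv.Perm.mul_apply, hs, Equiv.Perm.sign_mul,
      Equiv.Perm.sign_swap hab]
    split_ifs <;> simp
  rw [Finset.sum_congr rfl fun τ _ => h' τ, Finset.sum_neg_distrib] at h
  linarith

lemma eval_signedCyclePoly_natCast {n m : ℕ} (hm : m < n) :
    (signedCyclePoly n).eval (m : ℝ) = 0 := by
  rw [eval_signedCyclePoly]
  calc _ = ∑ τ : Equiv.Perm (Fin n), ∑ f : Fin n → Fin m,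
        (if ∀ x, f (τ x) = f x then ((Equiv.Perm.sign τ : ℤ) : ℝ) else 0) := by
        refine Finset.sum_congr rfl fun τ _ => ?_
        rw [← Finset.sum_filter, Finset.sum_const, card_invariant_colourings, nsmul_eq_mul,
          Nat.cast_pow, mul_comm]
    _ = 0 := by
        rw [Finset.sum_comm]
        exact Finset.sum_eq_zero fun f _ => sum_sign_invariant_eq_zero hm f

lemma cycleCount_one (n : ℕ) : cycleCount (1 : Equiv.Perm (Fin n)) = n := by
  have hb : Function.Bijective
      (Quotient.mk (cycleSetoid (1 : Equiv.Perm (Fin n)))) :=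
    ⟨fun x y h => Equiv.Perm.sameCycle_one.1 (Quotient.exact h), Quotient.mk_surjective⟩
  rw [cycleCount, ← Nat.card_eq_of_bijective _ hb, Nat.card_fin]

lemma cycleCount_lt {n : ℕ} {τ : Equiv.Perm (Fin n)} (h : τ ≠ 1) : cycleCount τ < n := by
  have hni : ¬ Function.Injective (Quotient.mk (cycleSetoid τ)) := by
    intro hi
    apply h
    ext x
    rw [hi (Quotient.sound (s := cycleSetoid τ)
      (show τ.SameCycle (τ x) x from (Equiv.Perm.SameCycle.refl τ x).apply_left))]
    rfl
  have := Fintype.ofFinite (Quotient (cycleSetoid τ))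
  have hlt := Fintype.card_lt_of_surjective_not_injective _ Quotient.mk_surjective hni
  rwa [Fintype.card_fin, ← Nat.card_eq_fintype_card] at hlt

open Polynomial in
/-- The identity contributes `X ^ n` and every other permutation a term of lower degree. -/
lemma signedCyclePoly_monic_natDegree (n : ℕ) :
    (signedCyclePoly n).Monic ∧ (signedCyclePoly n).natDegree = n := by
  have hsplit : signedCyclePoly n = X ^ n + ∑ τ ∈ Finset.univ.erase (1 : Equiv.Perm (Fin n)),
      C ((Equiv.Perm.sign τ : ℤ) : ℝ) * X ^ cycleCount τ := by
    rw [signedCyclePoly, ← Finset.add_sum_erase _ _ (Finset.mem_univ 1), cycleCount_one]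
    simp
  have hdeg : (∑ τ ∈ Finset.univ.erase (1 : Equiv.Perm (Fin n)),
      C ((Equiv.Perm.sign τ : ℤ) : ℝ) * X ^ cycleCount τ).degree < (n : WithBot ℕ) := by
    rw [← mem_degreeLT]
    refine Submodule.sum_mem _ fun τ hτ => mem_degreeLT.2 ?_
    exact (degree_C_mul_X_pow_le _ _).trans_lt
      (by exact_mod_cast cycleCount_lt (Finset.ne_of_mem_erase hτ))
  rw [hsplit]
  refine ⟨monic_X_pow_add hdeg, natDegree_eq_of_degree_eq_some ?_⟩
  rw [degree_add_eq_left_of_degree_lt (by simpa using hdeg), degree_X_pow]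

lemma eval_signedCyclePoly_eq_zero_iff (n : ℕ) (q : ℝ) :
    (signedCyclePoly n).eval q = 0 ↔ ∃ m : ℕ, m < n ∧ q = m := by
  refine ⟨fun hq => ?_, ?_⟩
  · by_contra! hne
    obtain ⟨hmonic, hdeg⟩ := signedCyclePoly_monic_natDegree n
    -- `q` together with `0, …, n - 1` would be `n + 1` roots.
    have hnot : q ∉ (Finset.range n).image (fun m : ℕ => (m : ℝ)) := by
      simp only [Finset.mem_image, Finset.mem_range, not_exists, not_and]
      exact fun m hm h => hne m hm h.symm
    have hcard : (insert q ((Finset.range n).image (fun m : ℕ => (m : ℝ)))).card = n + 1 := by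
      rw [Finset.card_insert_of_notMem hnot,
        Finset.card_image_of_injective _ Nat.cast_injective, Finset.card_range]
    refine hmonic.ne_zero (Polynomial.eq_zero_of_natDegree_lt_card_of_eval_eq_zero'
      _ (insert q ((Finset.range n).image (fun m : ℕ => (m : ℝ)))) ?_ (by omega))
    intro x hx
    rcases Finset.mem_insert.1 hx with rfl | hx
    · exact hq
    · obtain ⟨m, hm, rfl⟩ := Finset.mem_image.1 hx
      exact eval_signedCyclePoly_natCast (Finset.mem_range.1 hm)
  · rintro ⟨m, hm, rfl⟩
    exact eval_signedCyclePoly_natCast hm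

lemma sum_eq_sign_mul_eval (n : ℕ) (q : ℝ) (ρ : Equiv.Perm (Fin n)) :
    ∑ σ : Equiv.Perm (Fin n), ((Equiv.Perm.sign σ : ℤ) : ℝ) * q ^ cycleCount (ρ⁻¹ * σ) =
      ((Equiv.Perm.sign ρ : ℤ) : ℝ) * (signedCyclePoly n).eval q := by
  rw [eval_signedCyclePoly, Finset.mul_sum, ← Equiv.sum_comp (Equiv.mulLeft ρ)]
  refine Finset.sum_congr rfl fun τ _ => ?_
  simp [mul_assoc]

theorem sign_q_cycle_sum_vanishes_iff (n : ℕ) (hn : 1 ≤ n) (q : ℝ) :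
    (∀ ρ : Equiv.Perm (Fin n),
        ∑ σ : Equiv.Perm (Fin n),
          ((Equiv.Perm.sign σ : ℤ) : ℝ) * q ^ cycleCount (ρ⁻¹ * σ) = 0) ↔
      (∃ m : ℤ, q = (m : ℝ) ∧ 0 ≤ m ∧ m < (n : ℤ)) := by
  simp only [sum_eq_sign_mul_eval]
  constructor
  · intro h
    have h1 := h 1
    simp only [Equiv.Perm.sign_one, Units.val_one, Int.cast_one, one_mul] at h1
    obtain ⟨m, hm, rfl⟩ := (eval_signedCyclePoly_eq_zero_iff n q).1 h1
    exact ⟨m, by simp, by simp, by exact_mod_cast hm⟩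
  · rintro ⟨m, rfl, h0, hm⟩ ρ
    lift m to ℕ using h0
    rw [(eval_signedCyclePoly_eq_zero_iff n _).2 ⟨m, by exact_mod_cast hm, by simp⟩, mul_zero]
end

section
/- Let n ≥ 2, let q be a real number, let τ be a permutation of {1,…,n−1}, and let (α_σ) be a family of real numbers indexed by the permutations σ of {1,…,n−1} such that for every permutation ρ of {1,…,n−1}: q^{c(ρ⁻¹τ)} = Σ_σ α_σ · q^{c(ρ⁻¹σ)}. For a permutation π of {1,…,n−1}, let π̂ denote its extension to a permutation of {1,…,n} fixing n. Then for every permutation ρ of {1,…,n}: q^{c(ρ⁻¹τ̂)} = Σ_σ α_σ · q^{c(ρ⁻¹σ̂)}. -/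
/-- The extension of a permutation of {1,…,m} to a permutation of {1,…,m+1} fixing the
last element (extension by the identity along the embedding Fin m ↪ Fin (m+1)). -/
noncomputable def extendPerm {m : ℕ} (π : Equiv.Perm (Fin m)) : Equiv.Perm (Fin (m + 1)) :=
  π.viaFintypeEmbedding Fin.castSuccEmb

/-- `g'` is the first-return map of `g` to `Fin m ⊆ Fin (m + 1)`: it is obtained from `g` by
deleting the last point from its cycle. -/
def IsFirstReturn {m : ℕ} (g : Equiv.Perm (Fin (m + 1))) (g' : Equiv.Perm (Fin m)) : Prop :=
  ∀ x : Fin m, (g' x).castSucc =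
    if g x.castSucc = Fin.last m then g (Fin.last m) else g x.castSucc

lemma exists_isFirstReturn {m : ℕ} (g : Equiv.Perm (Fin (m + 1))) :
    ∃ g' : Equiv.Perm (Fin m), IsFirstReturn g g' := by
  have hx : ∀ x : Fin m, ∃ y : Fin m, y.castSucc =
      if g x.castSucc = Fin.last m then g (Fin.last m) else g x.castSucc := by
    intro x
    apply Fin.exists_castSucc_eq.2
    split_ifs with h1
    · intro h2
      exact (Fin.castSucc_lt_last x).ne (g.injective (h1.trans h2.symm))
    · exact h1
  choose f hf using hx
  have hinj : Function.Injective f := by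
    intro x y hxy
    have h1 := hf x
    rw [hxy, hf y] at h1
    have hlx := (Fin.castSucc_lt_last x).ne
    have hly := (Fin.castSucc_lt_last y).ne
    apply Fin.castSucc_injective
    apply g.injective
    split_ifs at h1 with h2 h3 h3
    · rw [h2, h3]
    · exact absurd (g.injective h1).symm hlx
    · exact absurd (g.injective h1) hly
    · exact h1.symm
  exact ⟨Equiv.ofBijective f (Finite.injective_iff_bijective.1 hinj), hf⟩

lemma extendPerm_castSucc {m : ℕ} (σ : Equiv.Perm (Fin m)) (x : Fin m) :
    extendPerm σ x.castSucc = (σ x).castSucc :=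
  Equiv.Perm.viaFintypeEmbedding_apply_image σ Fin.castSuccEmb x

lemma extendPerm_last {m : ℕ} (σ : Equiv.Perm (Fin m)) :
    extendPerm σ (Fin.last m) = Fin.last m := by
  apply Equiv.Perm.viaFintypeEmbedding_apply_notMem_range
  rintro ⟨x, hx⟩
  exact (Fin.castSucc_lt_last x).ne hx

lemma IsFirstReturn.mul_extendPerm {m : ℕ} {g : Equiv.Perm (Fin (m + 1))}
    {g' : Equiv.Perm (Fin m)} (h : IsFirstReturn g g') (σ : Equiv.Perm (Fin m)) :
    IsFirstReturn (g * extendPerm σ) (g' * σ) := by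
  intro x
  simpa only [Equiv.Perm.mul_apply, extendPerm_castSucc, extendPerm_last] using h (σ x)

lemma IsFirstReturn.sameCycle_castSucc {m : ℕ} {g : Equiv.Perm (Fin (m + 1))}
    {g' : Equiv.Perm (Fin m)} (h : IsFirstReturn g g') {x y : Fin m}
    (hxy : g'.SameCycle x y) : g.SameCycle x.castSucc y.castSucc := by
  obtain ⟨n, rfl⟩ := hxy.exists_nat_pow_eq
  clear hxy
  induction n with
  | zero => exact Equiv.Perm.SameCycle.refl _ _
  | succ n ih =>
    refine ih.trans ?_
    rw [pow_succ', Equiv.Perm.mul_apply, h]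
    split_ifs with h1
    · rw [← h1]
      exact ⟨2, rfl⟩
    · exact ⟨1, rfl⟩

/-- Everything on the `g`-orbit of `x` is either on the `g'`-orbit of `x`, or is the last point,
in which case its successor is on the `g'`-orbit of `x`. -/
lemma IsFirstReturn.pow_apply {m : ℕ} {g : Equiv.Perm (Fin (m + 1))}
    {g' : Equiv.Perm (Fin m)} (h : IsFirstReturn g g') (x : Fin m) (n : ℕ) :
    (∃ y : Fin m, (g ^ n) x.castSucc = y.castSucc ∧ g'.SameCycle x y) ∨
      ((g ^ n) x.castSucc = Fin.last m ∧
        ∃ y : Fin m, g (Fin.last m) = y.castSucc ∧ g'.SameCycle x y) := by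
  induction n with
  | zero => exact Or.inl ⟨x, rfl, Equiv.Perm.SameCycle.refl _ _⟩
  | succ n ih =>
    rw [pow_succ', Equiv.Perm.mul_apply]
    rcases ih with ⟨y, hy, hxy⟩ | ⟨hl, y, hy, hxy⟩
    · have hs : g'.SameCycle x (g' y) := Equiv.Perm.sameCycle_apply_right.2 hxy
      have h1 := h y
      rw [hy]
      split_ifs at h1 with h2
      · exact Or.inr ⟨h2, g' y, h1.symm, hs⟩
      · exact Or.inl ⟨g' y, h1.symm, hs⟩
    · exact Or.inl ⟨y, by rw [hl, hy], hxy⟩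

lemma IsFirstReturn.sameCycle_iff {m : ℕ} {g : Equiv.Perm (Fin (m + 1))}
    {g' : Equiv.Perm (Fin m)} (h : IsFirstReturn g g') {x y : Fin m} :
    g.SameCycle x.castSucc y.castSucc ↔ g'.SameCycle x y := by
  refine ⟨fun hxy => ?_, h.sameCycle_castSucc⟩
  obtain ⟨n, hn⟩ := hxy.exists_nat_pow_eq
  rcases h.pow_apply x n with ⟨z, hz, hxz⟩ | ⟨hl, -⟩
  · rwa [Fin.castSucc_injective m (hn.symm.trans hz)]
  · exact absurd (hn.symm.trans hl) (Fin.castSucc_lt_last y).ne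

lemma cycleCount_of_isFirstReturn {m : ℕ} {g : Equiv.Perm (Fin (m + 1))}
    {g' : Equiv.Perm (Fin m)} (h : IsFirstReturn g g') :
    cycleCount g = cycleCount g' + if g (Fin.last m) = Fin.last m then 1 else 0 := by
  let F : Quotient (cycleSetoid g') → Quotient (cycleSetoid g) :=
    Quotient.map Fin.castSucc (fun _ _ hxy => h.sameCycle_castSucc hxy)
  have hF : Function.Injective F := by
    rintro ⟨x⟩ ⟨y⟩ hxy
    exact Quotient.sound (h.sameCycle_iff.1 (Quotient.exact hxy))
  unfold cycleCount
  split_ifs with hl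
  · -- The fixed last point forms a cycle of its own, in addition to those of `g'`.
    rw [← Finite.card_option]
    symm
    have hne : ∀ x : Fin m, ¬ g.SameCycle (Fin.last m) x.castSucc := by
      intro x hx
      exact (Fin.castSucc_lt_last x).ne (hx.eq_of_left hl).symm
    refine Nat.card_eq_of_bijective
      (fun o : Option (Quotient (cycleSetoid g')) =>
        o.elim (Quotient.mk (cycleSetoid g) (Fin.last m)) F) ⟨?_, ?_⟩
    · rintro (_ | ⟨⟨x⟩⟩) (_ | ⟨⟨y⟩⟩) hxy
      · rfl
      · exact absurd (Quotient.exact hxy) (hne y)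
      · exact absurd (Quotient.exact hxy.symm) (hne x)
      · exact congrArg some (hF hxy)
    · rintro ⟨z⟩
      induction z using Fin.lastCases with
      | last => exact ⟨none, rfl⟩
      | cast x => exact ⟨some (Quotient.mk _ x), rfl⟩
  · rw [add_zero]
    symm
    refine Nat.card_eq_of_bijective F ⟨hF, ?_⟩
    rintro ⟨z⟩
    induction z using Fin.lastCases with
    | last =>
      obtain ⟨y, hy⟩ := Fin.exists_castSucc_eq.2 hl
      refine ⟨Quotient.mk _ y, Quotient.sound ?_⟩
      change g.SameCycle y.castSucc (Fin.last m)
      rw [hy]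
      exact Equiv.Perm.sameCycle_apply_left.2 (Equiv.Perm.SameCycle.refl _ _)
    | cast x => exact ⟨Quotient.mk _ x, rfl⟩

/-
STATEMENT 12: Let n ≥ 2, q real, τ a permutation of {1,…,n−1}, and (α_σ) reals indexed by
the permutations σ of {1,…,n−1} with q^{c(ρ⁻¹τ)} = Σ_σ α_σ·q^{c(ρ⁻¹σ)} for every
permutation ρ of {1,…,n−1}.  Then, writing π̂ for the extension of π to {1,…,n} fixing n,
for every permutation ρ of {1,…,n}: q^{c(ρ⁻¹τ̂)} = Σ_σ α_σ·q^{c(ρ⁻¹σ̂)}.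

Here we rename m := n − 1 (so "n ≥ 2" becomes "m ≥ 1"); permutations of {1,…,n−1} are
`Equiv.Perm (Fin m)` and those of {1,…,n} are `Equiv.Perm (Fin (m+1))`.
-/
theorem adjoin_fixed_point_equivalence (m : ℕ) (hm : 1 ≤ m) (q : ℝ)
    (τ : Equiv.Perm (Fin m)) (α : Equiv.Perm (Fin m) → ℝ)
    (h : ∀ ρ : Equiv.Perm (Fin m),
      q ^ cycleCount (ρ⁻¹ * τ) =
        ∑ σ : Equiv.Perm (Fin m), α σ * q ^ cycleCount (ρ⁻¹ * σ)) :
    ∀ ρ : Equiv.Perm (Fin (m + 1)),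
      q ^ cycleCount (ρ⁻¹ * extendPerm τ) =
        ∑ σ : Equiv.Perm (Fin m), α σ * q ^ cycleCount (ρ⁻¹ * extendPerm σ) := by
  intro ρ
  obtain ⟨κ, hκ⟩ := exists_isFirstReturn ρ⁻¹
  have key : ∀ σ : Equiv.Perm (Fin m), q ^ cycleCount (ρ⁻¹ * extendPerm σ) =
      q ^ cycleCount (κ * σ) * q ^ (if ρ⁻¹ (Fin.last m) = Fin.last m then 1 else 0) := by
    intro σ
    rw [cycleCount_of_isFirstReturn (hκ.mul_extendPerm σ), Equiv.Perm.mul_apply,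
      extendPerm_last, pow_add]
  have h' := h κ⁻¹
  rw [inv_inv] at h'
  simp only [key, h', Finset.sum_mul, mul_assoc]
end
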